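/- Fix θ ∈ Θ_M°. As |x| → ∞ the score functions satisfy: ℓ_μ(x) = O(|x|^{−1}), ℓ_σ(x) = O(1), ℓ_α(x) = O(log|x|), ℓ_β(x) = O(1), and moreover ℓ_{μμ}(x) = −ℓ_μ'(x) = O(|x|^{−2}), ℓ_{μσ}(x) = −ℓ_σ'(x) = O(|x|^{−1}), ℓ_{μα}(x) = −ℓ_α'(x) = O(|x|^{−1} log|x|), ℓ_{μβ}(x) = −ℓ_β'(x) = O(|x|^{−1}). -/

import Mathlib

open MeasureTheory Filter

noncomputable section

def ThetaInt : Set (Fin 4 → ℝ) :=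
  {θ | 0 < θ 1 ∧ θ 2 ∈ Set.Ioo (0:ℝ) 2 ∧ θ 3 ∈ Set.Ioo (-1:ℝ) 1}

/-- Cumulant (log characteristic function) of the continuous (M₀) parameterization,
with `θ = (μ, σ, α, β)`. -/
def psiM (θ : Fin 4 → ℝ) (t : ℝ) : ℂ :=
  if θ 2 = 1 then
    ((-(|θ 1 * t|) : ℝ) : ℂ)
      - Complex.I * (((2 * θ 3 / Real.pi) * (θ 1 * t) * Real.log |θ 1 * t| : ℝ) : ℂ)
      + Complex.I * ((θ 0 * t : ℝ) : ℂ)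
  else
    ((-(|θ 1 * t| ^ (θ 2)) : ℝ) : ℂ) *
        (1 + Complex.I * ((θ 3 * Real.sign t * Real.tan (Real.pi * θ 2 / 2)
            * (|θ 1 * t| ^ (1 - θ 2) - 1) : ℝ) : ℂ))
      + Complex.I * ((θ 0 * t : ℝ) : ℂ)

/-- Characteristic function of the (M₀) parameterization. -/
def phiM (θ : Fin 4 → ℝ) (t : ℝ) : ℂ := Complex.exp (psiM θ t)

/-- Stable density in the (M₀) parameterization, via Fourier inversion. -/
def fM (θ : Fin 4 → ℝ) (x : ℝ) : ℝ :=
  (1 / (2 * Real.pi)) *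
    (∫ t : ℝ, Complex.exp (-Complex.I * (t : ℂ) * (x : ℂ)) * phiM θ t).re

/-- Partial derivative of the density in parameter `i`. -/
def fP (i : Fin 4) (θ : Fin 4 → ℝ) (x : ℝ) : ℝ :=
  deriv (fun s => fM (Function.update θ i s) x) (θ i)

/-- Second partial derivative of the density in parameters `i`, `j`. -/
def fPP (i j : Fin 4) (θ : Fin 4 → ℝ) (x : ℝ) : ℝ :=
  deriv (fun s => fP i (Function.update θ j s) x) (θ j)

/-- Derivative of the density in `x`. -/
def fX (θ : Fin 4 → ℝ) (x : ℝ) : ℝ := deriv (fun y => fM θ y) x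

/-- Mixed derivative `∂²f/∂x∂θᵢ`. -/
def fPX (i : Fin 4) (θ : Fin 4 → ℝ) (x : ℝ) : ℝ := deriv (fun y => fP i θ y) x

/-- Score functions. -/
def ellP (i : Fin 4) (θ : Fin 4 → ℝ) (x : ℝ) : ℝ := fP i θ x / fM θ x

/-- Derivative of the score in `x`. -/
def ellPX (i : Fin 4) (θ : Fin 4 → ℝ) (x : ℝ) : ℝ := deriv (fun y => ellP i θ y) x

/-- Derivative of the score `ℓ_{θᵢ}` in the parameter `θⱼ`. -/
def ellPP (i j : Fin 4) (θ : Fin 4 → ℝ) (x : ℝ) : ℝ :=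
  deriv (fun s => ellP i (Function.update θ j s) x) (θ j)

/-- `h = O(r)` as `|x| → ∞`. -/
def IsBigOAtInfty (h r : ℝ → ℝ) : Prop :=
  ∃ c > 0, ∃ M > 0, ∀ x : ℝ, M ≤ |x| → |h x| ≤ c * r x


end


open MeasureTheory Filter

namespace Stab
open Complex Topology

lemma int_decay : IntegrableOn (fun u : ℝ => 1 / (1 + u) ^ 4) (Set.Ioi 0) := by
  have h := (integrableOn_Ioi_rpow_of_lt (a := -4) (c := 1) (by norm_num) one_pos)
  have h2 : IntegrableOn (fun u : ℝ => (u + 1) ^ (-4 : ℝ)) (Set.Ioi 0) := by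
    have := (measurePreserving_add_right volume (1:ℝ)).integrableOn_comp_preimage
      (MeasurableEquiv.addRight (1:ℝ)).measurableEmbedding (s := Set.Ioi 1)
      (f := fun u : ℝ => u ^ (-4:ℝ))
    have h3 := this.2 h
    simpa [Function.comp_def] using h3
  refine h2.congr_fun ?_ measurableSet_Ioi
  intro u hu
  have : (0:ℝ) < u := hu
  simp only
  rw [show (-4:ℝ) = -((4:ℕ):ℝ) by norm_num, Real.rpow_neg (by positivity), Real.rpow_natCast, add_comm]
  simp

lemma tend_decay (C : ℝ) : Tendsto (fun u : ℝ => C / (1 + u) ^ 4) atTop (𝓝 0) := by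
  apply Tendsto.div_atTop tendsto_const_nhds
  apply (tendsto_pow_atTop (by norm_num)).comp
  exact tendsto_atTop_add_const_left _ _ tendsto_id

lemma strip_shift (F : ℂ → ℂ) (C : ℝ)
    (hc : ContinuousOn F {z | 0 ≤ z.re ∧ -1 ≤ z.im ∧ z.im ≤ 0})
    (hd : DifferentiableOn ℂ F {z | 0 < z.re ∧ -1 < z.im ∧ z.im < 0})
    (hb : ∀ z : ℂ, 0 ≤ z.re → -1 ≤ z.im → z.im ≤ 0 → ‖F z‖ ≤ C / (1 + z.re) ^ 4) :
    ∫ t in Set.Ioi (0:ℝ), F t = -I * (∫ u in (0:ℝ)..1, F (-I * u)) +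
      ∫ u in Set.Ioi (0:ℝ), F (u - I) := by
  have c1 : ContinuousOn (fun t : ℝ => F t) (Set.Ici 0) := by
    apply hc.comp (by fun_prop)
    intro t ht; have : (0:ℝ) ≤ t := ht; simpa using this
  have c2 : ContinuousOn (fun t : ℝ => F (t - I)) (Set.Ici 0) := by
    apply hc.comp (by fun_prop)
    intro t ht; have : (0:ℝ) ≤ t := ht; simpa using this
  have i1 : IntegrableOn (fun t : ℝ => F t) (Set.Ioi 0) := by
    apply Integrable.mono' (int_decay.const_mul C)
    · exact (c1.mono Set.Ioi_subset_Ici_self).aestronglyMeasurable measurableSet_Ioi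
    · refine (ae_restrict_iff' measurableSet_Ioi).2 (Eventually.of_forall fun t ht => ?_)
      have : (0:ℝ) < t := ht
      simpa [div_eq_mul_inv] using hb t (by simpa using this.le) (by simp) (by simp)
  have i2 : IntegrableOn (fun t : ℝ => F (t - I)) (Set.Ioi 0) := by
    apply Integrable.mono' (int_decay.const_mul C)
    · exact (c2.mono Set.Ioi_subset_Ici_self).aestronglyMeasurable measurableSet_Ioi
    · refine (ae_restrict_iff' measurableSet_Ioi).2 (Eventually.of_forall fun t ht => ?_)
      have : (0:ℝ) < t := ht
      simpa [div_eq_mul_inv] using hb (t - I) (by simpa using this.le) (by simp) (by simp)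
  have l1 := intervalIntegral_tendsto_integral_Ioi 0 i1 tendsto_id
  have l2 := intervalIntegral_tendsto_integral_Ioi 0 i2 tendsto_id
  have l3 : Tendsto (fun R : ℝ => I * ∫ v in (-1:ℝ)..0, F (R + v * I)) atTop (𝓝 0) := by
    apply squeeze_zero_norm' _ (tend_decay C)
    filter_upwards [eventually_ge_atTop 0] with R hR
    have := intervalIntegral.norm_integral_le_of_norm_le_const (a := (-1:ℝ)) (b := 0)
      (f := fun v : ℝ => F (R + v * I)) (C := C / (1 + R) ^ 4) ?_
    · simpa using this
    · intro v hv
      rw [Set.uIoc_of_le (by norm_num)] at hv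
      have := hb (R + v * I) (by simpa using hR) (by simpa using hv.1.le) (by simpa using hv.2)
      simpa using this
  have key : ∀ R : ℝ, 0 ≤ R → (∫ t in (0:ℝ)..R, F t) = -I * (∫ u in (0:ℝ)..1, F (-I * u))
      + (∫ t in (0:ℝ)..R, F (t - I)) + I * ∫ v in (-1:ℝ)..0, F (R + v * I) := by
    intro R hR
    have := Complex.integral_boundary_rect_eq_zero_of_continuousOn_of_differentiableOn F (-I) R
      (hc.mono ?_) (hd.mono ?_)
    · simp only [neg_re, I_re, neg_zero, ofReal_re, neg_im, I_im, ofReal_im, smul_eq_mul, ofReal_neg, ofReal_one, neg_mul, one_mul, ofReal_zero, zero_mul, add_zero, zero_add] at this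
      have e : (∫ y in (-1:ℝ)..0, F (y * I)) = ∫ u in (0:ℝ)..1, F (-I * u) := by
        have := intervalIntegral.integral_comp_neg (a := 0) (b := 1) (fun y : ℝ => F (y * I))
        simp only [neg_zero] at this
        rw [← this]
        congr 1; ext u; congr 1; push_cast; ring
      rw [e] at this
      simp only [← sub_eq_add_neg] at this
      linear_combination -this
    · intro z hz
      rw [Complex.mem_reProdIm] at hz
      simp [Set.uIcc_of_le hR] at hz
      exact ⟨hz.1.1, hz.2.1, hz.2.2⟩
    · intro z hz
      rw [Complex.mem_reProdIm] at hz
      simp [hR] at hz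
      exact ⟨hz.1.1, hz.2.1, hz.2.2⟩
  have l4 : Tendsto (fun R : ℝ => (∫ t in (0:ℝ)..R, F t)) atTop (𝓝 (-I * (∫ u in (0:ℝ)..1, F (-I * u)) +
      (∫ u in Set.Ioi (0:ℝ), F (u - I)) + 0)) := by
    refine Tendsto.congr' ?_ ((tendsto_const_nhds.add l2).add l3)
    filter_upwards [eventually_ge_atTop 0] with R hR
    rw [key R hR]; simp
  have := tendsto_nhds_unique l1 l4
  rw [this, add_zero]

structure Good (h : ℂ → ℂ) : Prop where
  cont : ContinuousOn h {z | 0 ≤ z.re ∧ -1 ≤ z.im ∧ z.im ≤ 0}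
  diff : DifferentiableOn ℂ h {z | 0 < z.re ∧ -1 < z.im ∧ z.im < 0}
  bd : ∃ C, 0 ≤ C ∧ ∀ z : ℂ, 0 ≤ z.re → -1 ≤ z.im → z.im ≤ 0 → ‖h z‖ ≤ C / (1 + z.re) ^ 6

noncomputable def Jk (k : ℕ) (h : ℂ → ℂ) (y : ℝ) : ℂ :=
  ∫ t in Set.Ioi (0:ℝ), exp (-I * t * y) * ((I * t) ^ k * h t)

lemma pow_le_aux {k : ℕ} (hk : k ≤ 2) {z : ℂ} (h0 : 0 ≤ z.re) (h1 : -1 ≤ z.im) (h2 : z.im ≤ 0) :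
    ‖(I * z) ^ k‖ ≤ (1 + z.re) ^ 2 := by
  have : ‖I * z‖ ≤ 1 + z.re := by
    rw [norm_mul, norm_I, one_mul]
    have := Complex.norm_le_abs_re_add_abs_im z
    rw [abs_of_nonneg h0] at this
    have : |z.im| ≤ 1 := abs_le.2 ⟨h1, by linarith⟩
    linarith
  rw [norm_pow]
  calc ‖I * z‖ ^ k ≤ (1 + z.re) ^ k := by gcongr
    _ ≤ (1 + z.re) ^ 2 := pow_le_pow_right₀ (by linarith) hk

lemma Good.bd4 {h : ℂ → ℂ} (hg : Good h) : ∃ C, 0 ≤ C ∧ ∀ k ≤ 2, ∀ z : ℂ, 0 ≤ z.re → -1 ≤ z.im → z.im ≤ 0 →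
    ‖(I * z) ^ k * h z‖ ≤ C / (1 + z.re) ^ 4 := by
  obtain ⟨C, hC, hb⟩ := hg.bd
  refine ⟨C, hC, fun k hk z h0 h1 h2 => ?_⟩
  rw [norm_mul]
  calc _ ≤ (1 + z.re) ^ 2 * (C / (1 + z.re) ^ 6) := by
        gcongr
        · exact pow_le_aux hk h0 h1 h2
        · exact hb z h0 h1 h2
    _ = C / (1 + z.re) ^ 4 := by
        have : 1 + z.re ≠ 0 := by linarith
        field_simp

lemma Jk_contour {h : ℂ → ℂ} (hg : Good h) : ∃ C, 0 ≤ C ∧ ∀ k ≤ 2, ∀ y : ℝ, 0 ≤ y →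
    |(Jk k h y).re - ∫ u in (0:ℝ)..1, Real.exp (-(u * y)) * (u ^ k * (h (-I * u)).im)| ≤ C * Real.exp (-y) := by
  obtain ⟨C, hC, hb⟩ := hg.bd4
  refine ⟨C * ∫ u in Set.Ioi (0:ℝ), 1 / (1 + u) ^ 4, ?_, fun k hk y hy => ?_⟩
  · refine mul_nonneg hC (setIntegral_nonneg measurableSet_Ioi fun u hu => ?_)
    have : (0:ℝ) < u := hu
    positivity
  have nexp : ∀ z : ℂ, ‖exp (-I * z * y)‖ = Real.exp (z.im * y) := by
    intro z; rw [Complex.norm_exp]; simp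
  have hcF : ContinuousOn (fun z : ℂ => exp (-I * z * y) * ((I * z) ^ k * h z)) {z | 0 ≤ z.re ∧ -1 ≤ z.im ∧ z.im ≤ 0} := by
    have := hg.cont
    fun_prop
  have hs := strip_shift (fun z => exp (-I * z * y) * ((I * z) ^ k * h z)) C hcF
    (by have := hg.diff
        fun_prop) ?_
  · have e1 : (-I * ∫ u in (0:ℝ)..1, exp (-I * (-I * (u:ℂ)) * y) * ((I * (-I * (u:ℂ))) ^ k * h (-I * u))).re
        = ∫ u in (0:ℝ)..1, Real.exp (-(u * y)) * (u ^ k * (h (-I * u)).im) := by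
      have : ∀ w : ℂ, (-I * w).re = w.im := by intro w; simp
      rw [this]
      rw [← Complex.imCLM_apply, ← ContinuousLinearMap.intervalIntegral_comp_comm]
      · congr 1; ext u
        have a1 : -I * (-I * (u:ℂ)) * y = ((-(u*y) : ℝ) : ℂ) := by
          push_cast; linear_combination (u * y : ℂ) * I_mul_I
        have a2 : (I * (-I * (u:ℂ))) ^ k = ((u ^ k : ℝ) : ℂ) := by
          push_cast; congr 1; linear_combination (-u : ℂ) * I_mul_I
        rw [a1, a2, ← ofReal_exp, imCLM_apply, ← mul_assoc, ← ofReal_mul, im_ofReal_mul]; ring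
      · apply ContinuousOn.intervalIntegrable
        rw [Set.uIcc_of_le zero_le_one]
        apply hcF.comp (g := fun z : ℂ => exp (-I * z * y) * ((I * z) ^ k * h z)) (f := fun u : ℝ => -I * (u:ℂ)) (by fun_prop)
        intro u hu; simp; exact ⟨hu.2, hu.1⟩
    unfold Jk
    rw [hs, add_re, e1, add_sub_cancel_left]
    refine (abs_re_le_norm _).trans ?_
    have := norm_integral_le_of_norm_le (μ := volume.restrict (Set.Ioi (0:ℝ)))
      (f := fun u : ℝ => exp (-I * ((u:ℂ) - I) * y) * ((I * ((u:ℂ) - I)) ^ k * h (u - I)))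
      (int_decay.const_mul (C * Real.exp (-y))) ?_
    · refine this.trans (le_of_eq ?_)
      rw [integral_const_mul]; ring
    · refine (ae_restrict_iff' measurableSet_Ioi).2 (Eventually.of_forall fun t ht => ?_)
      have ht : (0:ℝ) < t := ht
      rw [norm_mul, nexp]
      have := hb k hk (t - I) (by simpa using ht.le) (by simp) (by simp)
      simp only [sub_re, ofReal_re, I_re, sub_zero] at this
      calc _ ≤ Real.exp (-y) * (C / (1 + t) ^ 4) := by
            gcongr
            simp
        _ = _ := by ring
  · intro z h0 h1 h2
    rw [norm_mul, nexp]
    calc _ ≤ 1 * (C / (1 + z.re) ^ 4) := by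
          gcongr
          · rw [Real.exp_le_one_iff]; nlinarith
          · exact hb k hk z h0 h1 h2
      _ = _ := one_mul _

/-- real-line goodness -/
structure RGood (h : ℝ → ℂ) : Prop where
  meas : AEStronglyMeasurable h (volume.restrict (Set.Ioi 0))
  bd : ∃ C, 0 ≤ C ∧ ∀ t : ℝ, 0 < t → ‖h t‖ ≤ C / (1 + t) ^ 6

lemma Good.rgood {h : ℂ → ℂ} (hg : Good h) : RGood (fun t : ℝ => h t) := by
  constructor
  · have c1 : ContinuousOn (fun t : ℝ => h t) (Set.Ioi 0) := by
      apply hg.cont.comp (by fun_prop)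
      intro t ht; have : (0:ℝ) < t := ht; simpa using this.le
    exact c1.aestronglyMeasurable measurableSet_Ioi
  · obtain ⟨C, hC, hb⟩ := hg.bd
    refine ⟨C, hC, fun t ht => ?_⟩
    simpa using hb t (by simpa using ht.le) (by simp) (by simp)

lemma real_bd {C t : ℝ} {w : ℂ} (ht : 0 < t) (_hC : 0 ≤ C) (hb : ‖w‖ ≤ C / (1 + t) ^ 6) {k : ℕ} (hk : k ≤ 2) (y : ℝ) :
    ‖exp (-I * t * y) * ((I * t) ^ k * w)‖ ≤ C * (1 / (1 + t) ^ 4) := by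
  have e : ‖exp (-I * t * y)‖ = 1 := by rw [Complex.norm_exp]; simp
  rw [norm_mul, e, one_mul, norm_mul]
  have := pow_le_aux hk (z := t) (by simpa using ht.le) (by simp) (by simp)
  simp only [ofReal_re] at this
  calc _ ≤ (1 + t) ^ 2 * (C / (1 + t) ^ 6) := by gcongr
    _ = _ := by field_simp

lemma Jk_int {h : ℂ → ℂ} (hg : RGood (fun t : ℝ => h t)) {k : ℕ} (hk : k ≤ 2) (y : ℝ) :
    IntegrableOn (fun t : ℝ => exp (-I * t * y) * ((I * t) ^ k * h t)) (Set.Ioi 0) := by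
  obtain ⟨C, hC, hb⟩ := hg.bd
  apply Integrable.mono' (int_decay.const_mul C)
  · have := hg.meas
    apply AEStronglyMeasurable.mul (Continuous.aestronglyMeasurable (by fun_prop))
    apply AEStronglyMeasurable.mul (Continuous.aestronglyMeasurable (by fun_prop)) this
  · refine (ae_restrict_iff' measurableSet_Ioi).2 (Eventually.of_forall fun t ht => ?_)
    exact real_bd ht hC (hb t ht) hk y

lemma Jk_deriv {h : ℂ → ℂ} (hg : RGood (fun t : ℝ => h t)) {k : ℕ} (hk : k ≤ 1) (y : ℝ) :
    HasDerivAt (Jk k h) (-Jk (k+1) h y) y := by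
  obtain ⟨C, hC, hb⟩ := hg.bd
  have := (hasDerivAt_integral_of_dominated_loc_of_deriv_le (μ := volume.restrict (Set.Ioi (0:ℝ)))
    (F := fun y t => exp (-I * (t:ℝ) * (y:ℝ)) * ((I * t) ^ k * h t))
    (F' := fun y t => -(exp (-I * (t:ℝ) * (y:ℝ)) * ((I * t) ^ (k+1) * h t)))
    (x₀ := y) (s := Set.univ) (bound := fun t => C * (1 / (1 + t) ^ 4)) univ_mem
    (Eventually.of_forall fun y => (Jk_int hg (by omega) y).aestronglyMeasurable)
    (Jk_int hg (by omega) y) (Jk_int hg (by omega) y).aestronglyMeasurable.neg ?_ (int_decay.const_mul C) ?_).2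
  · rw [integral_neg] at this
    exact this
  · refine (ae_restrict_iff' measurableSet_Ioi).2 (Eventually.of_forall fun t ht y _ => ?_)
    rw [norm_neg]
    exact real_bd ht hC (hb t ht) (by omega) y
  · refine (Eventually.of_forall fun t y _ => ?_)
    have h1 : HasDerivAt (fun y : ℝ => -I * (t:ℂ) * (y:ℂ)) (-I * t) y := by
      simpa using (Complex.ofRealCLM.hasDerivAt (x := y)).const_mul (-I * (t:ℂ))
    have := (h1.cexp).mul_const ((I * t) ^ k * h t)
    exact this.congr_deriv (by ring)

/-- parameter derivative -/
lemma Jk_param {h : ℝ → ℂ → ℂ} {h' : ℂ → ℂ} {s₀ : ℝ} {S : Set ℝ} (hS : S ∈ 𝓝 s₀) {C : ℝ} (hC : 0 ≤ C)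
    (hg : ∀ s ∈ S, RGood (fun t : ℝ => h s t)) (hg' : RGood (fun t : ℝ => h' t))
    (hl : ∀ s ∈ S, ∀ t : ℝ, 0 < t → ‖h s t - h s₀ t‖ ≤ C / (1 + t) ^ 6 * |s - s₀|)
    (hd : ∀ t : ℝ, 0 < t → HasDerivAt (fun s => h s t) (h' t) s₀) {k : ℕ} (hk : k ≤ 2) (y : ℝ) :
    HasDerivAt (fun s => Jk k (h s) y) (Jk k h' y) s₀ := by
  have hs0 : s₀ ∈ S := mem_of_mem_nhds hS
  have := (hasFDerivAt_integral_of_dominated_loc_of_lip' (𝕜 := ℝ) (μ := volume.restrict (Set.Ioi (0:ℝ)))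
    (F := fun s t => exp (-I * (t:ℝ) * (y:ℝ)) * ((I * t) ^ k * h s t))
    (F' := fun t => ContinuousLinearMap.toSpanSingleton ℝ ((exp (-I * (t:ℝ) * (y:ℝ)) * ((I * t) ^ k * h' t))))
    (x₀ := s₀) (s := S) (bound := fun t => C * (1 / (1 + t) ^ 4)) hS
    (fun s hs => (Jk_int (hg s hs) hk y).aestronglyMeasurable)
    (Jk_int (hg _ hs0) hk y) ?_ ?_ (int_decay.const_mul C) ?_)
  · have h2 := this.2.hasDerivAt
    have e : (∫ t in Set.Ioi (0:ℝ), ContinuousLinearMap.toSpanSingleton ℝ ((exp (-I * (t:ℝ) * (y:ℝ)) * ((I * t) ^ k * h' t)))) 1 = Jk k h' y := by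
      rw [ContinuousLinearMap.integral_apply this.1]
      simp [Jk]
    rw [e] at h2
    exact h2
  · exact (ContinuousLinearMap.toSpanSingletonCLE (𝕜 := ℝ) (E := ℂ)).continuous.comp_aestronglyMeasurable (Jk_int hg' hk y).aestronglyMeasurable
  · refine (ae_restrict_iff' measurableSet_Ioi).2 (Eventually.of_forall fun t ht s hs => ?_)
    rw [← mul_sub, ← mul_sub, Real.norm_eq_abs]
    have := real_bd (C := C * |s - s₀|) ht (by positivity) (w := h s t - h s₀ t) ((hl s hs t ht).trans (le_of_eq (by ring))) hk y
    exact this.trans (le_of_eq (by ring))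
  · refine (ae_restrict_iff' measurableSet_Ioi).2 (Eventually.of_forall fun t ht => ?_)
    have := ((hd t ht).const_mul ((I * t) ^ k)).const_mul (exp (-I * (t:ℝ) * (y:ℝ)))
    exact this.hasFDerivAt

end Stab

open MeasureTheory Filter

namespace Stab
open Complex Topology

structure Tame (D : ℂ → ℂ) : Prop where
  cont : ContinuousOn D {z | 0 ≤ z.re ∧ -1 ≤ z.im ∧ z.im ≤ 0}
  diff : DifferentiableOn ℂ D {z | 0 < z.re ∧ -1 < z.im ∧ z.im < 0}
  bd : ∃ C, 0 ≤ C ∧ ∀ z : ℂ, 0 ≤ z.re → -1 ≤ z.im → z.im ≤ 0 → ‖D z‖ ≤ C * (1 + z.re) ^ 3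

lemma Tame.add {D E : ℂ → ℂ} (hD : Tame D) (hE : Tame E) : Tame (fun z => D z + E z) := by
  obtain ⟨C, hC, hb⟩ := hD.bd
  obtain ⟨C', hC', hb'⟩ := hE.bd
  refine ⟨hD.cont.add hE.cont, hD.diff.add hE.diff, C + C', by positivity, fun z h0 h1 h2 => ?_⟩
  calc _ ≤ _ := norm_add_le _ _
    _ ≤ _ := by rw [add_mul]; exact add_le_add (hb z h0 h1 h2) (hb' z h0 h1 h2)

lemma Tame.cmul {D : ℂ → ℂ} (hD : Tame D) (c : ℂ) : Tame (fun z => c * D z) := by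
  obtain ⟨C, hC, hb⟩ := hD.bd
  refine ⟨hD.cont.const_mul c, hD.diff.const_mul c, ‖c‖ * C, by positivity, fun z h0 h1 h2 => ?_⟩
  rw [norm_mul, mul_assoc]
  gcongr
  exact hb z h0 h1 h2

lemma norm_le_of_strip {z : ℂ} (h0 : 0 ≤ z.re) (h1 : -1 ≤ z.im) (h2 : z.im ≤ 0) : ‖z‖ ≤ 1 + z.re := by
  have := Complex.norm_le_abs_re_add_abs_im z
  rw [abs_of_nonneg h0] at this
  have : |z.im| ≤ 1 := abs_le.2 ⟨h1, by linarith⟩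
  linarith

lemma tame_one : Tame (fun _ => 1) := by
  refine ⟨continuousOn_const, differentiableOn_const _, 1, zero_le_one, fun z h0 h1 h2 => ?_⟩
  simp only [norm_one, one_mul]
  exact one_le_pow₀ (by linarith)

lemma tame_id : Tame (fun z => z) := by
  refine ⟨continuousOn_id, differentiableOn_id, 1, zero_le_one, fun z h0 h1 h2 => ?_⟩
  have := norm_le_of_strip h0 h1 h2
  rw [one_mul]
  exact this.trans (le_self_pow₀ (by linarith) (by norm_num))

lemma logbd {p : ℝ} (hp : 0 < p) : ∃ K, 0 ≤ K ∧ ∀ r : ℝ, 0 < r → ∀ m ≤ 2,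
    r ^ p * (|Real.log r| + Real.pi) ^ m ≤ K * (r ^ (3 * p / 2) + 2 * r ^ p + r ^ (p / 2)) := by
  set δ := p / 4 with hδ
  have hδ0 : 0 < δ := by positivity
  refine ⟨(1 / δ + Real.pi) ^ 2, by positivity, fun r hr m hm => ?_⟩
  have h1 : |Real.log r| ≤ (r ^ δ + r ^ (-δ)) / δ := by
    rw [abs_le]
    have a1 := Real.log_le_rpow_div hr.le hδ0
    have a2 := Real.log_le_rpow_div (x := r⁻¹) (by positivity) hδ0
    rw [Real.log_inv, Real.inv_rpow hr.le, ← Real.rpow_neg hr.le] at a2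
    have b1 : 0 < r ^ δ / δ := by positivity
    have b2 : 0 < r ^ (-δ) / δ := by positivity
    rw [add_div]
    constructor <;> linarith
  have h2 : 1 ≤ r ^ δ + r ^ (-δ) := by
    have b1 : 0 < r ^ δ := by positivity
    have b2 : 0 < r ^ (-δ) := by positivity
    have b3 : r ^ δ * r ^ (-δ) = 1 := by rw [← Real.rpow_add hr]; simp
    nlinarith [sq_nonneg (r ^ δ - r ^ (-δ))]
  have hpi := Real.pi_pos
  have hpi3 := Real.pi_gt_three
  have h3 : |Real.log r| + Real.pi ≤ (1 / δ + Real.pi) * (r ^ δ + r ^ (-δ)) := by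
    have : (r ^ δ + r ^ (-δ)) / δ = 1 / δ * (r ^ δ + r ^ (-δ)) := by ring
    nlinarith
  have h4 : (|Real.log r| + Real.pi) ^ m ≤ (|Real.log r| + Real.pi) ^ 2 := by
    apply pow_le_pow_right₀ _ hm
    have := abs_nonneg (Real.log r); linarith
  calc r ^ p * (|Real.log r| + Real.pi) ^ m ≤ r ^ p * ((1 / δ + Real.pi) * (r ^ δ + r ^ (-δ))) ^ 2 := by
        gcongr
        exact h4.trans (by gcongr)
    _ = (1 / δ + Real.pi) ^ 2 * (r ^ p * (r ^ δ * r ^ δ) + 2 * (r ^ p * (r ^ δ * r ^ (-δ))) + r ^ p * (r ^ (-δ) * r ^ (-δ))) := by ring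
    _ = _ := by
        rw [← Real.rpow_add hr, ← Real.rpow_add hr, ← Real.rpow_add hr, ← Real.rpow_add hr, ← Real.rpow_add hr, ← Real.rpow_add hr]
        congr 3
        · congr 1; rw [hδ]; ring
        · congr 2; ring
        · rw [hδ]; ring

lemma rpow_le_cube {r q : ℝ} (hr : 0 < r) (hq : 0 < q) (hq3 : q ≤ 3) : r ^ q ≤ (1 + r) ^ 3 := by
  calc r ^ q ≤ (1 + r) ^ q := by gcongr; linarith
    _ ≤ (1 + r) ^ (3:ℝ) := Real.rpow_le_rpow_of_exponent_le (by linarith) hq3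
    _ = _ := by norm_cast

lemma logbd' {p : ℝ} (hp : 0 < p) (hp2 : p ≤ 2) : ∃ K, 0 ≤ K ∧ ∀ r : ℝ, 0 < r → ∀ m ≤ 2,
    r ^ p * (|Real.log r| + Real.pi) ^ m ≤ K * (1 + r) ^ 3 := by
  obtain ⟨K, hK, h⟩ := logbd hp
  refine ⟨4 * K, by positivity, fun r hr m hm => (h r hr m hm).trans ?_⟩
  have a1 := rpow_le_cube hr (q := 3 * p / 2) (by positivity) (by linarith)
  have a2 := rpow_le_cube hr (q := p) (by positivity) (by linarith)
  have a3 := rpow_le_cube hr (q := p / 2) (by positivity) (by linarith)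
  nlinarith

lemma norm_log_le (z : ℂ) : ‖log z‖ ≤ |Real.log ‖z‖| + Real.pi := by
  have := Complex.norm_le_abs_re_add_abs_im (log z)
  rw [log_re, log_im] at this
  have := Complex.abs_arg_le_pi z
  linarith

lemma slit_of {z : ℂ} (h0 : 0 ≤ z.re) (hz : z ≠ 0) : z ∈ slitPlane := by
  rw [mem_slitPlane_iff]
  rcases h0.lt_or_eq with h | h
  · exact Or.inl h
  · right; intro h2; exact hz (Complex.ext h.symm h2)

lemma norm_cpl {p : ℝ} (m : ℕ) {z : ℂ} (hz : z ≠ 0) :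
    ‖z ^ (p:ℂ) * log z ^ m‖ ≤ ‖z‖ ^ p * (|Real.log ‖z‖| + Real.pi) ^ m := by
  rw [norm_mul, Complex.norm_cpow_of_ne_zero hz, norm_pow]
  simp only [ofReal_re, ofReal_im, mul_zero, Real.exp_zero, div_one]
  gcongr
  exact norm_log_le z

lemma tame_cpl {p : ℝ} (hp : 0 < p) (hp2 : p ≤ 2) {m : ℕ} (hm : m ≤ 2) :
    Tame (fun z => z ^ (p:ℂ) * log z ^ m) := by
  have hpc : (p:ℂ) ≠ 0 := by exact_mod_cast hp.ne'
  have dz : ∀ z : ℂ, z ∈ slitPlane → DifferentiableAt ℂ (fun z => z ^ (p:ℂ) * log z ^ m) z := by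
    intro z hz
    apply DifferentiableAt.mul
    · exact (differentiableAt_id).cpow_const hz
    · exact (differentiableAt_log hz).pow m
  refine ⟨?_, ?_, ?_⟩
  · intro z hz
    by_cases h : z = 0
    · subst h
      apply ContinuousAt.continuousWithinAt
      unfold ContinuousAt
      simp only [zero_cpow hpc, zero_mul]
      obtain ⟨K, hK, hb⟩ := logbd hp
      apply squeeze_zero_norm (a := fun z : ℂ => K * (‖z‖ ^ (3 * p / 2) + 2 * ‖z‖ ^ p + ‖z‖ ^ (p / 2)))
      · intro z
        by_cases hz0 : z = 0
        · subst hz0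
          simp only [zero_cpow hpc, zero_mul, norm_zero]
          positivity
        · exact (norm_cpl m hz0).trans (hb _ (norm_pos_iff.2 hz0) m hm)
      · have t0 : ∀ q : ℝ, 0 < q → Tendsto (fun z : ℂ => ‖z‖ ^ q) (𝓝 0) (𝓝 0) := by
          intro q hq
          have : ContinuousAt (fun z : ℂ => ‖z‖ ^ q) 0 := by
            apply ContinuousAt.rpow_const (by fun_prop) (Or.inr hq.le)
          simpa [ContinuousAt, Real.zero_rpow hq.ne'] using this
        have := (((t0 (3*p/2) (by positivity)).add ((t0 p hp).const_mul 2)).add (t0 (p/2) (by positivity))).const_mul K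
        simpa using this
    · exact (dz z (slit_of hz.1 h)).continuousAt.continuousWithinAt
  · intro z hz
    exact (dz z (Or.inl hz.1)).differentiableWithinAt
  · obtain ⟨K, hK, hb⟩ := logbd' hp hp2
    refine ⟨K * 8, by positivity, fun z h0 h1 h2 => ?_⟩
    by_cases hz0 : z = 0
    · subst hz0
      simp only [zero_cpow hpc, zero_mul, norm_zero]
      positivity
    · refine (norm_cpl m hz0).trans ((hb _ (norm_pos_iff.2 hz0) m hm).trans ?_)
      have := norm_le_of_strip h0 h1 h2
      calc K * (1 + ‖z‖) ^ 3 ≤ K * (2 * (1 + z.re)) ^ 3 := by gcongr; linarith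
        _ = _ := by ring

noncomputable def Ef (a : ℝ) (t : ℂ) : ℂ :=
  if a = 1 then ((2 / Real.pi : ℝ) : ℂ) * (t ^ ((1:ℝ):ℂ) * log t ^ 1)
  else ((Real.tan (Real.pi * a / 2) : ℝ) : ℂ) * (t + (-1) * (t ^ (a:ℂ) * log t ^ 0))

noncomputable def Ea (a : ℝ) (t : ℂ) : ℂ :=
  if a = 1 then ((1 / Real.pi : ℝ) : ℂ) * (t ^ ((1:ℝ):ℂ) * log t ^ 2)
  else ((Real.pi / 2 / Real.cos (Real.pi * a / 2) ^ 2 : ℝ) : ℂ) * (t + (-1) * (t ^ (a:ℂ) * log t ^ 0))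
    + ((-Real.tan (Real.pi * a / 2) : ℝ) : ℂ) * (t ^ (a:ℂ) * log t ^ 1)

noncomputable def Ps (a b : ℝ) (t : ℂ) : ℂ := (-1) * (t ^ (a:ℂ) * log t ^ 0) + (-I * b) * Ef a t
noncomputable def PsB (a : ℝ) (t : ℂ) : ℂ := (-I) * Ef a t
noncomputable def PsA (a b : ℝ) (t : ℂ) : ℂ := (-1) * (t ^ (a:ℂ) * log t ^ 1) + (-I * b) * Ea a t

lemma tame_Ef {a : ℝ} (h0 : 0 < a) (h2 : a < 2) : Tame (Ef a) := by
  unfold Ef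
  by_cases h : a = 1
  · simp only [h, if_true]
    exact (tame_cpl one_pos (by norm_num) (by norm_num)).cmul _
  · simp only [h, if_false]
    exact (tame_id.add ((tame_cpl h0 h2.le (by norm_num)).cmul _)).cmul _

lemma tame_Ea {a : ℝ} (h0 : 0 < a) (h2 : a < 2) : Tame (Ea a) := by
  unfold Ea
  by_cases h : a = 1
  · simp only [h, if_true]
    exact (tame_cpl one_pos (by norm_num) (by norm_num)).cmul _
  · simp only [h, if_false]
    exact ((tame_id.add ((tame_cpl h0 h2.le (by norm_num)).cmul _)).cmul _).add ((tame_cpl h0 h2.le (by norm_num)).cmul _)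

lemma tame_Ps {a b : ℝ} (h0 : 0 < a) (h2 : a < 2) : Tame (Ps a b) :=
  ((tame_cpl h0 h2.le (by norm_num)).cmul _).add ((tame_Ef h0 h2).cmul _)
lemma tame_PsB {a : ℝ} (h0 : 0 < a) (h2 : a < 2) : Tame (PsB a) := (tame_Ef h0 h2).cmul _
lemma tame_PsA {a b : ℝ} (h0 : 0 < a) (h2 : a < 2) : Tame (PsA a b) :=
  ((tame_cpl h0 h2.le (by norm_num)).cmul _).add ((tame_Ea h0 h2).cmul _)

/-- large real part control -/
lemma near_one {a ε : ℝ} (hε : 0 < ε) : ∃ U : ℝ, 1 ≤ U ∧ ∀ z : ℂ, U ≤ z.re → -1 ≤ z.im → z.im ≤ 0 →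
    ∃ w : ℂ, z = (z.re : ℂ) * w ∧ w ≠ 0 ∧ ‖w ^ (a:ℂ) - 1‖ ≤ ε ∧ ‖log w‖ ≤ ε := by
  have c1 : ContinuousAt (fun w : ℂ => w ^ (a:ℂ)) 1 := continuousAt_cpow_const (by simp)
  have c2 : ContinuousAt (fun w : ℂ => log w) 1 := continuousAt_clog (by simp)
  have e1 := c1.eventually (Metric.closedBall_mem_nhds _ hε)
  have e2 := c2.eventually (Metric.closedBall_mem_nhds _ hε)
  obtain ⟨δ, hδ, h⟩ := Metric.eventually_nhds_iff.1 (e1.and e2)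
  refine ⟨2 / δ + 2, by have : 0 < 2 / δ := by positivity
                        linarith, fun z hz h1 h2 => ⟨z / z.re, ?_⟩⟩
  have hd : 0 < 2 / δ := by positivity
  have hzr : 0 < z.re := by linarith
  have hzc : (z.re : ℂ) ≠ 0 := by exact_mod_cast hzr.ne'
  have hz0 : z ≠ 0 := by intro h; simp [h] at hzr
  refine ⟨by field_simp, div_ne_zero hz0 hzc, ?_⟩
  have : dist (z / z.re) 1 < δ := by
    rw [dist_eq_norm]
    have : z / z.re - 1 = (z.im / z.re : ℝ) * I := by
      have := re_add_im z
      push_cast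
      field_simp
      linear_combination -this
    rw [this, norm_mul, norm_I, mul_one, norm_real, Real.norm_eq_abs, abs_div, abs_of_pos hzr, div_lt_iff₀ hzr]
    have : |z.im| ≤ 1 := abs_le.2 ⟨h1, by linarith⟩
    have : δ * (2 / δ) = 2 := by field_simp
    nlinarith
  have := h this
  simpa [dist_eq_norm, Metric.mem_closedBall] using this

lemma rmul_cpow {r a : ℝ} (hr : 0 < r) {w : ℂ} (hw : w ≠ 0) :
    ((r:ℂ) * w) ^ (a:ℂ) = ((r ^ a : ℝ) : ℂ) * w ^ (a:ℂ) := by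
  have hrc : (r:ℂ) ≠ 0 := by exact_mod_cast hr.ne'
  rw [cpow_def_of_ne_zero (mul_ne_zero hrc hw), cpow_def_of_ne_zero hw, log_ofReal_mul hr hw,
    Real.rpow_def_of_pos hr, add_mul, Complex.exp_add]
  push_cast
  rfl

lemma re_Ps_le {a b : ℝ} (h0 : 0 < a) (h2 : a < 2) (hb : |b| ≤ 1) : ∃ A, ∀ z : ℂ, 0 ≤ z.re → -1 ≤ z.im → z.im ≤ 0 →
    (Ps a b z).re ≤ A - z.re ^ a / 2 := by
  suffices H : ∃ U A, 1 ≤ U ∧ ∀ z : ℂ, U ≤ z.re → -1 ≤ z.im → z.im ≤ 0 → (Ps a b z).re ≤ A - z.re ^ a / 2 by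
    obtain ⟨U, A, hU, H⟩ := H
    obtain ⟨C, hC, hb⟩ := (tame_Ps (b := b) h0 h2).bd
    refine ⟨max A (C * (1 + U) ^ 3 + U ^ a / 2), fun z hz h1 h2 => ?_⟩
    rcases le_total U z.re with h | h
    · exact (H z h h1 h2).trans (by have := le_max_left A (C * (1 + U) ^ 3 + U ^ a / 2); linarith)
    · have e1 := hb z hz h1 h2
      have e2 := (abs_re_le_norm (Ps a b z))
      have e3 := le_abs_self (Ps a b z).re
      have e4 : C * (1 + z.re) ^ 3 ≤ C * (1 + U) ^ 3 := by gcongr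
      have e5 : z.re ^ a ≤ U ^ a := by gcongr
      have := le_max_right A (C * (1 + U) ^ 3 + U ^ a / 2)
      linarith
  have hbI : ∀ w : ℂ, ((-I * b) * w).re = b * w.im := by intro w; simp
  by_cases h : a = 1
  · subst h
    obtain ⟨U, hU, hz⟩ := near_one (a := 1) (ε := 1/8) (by norm_num)
    refine ⟨U, Real.log 4, hU, fun z hzr h1 h2 => ?_⟩
    obtain ⟨w, hw, hw0, -, hl⟩ := hz z hzr h1 h2
    have hr : 0 < z.re := by linarith
    have hlog : log z = (Real.log z.re : ℂ) + log w := by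
      conv_lhs => rw [hw]
      rw [log_ofReal_mul hr hw0]
    have hp : 2 / Real.pi ≤ 1 := by rw [div_le_one Real.pi_pos]; linarith [Real.pi_gt_three]
    have hp0 : 0 ≤ 2 / Real.pi := by positivity
    simp only [Ps, Ef, if_true, add_re, hbI, pow_zero, mul_one, pow_one, ofReal_one, cpow_one, im_ofReal_mul, Real.rpow_one]
    have i1 : |(z * log z).im| ≤ Real.log z.re + z.re / 4 := by
      rw [hlog, mul_add, add_im]
      have a1 : |(z * (Real.log z.re : ℂ)).im| ≤ Real.log z.re := by
        rw [mul_comm, im_ofReal_mul, abs_mul, abs_of_nonneg (Real.log_nonneg (by linarith))]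
        have : |z.im| ≤ 1 := abs_le.2 ⟨h1, by linarith⟩
        have := Real.log_nonneg (x := z.re) (by linarith)
        nlinarith
      have a2 : |(z * log w).im| ≤ z.re / 4 := by
        refine (abs_im_le_norm _).trans ?_
        rw [norm_mul]
        have := norm_le_of_strip hr.le h1 h2
        have n1 := norm_nonneg z
        have n2 := norm_nonneg (log w)
        nlinarith
      exact (abs_add_le _ _).trans (add_le_add a1 a2)
    have i2 : b * (2 / Real.pi * (z * log z).im) ≤ Real.log z.re + z.re / 4 := by
      calc _ ≤ |b * (2 / Real.pi * (z * log z).im)| := le_abs_self _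
        _ = |b| * (2 / Real.pi) * |(z * log z).im| := by rw [abs_mul, abs_mul, abs_of_nonneg hp0]; ring
        _ ≤ 1 * 1 * |(z * log z).im| := by gcongr
        _ ≤ _ := by simpa using i1
    have i3 : Real.log z.re ≤ z.re / 4 + Real.log 4 := by
      have := Real.log_le_sub_one_of_pos (x := z.re / 4) (by positivity)
      rw [Real.log_div hr.ne' (by norm_num)] at this
      linarith
    have : (-1 * z).re = - z.re := by simp
    rw [this]
    linarith
  · set τ := Real.tan (Real.pi * a / 2) with hτ
    obtain ⟨U, hU, hz⟩ := near_one (a := a) (ε := 1/(2 * (1 + |τ|))) (by positivity)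
    refine ⟨U, |τ|, hU, fun z hzr h1 h2 => ?_⟩
    obtain ⟨w, hw, hw0, hl, -⟩ := hz z hzr h1 h2
    have hr : 0 < z.re := by linarith
    have hza : z ^ (a:ℂ) = ((z.re ^ a : ℝ) : ℂ) * w ^ (a:ℂ) := by
      conv_lhs => rw [hw]
      rw [rmul_cpow hr hw0]
    simp only [Ps, Ef, h, if_false, add_re, hbI, pow_zero, mul_one, im_ofReal_mul, hza, ← hτ]
    have f1 : (-1 * (((z.re ^ a : ℝ) : ℂ) * w ^ (a:ℂ))).re = - (z.re ^ a * (w ^ (a:ℂ)).re) := by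
      rw [neg_one_mul, neg_re, re_ofReal_mul]
    have f2 : (z + -1 * (((z.re ^ a : ℝ) : ℂ) * w ^ (a:ℂ))).im = z.im - (z.re ^ a * (w ^ (a:ℂ)).im) := by
      rw [neg_one_mul, add_im, neg_im, im_ofReal_mul]; ring
    rw [f1, f2]
    set ε := 1/(2 * (1 + |τ|)) with hε
    have hε2 : ε * (1 + |τ|) = 1/2 := by rw [hε]; field_simp
    have g1 : 1 - ε ≤ (w ^ (a:ℂ)).re := by
      have := (abs_re_le_norm (w ^ (a:ℂ) - 1)).trans hl
      rw [sub_re, one_re, abs_le] at this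
      linarith [this.1]
    have g2 : |(w ^ (a:ℂ)).im| ≤ ε := by
      have := (abs_im_le_norm (w ^ (a:ℂ) - 1)).trans hl
      simpa using this
    have hra : 0 < z.re ^ a := by positivity
    have g3 : |z.im - (z.re ^ a * (w ^ (a:ℂ)).im)| ≤ 1 + z.re ^ a * ε := by
      refine (abs_sub _ _).trans (add_le_add (abs_le.2 ⟨h1, by linarith⟩) ?_)
      rw [abs_mul, abs_of_pos hra]; gcongr
    have g4 : b * (τ * (z.im - (z.re ^ a * (w ^ (a:ℂ)).im))) ≤ |τ| * (1 + z.re ^ a * ε) := by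
      refine (le_abs_self _).trans ?_
      rw [abs_mul, abs_mul]
      calc _ ≤ 1 * (|τ| * |z.im - (z.re ^ a * (w ^ (a:ℂ)).im)|) := by gcongr
        _ ≤ _ := by rw [one_mul]; gcongr
    nlinarith

lemma exp_poly_bd {a : ℝ} (h0 : 0 < a) : ∃ K, 0 ≤ K ∧ ∀ u : ℝ, 0 ≤ u → Real.exp (-(u ^ a / 2)) * (1 + u) ^ 9 ≤ K := by
  have h1 := (tendsto_rpow_mul_exp_neg_mul_atTop_nhds_zero (9 / a) (1/2) (by norm_num)).comp (tendsto_rpow_atTop h0)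
  have h2 := h1.eventually (ge_mem_nhds (show (0:ℝ) < 1 by norm_num))
  obtain ⟨U, hU⟩ := eventually_atTop.1 h2
  set V := max U 1
  refine ⟨max (2 ^ 9) ((1 + V) ^ 9), by positivity, fun u hu => ?_⟩
  rcases le_total V u with h | h
  · have := hU u ((le_max_left _ _).trans h)
    have hu1 : 1 ≤ u := (le_max_right _ _).trans h
    simp only [Function.comp] at this
    rw [← Real.rpow_mul hu, show a * (9 / a) = ((9:ℕ):ℝ) by field_simp; norm_num, Real.rpow_natCast] at this
    refine le_trans ?_ (le_max_left _ _)
    calc _ ≤ Real.exp (-(u ^ a / 2)) * (u + u) ^ 9 := by gcongr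
      _ = 2 ^ 9 * (u ^ 9 * Real.exp (-(1/2) * u ^ a)) := by
        rw [show -(1/2) * u ^ a = -(u ^ a / 2) by ring]; ring
      _ ≤ 2 ^ 9 * 1 := by gcongr
      _ = _ := by norm_num
  · refine le_trans ?_ (le_max_right _ _)
    calc _ ≤ 1 * (1 + V) ^ 9 := by
          gcongr
          rw [Real.exp_le_one_iff]
          have : 0 ≤ u ^ a := by positivity
          linarith
      _ = _ := one_mul _

lemma good_of {a b : ℝ} (h0 : 0 < a) (h2 : a < 2) (hb : |b| ≤ 1) {D : ℂ → ℂ} (hD : Tame D) :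
    Good (fun z => D z * exp (Ps a b z)) := by
  have hP := tame_Ps (b := b) h0 h2
  refine ⟨hD.cont.mul hP.cont.cexp, hD.diff.mul hP.diff.cexp, ?_⟩
  obtain ⟨A, hA⟩ := re_Ps_le h0 h2 hb
  obtain ⟨K, hK, hKb⟩ := exp_poly_bd h0
  obtain ⟨C, hC, hCb⟩ := hD.bd
  refine ⟨C * Real.exp A * K, by positivity, fun z hz h1 h2 => ?_⟩
  rw [norm_mul, Complex.norm_exp, le_div_iff₀ (by positivity)]
  calc _ ≤ (C * (1 + z.re) ^ 3) * Real.exp (A - z.re ^ a / 2) * (1 + z.re) ^ 6 := by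
        gcongr
        · exact hCb z hz h1 h2
        · exact hA z hz h1 h2
    _ = C * Real.exp A * (Real.exp (-(z.re ^ a / 2)) * (1 + z.re) ^ 9) := by
        rw [sub_eq_add_neg, Real.exp_add]; ring
    _ ≤ _ := by gcongr; exact hKb _ hz

end Stab

open MeasureTheory Filter

namespace Stab
open Complex Topology

lemma log_negIu {u : ℝ} (hu : 0 < u) : log (-I * u) = (Real.log u : ℂ) - (Real.pi / 2 : ℝ) * I := by
  rw [mul_comm, log_ofReal_mul hu (by simp), log_neg_I]
  push_cast; ring

lemma cpow_negIu {a u : ℝ} (hu : 0 < u) : (-I * u) ^ (a:ℂ) =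
    ((u ^ a * Real.cos (Real.pi * a / 2) : ℝ) : ℂ) - ((u ^ a * Real.sin (Real.pi * a / 2) : ℝ) : ℂ) * I := by
  rw [mul_comm, rmul_cpow hu (by simp), cpow_def_of_ne_zero (by simp), log_neg_I]
  have : -(Real.pi / 2 : ℂ) * I * a = ((-(Real.pi * a / 2) : ℝ) : ℂ) * I := by push_cast; ring
  rw [this, exp_mul_I, ← ofReal_cos, ← ofReal_sin, Real.cos_neg, Real.sin_neg]
  push_cast; ring

lemma cos_ne {a : ℝ} (h0 : 0 < a) (h2 : a < 2) (h1 : a ≠ 1) : Real.cos (Real.pi * a / 2) ≠ 0 := by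
  have hpi := Real.pi_pos
  rcases lt_or_gt_of_ne h1 with h | h
  · exact (Real.cos_pos_of_mem_Ioo ⟨by nlinarith, by nlinarith⟩).ne'
  · exact (Real.cos_neg_of_pi_div_two_lt_of_lt (by nlinarith) (by nlinarith)).ne

lemma sin_pos' {a : ℝ} (h0 : 0 < a) (h2 : a < 2) : 0 < Real.sin (Real.pi * a / 2) := by
  have hpi := Real.pi_pos
  exact Real.sin_pos_of_pos_of_lt_pi (by positivity) (by nlinarith)

lemma re_Ef {a u : ℝ} (h0 : 0 < a) (h2 : a < 2) (hu : 0 < u) :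
    (Ef a (-I * u)).re = - u ^ a * Real.sin (Real.pi * a / 2) := by
  unfold Ef
  by_cases h : a = 1
  · subst h
    simp only [if_true, pow_one, re_ofReal_mul, ofReal_one, cpow_one, log_negIu hu]
    have hpi := Real.pi_ne_zero
    simp
    field_simp
  · simp only [h, if_false, pow_zero, mul_one, re_ofReal_mul, cpow_negIu hu]
    have := cos_ne h0 h2 h
    have e : ∀ c s : ℝ, (-I * (u:ℂ) + -1 * ((c:ℂ) - s * I)).re = -c := by intros; simp
    rw [e, Real.tan_eq_sin_div_cos]
    field_simp

lemma im_Ps {a b u : ℝ} (h0 : 0 < a) (h2 : a < 2) (hu : 0 < u) :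
    (Ps a b (-I * u)).im = u ^ a * Real.sin (Real.pi * a / 2) * (1 + b) := by
  have hbI : ∀ w : ℂ, ((-I * b) * w).im = - b * w.re := by intro w; simp
  rw [Ps, add_im, hbI, re_Ef h0 h2 hu, neg_one_mul, neg_im, pow_zero, mul_one, cpow_negIu hu, sub_im, im_ofReal_mul]
  simp only [ofReal_im, I_im]
  ring

lemma im_PsB {a u : ℝ} (h0 : 0 < a) (h2 : a < 2) (hu : 0 < u) :
    (PsB a (-I * u)).im = u ^ a * Real.sin (Real.pi * a / 2) := by
  have hbI : ∀ w : ℂ, ((-I) * w).im = - w.re := by intro w; simp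
  rw [PsB, hbI, re_Ef h0 h2 hu]; ring

lemma re_cpl {a u : ℝ} (hu : 0 < u) : ((-I * u) ^ (a:ℂ) * log (-I * u)).re =
    u ^ a * (Real.cos (Real.pi * a / 2) * Real.log u - Real.sin (Real.pi * a / 2) * (Real.pi / 2)) := by
  rw [cpow_negIu hu, log_negIu hu]
  have : ∀ c s l p : ℝ, (((c:ℂ) - s * I) * ((l:ℂ) - p * I)).re = c * l - s * p := by
    intros; simp
  rw [this]; ring

lemma im_cpl {a u : ℝ} (hu : 0 < u) : ((-I * u) ^ (a:ℂ) * log (-I * u)).im =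
    - u ^ a * (Real.sin (Real.pi * a / 2) * Real.log u + Real.cos (Real.pi * a / 2) * (Real.pi / 2)) := by
  rw [cpow_negIu hu, log_negIu hu]
  have : ∀ c s l p : ℝ, (((c:ℂ) - s * I) * ((l:ℂ) - p * I)).im = - (c * p) - s * l := by
    intros; simp; ring
  rw [this]; ring

lemma re_Ea {a u : ℝ} (h0 : 0 < a) (h2 : a < 2) (hu : 0 < u) :
    (Ea a (-I * u)).re = - u ^ a * (Real.sin (Real.pi * a / 2) * Real.log u + Real.cos (Real.pi * a / 2) * (Real.pi / 2)) := by
  unfold Ea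
  by_cases h : a = 1
  · subst h
    simp only [if_true, re_ofReal_mul, ofReal_one, cpow_one, log_negIu hu]
    have hpi := Real.pi_ne_zero
    have : ∀ l p : ℝ, (-I * u * ((l:ℂ) - p * I) ^ 2).re = - u * (2 * l * p) := by
      intros; simp [pow_two]; ring
    rw [this]
    simp
    field_simp
  · have hc := cos_ne h0 h2 h
    have e1 : (-I * (u:ℂ) + -1 * ((-I * u) ^ (a:ℂ))).re = - (u ^ a * Real.cos (Real.pi * a / 2)) := by
      have : ∀ c s : ℝ, (-I * (u:ℂ) + -1 * ((c:ℂ) - s * I)).re = - c := by intros; simp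
      rw [cpow_negIu hu, this]
    simp only [h, if_false, pow_zero, mul_one, pow_one, add_re, re_ofReal_mul, re_cpl hu]
    simp only [add_re] at e1
    rw [e1, Real.tan_eq_sin_div_cos]
    field_simp
    have := Real.sin_sq_add_cos_sq (Real.pi * a / 2)
    set s := Real.sin (Real.pi * a / 2)
    set c := Real.cos (Real.pi * a / 2)
    linear_combination (-Real.pi * (-1)) * this

lemma im_PsA {a b u : ℝ} (h0 : 0 < a) (h2 : a < 2) (hu : 0 < u) :
    (PsA a b (-I * u)).im = (1 + b) * u ^ a * (Real.sin (Real.pi * a / 2) * Real.log u + Real.cos (Real.pi * a / 2) * (Real.pi / 2)) := by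
  have hbI : ∀ w : ℂ, ((-I * b) * w).im = - b * w.re := by intro w; simp
  rw [PsA, add_im, hbI, re_Ea h0 h2 hu, neg_one_mul, neg_im, pow_one, im_cpl hu]
  ring

/-- bounded on the segment -/
lemma Tame.seg {D : ℂ → ℂ} (hD : Tame D) : ∃ K, 0 ≤ K ∧ ∀ u : ℝ, 0 ≤ u → u ≤ 1 → ‖D (-I * u)‖ ≤ K := by
  obtain ⟨C, hC, hb⟩ := hD.bd
  refine ⟨C, hC, fun u h0 h1 => ?_⟩
  simpa using hb (-I * u) (by simp) (by simpa using h1) (by simpa using h0)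

lemma im_h_le {a b : ℝ} (h0 : 0 < a) (h2 : a < 2) (hb : |b| ≤ 1) {D : ℂ → ℂ} (hD : Tame D) :
    ∃ C, 0 ≤ C ∧ ∀ u : ℝ, 0 < u → u ≤ 1 →
      |(D (-I * u) * exp (Ps a b (-I * u))).im| ≤ C * (|(D (-I * u)).im| + u ^ a) := by
  obtain ⟨K, hK, hKb⟩ := hD.seg
  obtain ⟨A, hA, hAb⟩ := (tame_Ps (b := b) h0 h2).seg
  refine ⟨Real.exp A * (1 + K * 2), by positivity, fun u hu hu1 => ?_⟩
  set z := -I * (u:ℂ)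
  have e1 : (D z * exp (Ps a b z)).im = Real.exp (Ps a b z).re *
      ((D z).im * Real.cos (Ps a b z).im + (D z).re * Real.sin (Ps a b z).im) := by
    rw [mul_im, exp_re, exp_im]; ring
  rw [e1, abs_mul, abs_of_pos (Real.exp_pos _), mul_assoc]
  have f1 : (Ps a b z).re ≤ A := (le_abs_self _).trans ((abs_re_le_norm _).trans (hAb u hu.le hu1))
  have f2 : |(D z).re| ≤ K := (abs_re_le_norm _).trans (hKb u hu.le hu1)
  have f3 : |Real.sin (Ps a b z).im| ≤ 2 * u ^ a := by
    refine (Real.abs_sin_le_abs).trans ?_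
    rw [im_Ps h0 h2 hu, abs_mul, abs_mul, abs_of_pos (by positivity : 0 < u ^ a)]
    have := Real.abs_sin_le_one (Real.pi * a / 2)
    have g : |1 + b| ≤ 2 := by
      rw [abs_le] at hb ⊢; constructor <;> linarith [hb.1, hb.2]
    calc u ^ a * |Real.sin (Real.pi * a / 2)| * |1 + b| ≤ u ^ a * 1 * 2 := by gcongr
      _ = _ := by ring
  have hua : 0 < u ^ a := by positivity
  have f4 : |(D z).im * Real.cos (Ps a b z).im + (D z).re * Real.sin (Ps a b z).im| ≤ |(D z).im| + K * (2 * u ^ a) := by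
    refine (abs_add_le _ _).trans ?_
    rw [abs_mul, abs_mul]
    have := Real.abs_cos_le_one (Ps a b z).im
    have := abs_nonneg (D z).im
    gcongr
    nlinarith
  gcongr
  refine f4.trans ?_
  have := abs_nonneg (D z).im
  nlinarith [mul_nonneg hK this]

lemma I_upper {q : ℝ} (hq : 0 < q) {y : ℝ} (hy : 0 < y) :
    IntervalIntegrable (fun u : ℝ => Real.exp (-(u * y)) * u ^ q) volume 0 1 ∧
    ∫ u in (0:ℝ)..1, Real.exp (-(u * y)) * u ^ q ≤ Real.Gamma (q + 1) * y ^ (-(q + 1)) := by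
  have hc : Continuous (fun u : ℝ => Real.exp (-(u * y)) * u ^ q) := by
    have : Continuous (fun u : ℝ => u ^ q) := Real.continuous_rpow_const hq.le
    fun_prop
  refine ⟨hc.intervalIntegrable _ _, ?_⟩
  have h := Real.integral_rpow_mul_exp_neg_mul_Ioi (a := q + 1) (r := y) (by positivity) hy
  have e : Real.Gamma (q + 1) * y ^ (-(q + 1)) = ∫ u in Set.Ioi (0:ℝ), Real.exp (-(u * y)) * u ^ q := by
    rw [mul_comm, Real.rpow_neg hy.le, ← Real.inv_rpow hy.le, ← one_div, ← h]
    refine setIntegral_congr_fun measurableSet_Ioi fun u hu => ?_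
    simp only [add_sub_cancel_right]
    rw [mul_comm y u, mul_comm]
  rw [e, intervalIntegral.integral_of_le zero_le_one]
  apply setIntegral_mono_set
  · by_contra hni
    have : ∫ u in Set.Ioi (0:ℝ), Real.exp (-(u * y)) * u ^ q = 0 := integral_undef hni
    rw [this] at e
    have : 0 < Real.Gamma (q + 1) := Real.Gamma_pos_of_pos (by positivity)
    have : 0 < y ^ (-(q+1)) := by positivity
    have : 0 < Real.Gamma (q + 1) * y ^ (-(q+1)) := by positivity
    linarith
  · refine (ae_restrict_iff' measurableSet_Ioi).2 (Eventually.of_forall fun u hu => ?_)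
    have hu : (0:ℝ) < u := hu
    simp only [Pi.zero_apply]
    positivity
  · exact (Set.Ioc_subset_Ioi_self).eventuallyLE

lemma I_log {p : ℝ} (hp : 0 < p) : ∃ C, 0 ≤ C ∧ ∀ y : ℝ, 2 ≤ y →
    ∃ G : ℝ → ℝ, IntervalIntegrable G volume 0 1 ∧ (∀ u : ℝ, 0 < u → u ≤ 1 → Real.exp (-(u * y)) * (u ^ p * (1 + |Real.log u|)) ≤ G u) ∧
      ∫ u in (0:ℝ)..1, G u ≤ C * Real.log y * y ^ (-(p + 1)) := by
  obtain ⟨K, hK, hKb⟩ := logbd hp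
  set g1 := Real.Gamma (p + 1)
  set g2 := Real.Gamma (3 * p / 2 + 1)
  set g3 := Real.Gamma (p / 2 + 1)
  have hg1 : 0 < g1 := Real.Gamma_pos_of_pos (by positivity)
  have hg2 : 0 < g2 := Real.Gamma_pos_of_pos (by positivity)
  have hg3 : 0 < g3 := Real.Gamma_pos_of_pos (by positivity)
  have hl2 : 0 < Real.log 2 := Real.log_pos (by norm_num)
  refine ⟨(g1 + K * (g2 + 2 * g1 + g3)) / Real.log 2 + g1, by positivity, fun y hy => ?_⟩
  have hy0 : 0 < y := by linarith
  have hly : Real.log 2 ≤ Real.log y := Real.log_le_log (by norm_num) hy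
  obtain ⟨i1, b1⟩ := I_upper hp hy0
  obtain ⟨i2, b2⟩ := I_upper (q := 3 * p / 2) (by positivity) hy0
  obtain ⟨i3, b3⟩ := I_upper (q := p / 2) (by positivity) hy0
  refine ⟨fun u => (1 + Real.log y + 2 * K) * (Real.exp (-(u * y)) * u ^ p) + (K * y ^ (p / 2)) * (Real.exp (-(u * y)) * u ^ (3 * p / 2))
    + (K * y ^ (-(p / 2))) * (Real.exp (-(u * y)) * u ^ (p / 2)), ((i1.const_mul _).add (i2.const_mul _)).add (i3.const_mul _), ?_, ?_⟩
  · intro u hu hu1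
    have hv : 0 < u * y := by positivity
    have h1 : |Real.log u| ≤ |Real.log (u * y)| + Real.log y := by
      rw [Real.log_mul hu.ne' hy0.ne']
      have := abs_sub (Real.log u + Real.log y) (Real.log y)
      rw [add_sub_cancel_right, abs_of_nonneg (hl2.le.trans hly)] at this
      exact this
    have h2 := hKb (u * y) hv 1 (by norm_num)
    rw [pow_one] at h2
    have hpi := Real.pi_pos
    have h3 : u ^ p * |Real.log (u * y)| ≤ K * (u ^ (3 * p / 2) * y ^ (p / 2) + 2 * u ^ p + u ^ (p / 2) * y ^ (-(p / 2))) := by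
      have e1 : u ^ p = y ^ (-p) * (u * y) ^ p := by
        rw [Real.mul_rpow hu.le hy0.le, mul_left_comm, ← Real.rpow_add hy0]; simp
      calc u ^ p * |Real.log (u * y)| ≤ y ^ (-p) * ((u * y) ^ p * (|Real.log (u * y)| + Real.pi)) := by
            rw [e1, mul_assoc]; gcongr; linarith
        _ ≤ y ^ (-p) * (K * ((u * y) ^ (3 * p / 2) + 2 * (u * y) ^ p + (u * y) ^ (p / 2))) := by gcongr
        _ = K * ((u ^ (3 * p / 2) * (y ^ (-p) * y ^ (3 * p / 2)) + 2 * (u ^ p * (y ^ (-p) * y ^ p)) + u ^ (p / 2) * (y ^ (-p) * y ^ (p / 2)))) := by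
            simp only [Real.mul_rpow hu.le hy0.le]; ring
        _ = _ := by
            rw [← Real.rpow_add hy0, ← Real.rpow_add hy0, ← Real.rpow_add hy0]
            rw [show -p + 3 * p / 2 = p / 2 by ring, show -p + p = 0 by ring, show -p + p / 2 = -(p / 2) by ring]
            simp
    have h4 : u ^ p * (1 + |Real.log u|) ≤ (1 + Real.log y) * u ^ p + K * (u ^ (3 * p / 2) * y ^ (p / 2) + 2 * u ^ p + u ^ (p / 2) * y ^ (-(p / 2))) := by
      have : 0 < u ^ p := by positivity
      nlinarith
    calc _ ≤ Real.exp (-(u * y)) * ((1 + Real.log y) * u ^ p + K * (u ^ (3 * p / 2) * y ^ (p / 2) + 2 * u ^ p + u ^ (p / 2) * y ^ (-(p / 2)))) := by gcongr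
      _ = _ := by ring
  · rw [intervalIntegral.integral_add ((i1.const_mul _).add (i2.const_mul _)) (i3.const_mul _), intervalIntegral.integral_add (i1.const_mul _) (i2.const_mul _),
      intervalIntegral.integral_const_mul, intervalIntegral.integral_const_mul, intervalIntegral.integral_const_mul]
    set Y := y ^ (-(p + 1)) with hY
    have hY0 : 0 < Y := by positivity
    have e2 : y ^ (p / 2) * y ^ (-(3 * p / 2 + 1)) = Y := by rw [← Real.rpow_add hy0, hY]; congr 1; ring
    have e3 : y ^ (-(p / 2)) * y ^ (-(p / 2 + 1)) = Y := by rw [← Real.rpow_add hy0, hY]; congr 1; ring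
    have hL : 1 ≤ Real.log y / Real.log 2 := by rw [le_div_iff₀ hl2]; linarith
    calc _ ≤ (1 + Real.log y + 2 * K) * (g1 * Y) + (K * y ^ (p / 2)) * (g2 * y ^ (-(3 * p / 2 + 1))) + (K * y ^ (-(p / 2))) * (g3 * y ^ (-(p / 2 + 1))) := by
          have := hl2.le.trans hly
          gcongr
      _ = (1 + Real.log y + 2 * K) * (g1 * Y) + K * g2 * (y ^ (p / 2) * y ^ (-(3 * p / 2 + 1))) + K * g3 * (y ^ (-(p / 2)) * y ^ (-(p / 2 + 1))) := by ring
      _ = ((g1 + K * (g2 + 2 * g1 + g3)) * 1 + Real.log y * g1) * Y := by rw [e2, e3]; ring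
      _ ≤ ((g1 + K * (g2 + 2 * g1 + g3)) * (Real.log y / Real.log 2) + Real.log y * g1) * Y := by gcongr
      _ = _ := by ring

lemma exp_le_pow {q : ℝ} : ∃ C, 0 ≤ C ∧ ∀ y : ℝ, 1 ≤ y → Real.exp (-y) ≤ C * y ^ (-q) := by
  have h1 := tendsto_rpow_mul_exp_neg_mul_atTop_nhds_zero q 1 one_pos
  obtain ⟨U, hU⟩ := eventually_atTop.1 (h1.eventually (ge_mem_nhds (show (0:ℝ) < 1 by norm_num)))
  set V := max U 1
  refine ⟨max 1 (V ^ |q|), by positivity, fun y hy => ?_⟩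
  have hy0 : 0 < y := by linarith
  rw [Real.rpow_neg hy0.le, ← div_eq_mul_inv, le_div_iff₀ (by positivity)]
  rcases le_total V y with h | h
  · have := hU y ((le_max_left _ _).trans h)
    refine le_trans ?_ (le_max_left _ _)
    rw [mul_comm]; simpa using this
  · refine le_trans ?_ (le_max_right _ _)
    calc Real.exp (-y) * y ^ q ≤ 1 * V ^ |q| := by
          gcongr
          · rw [Real.exp_le_one_iff]; linarith
          · calc y ^ q ≤ y ^ |q| := Real.rpow_le_rpow_of_exponent_le hy (le_abs_self _)
              _ ≤ _ := by gcongr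
      _ = _ := one_mul _

lemma Good.segint {h : ℂ → ℂ} (hg : Good h) (k : ℕ) (y : ℝ) :
    ContinuousOn (fun u : ℝ => Real.exp (-(u * y)) * (u ^ k * (h (-I * u)).im)) (Set.Icc 0 1) := by
  have : ContinuousOn (fun u : ℝ => h (-I * u)) (Set.Icc 0 1) := by
    apply hg.cont.comp (by fun_prop)
    intro u hu; simp; exact ⟨hu.2, hu.1⟩
  have h2 := Complex.continuous_im.comp_continuousOn this
  have h3 : ContinuousOn (fun u : ℝ => (h (-I * u)).im) (Set.Icc 0 1) := h2
  fun_prop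

lemma tail_log {a b : ℝ} (h0 : 0 < a) (h2 : a < 2) (hb : |b| ≤ 1) {D : ℂ → ℂ} (hD : Tame D) {B : ℝ}
    (hB : ∀ u : ℝ, 0 < u → u ≤ 1 → |(D (-I * u)).im| ≤ B * (u ^ a * (1 + |Real.log u|))) :
    ∃ C, 0 ≤ C ∧ ∀ k ≤ 2, ∀ y : ℝ, 2 ≤ y → |(Jk k (fun z => D z * exp (Ps a b z)) y).re| ≤ C * (Real.log y * y ^ (-(a + 1 + k))) := by
  have hg := good_of h0 h2 hb hD
  obtain ⟨C1, hC1, hJ⟩ := Jk_contour hg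
  obtain ⟨C2, hC2, hI⟩ := im_h_le h0 h2 hb hD
  suffices H : ∀ k ≤ 2, ∃ C, 0 ≤ C ∧ ∀ y : ℝ, 2 ≤ y → |(Jk k (fun z => D z * exp (Ps a b z)) y).re| ≤ C * (Real.log y * y ^ (-(a + 1 + k))) by
    choose! C hC hCb using H
    refine ⟨∑ k ∈ Finset.range 3, C k, Finset.sum_nonneg fun k hk => hC k (by simp at hk; omega), fun k hk y hy => (hCb k hk y hy).trans ?_⟩
    have : 0 ≤ Real.log y := Real.log_nonneg (by linarith)
    gcongr
    exact Finset.single_le_sum (f := C) (fun k hk => hC k (by simp at hk; omega)) (by simp; omega)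
  intro k hk
  obtain ⟨C3, hC3, hL⟩ := I_log (p := a + k) (by positivity)
  obtain ⟨C4, hC4, hE⟩ := exp_le_pow (q := a + 1 + k)
  have hl2 : 0 < Real.log 2 := Real.log_pos (by norm_num)
  have hB0 : 0 ≤ |B| + 1 := by positivity
  refine ⟨C1 * C4 / Real.log 2 + C2 * (|B| + 1) * C3, by positivity, fun y hy => ?_⟩
  obtain ⟨G, hG, hG1, hG2⟩ := hL y hy
  have hy0 : 0 < y := by linarith
  have hly : Real.log 2 ≤ Real.log y := Real.log_le_log (by norm_num) hy
  have j := hJ k hk y hy0.le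
  have m1 : |∫ u in (0:ℝ)..1, Real.exp (-(u * y)) * (u ^ k * (D (-I * u) * exp (Ps a b (-I * u))).im)| ≤ ∫ u in (0:ℝ)..1, C2 * (|B| + 1) * G u := by
    rw [← Real.norm_eq_abs]
    apply intervalIntegral.norm_integral_le_of_norm_le zero_le_one _ (hG.const_mul _)
    refine Eventually.of_forall fun u hu => ?_
    have hu0 := hu.1
    rw [Real.norm_eq_abs, abs_mul, abs_of_pos (Real.exp_pos _), abs_mul, abs_of_pos (by positivity : 0 < u ^ k)]
    have hua : 0 < u ^ a := by positivity
    have s1 : |(D (-I * u)).im| + u ^ a ≤ (|B| + 1) * (u ^ a * (1 + |Real.log u|)) := by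
      have t1 := hB u hu0 hu.2
      have t2 := abs_nonneg (Real.log u)
      have t3 := le_abs_self B
      have t4 : 0 ≤ u ^ a * (1 + |Real.log u|) := by positivity
      nlinarith [mul_nonneg hua.le t2]
    calc _ ≤ Real.exp (-(u * y)) * (u ^ k * (C2 * ((|B| + 1) * (u ^ a * (1 + |Real.log u|))))) := by
          gcongr
          exact (hI u hu0 hu.2).trans (by gcongr)
      _ = C2 * (|B| + 1) * (Real.exp (-(u * y)) * (u ^ (a + k) * (1 + |Real.log u|))) := by
          rw [Real.rpow_add hu0, Real.rpow_natCast]; ring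
      _ ≤ _ := by gcongr; exact hG1 u hu0 hu.2
  rw [intervalIntegral.integral_const_mul] at m1
  have e : a + k + 1 = a + 1 + k := by ring
  rw [e] at hG2
  set Y := y ^ (-(a + 1 + k))
  have hY : 0 < Y := by positivity
  have hL : 1 ≤ Real.log y / Real.log 2 := by rw [le_div_iff₀ hl2]; linarith
  have j2 : C1 * Real.exp (-y) ≤ C1 * C4 / Real.log 2 * (Real.log y * Y) := by
    calc C1 * Real.exp (-y) ≤ C1 * (C4 * Y) := by gcongr; exact hE y (by linarith)
      _ = C1 * C4 * Y * 1 := by ring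
      _ ≤ C1 * C4 * Y * (Real.log y / Real.log 2) := by gcongr
      _ = _ := by ring
  have j3 : C2 * (|B| + 1) * ∫ u in (0:ℝ)..1, G u ≤ C2 * (|B| + 1) * (C3 * Real.log y * Y) := by gcongr
  set X := (Jk k (fun z => D z * exp (Ps a b z)) y).re
  set Z := ∫ u in (0:ℝ)..1, Real.exp (-(u * y)) * (u ^ k * (D (-I * u) * exp (Ps a b (-I * u))).im)
  have : |X| ≤ |X - Z| + |Z| := by simpa using abs_add_le (X - Z) Z
  calc |X| ≤ _ := this
    _ ≤ C1 * C4 / Real.log 2 * (Real.log y * Y) + C2 * (|B| + 1) * (C3 * Real.log y * Y) := add_le_add (j.trans j2) (m1.trans j3)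
    _ = _ := by ring

lemma tail_nolog {a b : ℝ} (h0 : 0 < a) (h2 : a < 2) (hb : |b| ≤ 1) {D : ℂ → ℂ} (hD : Tame D) {B : ℝ}
    (hB : ∀ u : ℝ, 0 < u → u ≤ 1 → |(D (-I * u)).im| ≤ B * u ^ a) :
    ∃ C, 0 ≤ C ∧ ∀ k ≤ 2, ∀ y : ℝ, 2 ≤ y → |(Jk k (fun z => D z * exp (Ps a b z)) y).re| ≤ C * y ^ (-(a + 1 + k)) := by
  have hg := good_of h0 h2 hb hD
  obtain ⟨C1, hC1, hJ⟩ := Jk_contour hg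
  obtain ⟨C2, hC2, hI⟩ := im_h_le h0 h2 hb hD
  suffices H : ∀ k ≤ 2, ∃ C, 0 ≤ C ∧ ∀ y : ℝ, 2 ≤ y → |(Jk k (fun z => D z * exp (Ps a b z)) y).re| ≤ C * y ^ (-(a + 1 + k)) by
    choose! C hC hCb using H
    refine ⟨∑ k ∈ Finset.range 3, C k, Finset.sum_nonneg fun k hk => hC k (by simp at hk; omega), fun k hk y hy => (hCb k hk y hy).trans ?_⟩
    gcongr
    exact Finset.single_le_sum (f := C) (fun k hk => hC k (by simp at hk; omega)) (by simp; omega)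
  intro k hk
  obtain ⟨C4, hC4, hE⟩ := exp_le_pow (q := a + 1 + k)
  have hB0 : 0 ≤ |B| + 1 := by positivity
  have hgam : 0 < Real.Gamma (a + k + 1) := Real.Gamma_pos_of_pos (by positivity)
  refine ⟨C1 * C4 + C2 * (|B| + 1) * Real.Gamma (a + k + 1), by positivity, fun y hy => ?_⟩
  have hy0 : 0 < y := by linarith
  obtain ⟨hG, hG2⟩ := I_upper (q := a + k) (by positivity) hy0
  have j := hJ k hk y hy0.le
  have m1 : |∫ u in (0:ℝ)..1, Real.exp (-(u * y)) * (u ^ k * (D (-I * u) * exp (Ps a b (-I * u))).im)| ≤ ∫ u in (0:ℝ)..1, C2 * (|B| + 1) * (Real.exp (-(u * y)) * u ^ (a + k)) := by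
    rw [← Real.norm_eq_abs]
    apply intervalIntegral.norm_integral_le_of_norm_le zero_le_one _ (hG.const_mul _)
    refine Eventually.of_forall fun u hu => ?_
    have hu0 := hu.1
    rw [Real.norm_eq_abs, abs_mul, abs_of_pos (Real.exp_pos _), abs_mul, abs_of_pos (by positivity : 0 < u ^ k)]
    have hua : 0 < u ^ a := by positivity
    have s1 : |(D (-I * u)).im| + u ^ a ≤ (|B| + 1) * (u ^ a) := by
      have t1 := hB u hu0 hu.2
      have t3 := le_abs_self B
      nlinarith
    calc _ ≤ Real.exp (-(u * y)) * (u ^ k * (C2 * ((|B| + 1) * (u ^ a)))) := by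
          gcongr
          exact (hI u hu0 hu.2).trans (by gcongr)
      _ = _ := by
          rw [Real.rpow_add hu0, Real.rpow_natCast]; ring
  rw [intervalIntegral.integral_const_mul] at m1
  have e : a + k + 1 = a + 1 + k := by ring
  rw [e] at hG2 ⊢
  set Y := y ^ (-(a + 1 + k))
  have j2 : C1 * Real.exp (-y) ≤ C1 * C4 * Y := by
    calc C1 * Real.exp (-y) ≤ C1 * (C4 * Y) := by gcongr; exact hE y (by linarith)
      _ = _ := by ring
  have j3 : C2 * (|B| + 1) * ∫ u in (0:ℝ)..1, (Real.exp (-(u * y)) * u ^ (a + k)) ≤ C2 * (|B| + 1) * (Real.Gamma (a + 1 + k) * Y) := by gcongr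
  set X := (Jk k (fun z => D z * exp (Ps a b z)) y).re
  set Z := ∫ u in (0:ℝ)..1, Real.exp (-(u * y)) * (u ^ k * (D (-I * u) * exp (Ps a b (-I * u))).im)
  have : |X| ≤ |X - Z| + |Z| := by simpa using abs_add_le (X - Z) Z
  calc |X| ≤ _ := this
    _ ≤ C1 * C4 * Y + C2 * (|B| + 1) * (Real.Gamma (a + 1 + k) * Y) := add_le_add (j.trans j2) (m1.trans j3)
    _ = _ := by ring

lemma sin_ge {v : ℝ} (h0 : 0 ≤ v) (h2 : v ≤ 2) : v / 4 ≤ Real.sin v := by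
  have e : Real.sin v = 2 * Real.sin (v / 2) * Real.cos (v / 2) := by
    rw [← Real.sin_two_mul]; congr 1; ring
  have h1 := Real.mul_le_sin (x := v / 2) (by linarith) (by linarith [Real.pi_gt_three])
  have h3 := Real.one_sub_sq_div_two_le_cos (x := v / 2)
  have h4 : 1 / 2 ≤ 2 / Real.pi := by
    rw [div_le_div_iff₀ (by norm_num) Real.pi_pos]; linarith [Real.pi_le_four]
  have h5 : v / 4 ≤ Real.sin (v / 2) := by nlinarith
  have h6 : 1 / 2 ≤ Real.cos (v / 2) := by nlinarith
  rw [e]; nlinarith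

lemma tail_lower {a b : ℝ} (h0 : 0 < a) (h2 : a < 2) (hb : |b| < 1) :
    ∃ c, 0 < c ∧ ∃ M, 2 ≤ M ∧ ∀ y : ℝ, M ≤ y → c * y ^ (-(a + 1)) ≤ (Jk 0 (fun z => 1 * exp (Ps a b z)) y).re := by
  have hg := good_of h0 h2 hb.le tame_one
  obtain ⟨C1, hC1, hJ⟩ := Jk_contour hg
  obtain ⟨A, hA, hAb⟩ := (tame_Ps (b := b) h0 h2).seg
  set s := Real.sin (Real.pi * a / 2) * (1 + b) with hs
  have hb' := abs_lt.1 hb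
  have hs0 : 0 < s := mul_pos (sin_pos' h0 h2) (by linarith [hb'.1])
  have hs2 : s ≤ 2 := by
    have := Real.sin_le_one (Real.pi * a / 2)
    have := sin_pos' h0 h2
    nlinarith [hb'.1, hb'.2]
  set c0 := Real.exp (-A) * (s / 4) with hc0
  have hc0p : 0 < c0 := by positivity
  set c1 := c0 * Real.exp (-1) / (a + 1) with hc1
  have hc1p : 0 < c1 := by positivity
  have t1 : Tendsto (fun y : ℝ => y ^ (a + 1) * Real.exp (-1 * y)) atTop (𝓝 0) :=
    tendsto_rpow_mul_exp_neg_mul_atTop_nhds_zero (a + 1) 1 one_pos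
  have t2 := (t1.const_mul C1).eventually (ge_mem_nhds (show C1 * 0 < c1 / 2 by simpa using half_pos hc1p))
  obtain ⟨U, hU⟩ := eventually_atTop.1 t2
  refine ⟨c1 / 2, half_pos hc1p, max U 2, le_max_right _ _, fun y hy => ?_⟩
  have hy2 : 2 ≤ y := (le_max_right _ _).trans hy
  have hy0 : 0 < y := by linarith
  have j := hJ 0 (by norm_num) y hy0.le
  have e1 := hU y ((le_max_left _ _).trans hy)
  have e2 : C1 * Real.exp (-y) ≤ c1 / 2 * y ^ (-(a + 1)) := by
    have hp : 0 < y ^ (a + 1) := by positivity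
    rw [Real.rpow_neg hy0.le, ← div_eq_mul_inv, le_div_iff₀ hp]
    calc _ = C1 * (y ^ (a + 1) * Real.exp (-1 * y)) := by rw [neg_one_mul]; ring
      _ ≤ _ := e1
  have low : ∀ u : ℝ, 0 ≤ u → u ≤ 1 → c0 * u ^ a ≤ (1 * exp (Ps a b (-I * u))).im := by
    intro u hu hu1
    rcases hu.eq_or_lt with h | h
    · subst h
      have : Ps a b (-I * (0:ℝ)) = 0 := by
        have : (a:ℂ) ≠ 0 := by exact_mod_cast h0.ne'
        unfold Ps Ef
        split_ifs <;> simp [this]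
      rw [this, Real.zero_rpow h0.ne']; simp
    · rw [one_mul, exp_im, im_Ps h0 h2 h, mul_assoc (u ^ a), ← hs]
      have f1 : -A ≤ (Ps a b (-I * u)).re := by
        have := (abs_re_le_norm _).trans (hAb u hu hu1)
        linarith [(abs_le.1 this).1]
      have f2 : u ^ a ≤ 1 := Real.rpow_le_one hu hu1 h0.le
      have f3 : 0 < u ^ a := by positivity
      have f4 := sin_ge (v := u ^ a * s) (by positivity) (by nlinarith)
      calc c0 * u ^ a = Real.exp (-A) * (u ^ a * s / 4) := by rw [hc0]; ring
        _ ≤ _ := by gcongr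
  have ic := hg.segint 0 y
  have hy1 : 1 / y ≤ 1 := by rw [div_le_one hy0]; linarith
  have hyp : 0 < 1 / y := by positivity
  have step1 : ∫ u in (0:ℝ)..(1/y), (c0 * Real.exp (-1)) * u ^ a ≤ ∫ u in (0:ℝ)..1, Real.exp (-(u * y)) * (u ^ 0 * (1 * exp (Ps a b (-I * u))).im) := by
    have ii : ∀ x z : ℝ, 0 ≤ x → x ≤ z → z ≤ 1 → IntervalIntegrable (fun u : ℝ => Real.exp (-(u * y)) * (u ^ 0 * (1 * exp (Ps a b (-I * u))).im)) volume x z := by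
      intro x z hx hxz hz
      apply ContinuousOn.intervalIntegrable
      rw [Set.uIcc_of_le hxz]
      exact ic.mono (Set.Icc_subset_Icc hx hz)
    rw [← intervalIntegral.integral_add_adjacent_intervals (ii 0 (1/y) le_rfl hyp.le hy1) (ii (1/y) 1 hyp.le hy1 le_rfl)]
    have p2 : 0 ≤ ∫ u in (1/y)..1, Real.exp (-(u * y)) * (u ^ 0 * (1 * exp (Ps a b (-I * u))).im) := by
      apply intervalIntegral.integral_nonneg hy1
      intro u hu
      have hu0 : 0 ≤ u := hyp.le.trans hu.1
      have := low u hu0 hu.2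
      have : 0 ≤ c0 * u ^ a := by positivity
      have : 0 ≤ (1 * exp (Ps a b (-I * u))).im := by linarith
      positivity
    have p1 : ∫ u in (0:ℝ)..(1/y), (c0 * Real.exp (-1)) * u ^ a ≤ ∫ u in (0:ℝ)..(1/y), Real.exp (-(u * y)) * (u ^ 0 * (1 * exp (Ps a b (-I * u))).im) := by
      apply intervalIntegral.integral_mono_on hyp.le
      · exact ((Real.continuous_rpow_const h0.le).intervalIntegrable _ _).const_mul _
      · exact ii _ _ le_rfl hyp.le hy1
      · intro u hu
        have l := low u hu.1 (hu.2.trans hy1)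
        have : u * y ≤ 1 := by have := hu.2; rwa [le_div_iff₀ hy0] at this
        have h3 : 0 ≤ c0 * u ^ a := mul_nonneg hc0p.le (Real.rpow_nonneg hu.1 _)
        calc _ = Real.exp (-1) * (c0 * u ^ a) := by ring
          _ ≤ Real.exp (-(u * y)) * (c0 * u ^ a) := by gcongr
          _ ≤ _ := by rw [pow_zero, one_mul]; gcongr
    linarith
  rw [intervalIntegral.integral_const_mul, integral_rpow (Or.inl (by linarith)), Real.zero_rpow (by positivity), sub_zero, one_div,
    Real.inv_rpow hy0.le, ← Real.rpow_neg hy0.le] at step1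
  have e5 : c0 * Real.exp (-1) * (y ^ (-(a + 1)) / (a + 1)) = c1 * y ^ (-(a + 1)) := by rw [hc1]; ring
  rw [e5] at step1
  have := (abs_le.1 j).1
  linarith

end Stab

open MeasureTheory Filter

namespace Stab
open Complex Topology

noncomputable def efr (a t : ℝ) : ℝ :=
  if a = 1 then 2 / Real.pi * (t * Real.log t) else Real.tan (Real.pi * a / 2) * (t - t ^ a)
noncomputable def ear (a t : ℝ) : ℝ :=
  if a = 1 then 1 / Real.pi * (t * Real.log t ^ 2)
  else Real.pi / 2 / Real.cos (Real.pi * a / 2) ^ 2 * (t - t ^ a) - Real.tan (Real.pi * a / 2) * (t ^ a * Real.log t)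

lemma Ef_real {a t : ℝ} (ht : 0 < t) : Ef a t = (efr a t : ℂ) := by
  unfold Ef efr
  rw [← ofReal_log ht.le, ← ofReal_cpow ht.le, ← ofReal_cpow ht.le]
  split_ifs <;> simp [sub_eq_add_neg]

lemma Ea_real {a t : ℝ} (ht : 0 < t) : Ea a t = (ear a t : ℂ) := by
  unfold Ea ear
  rw [← ofReal_log ht.le, ← ofReal_cpow ht.le, ← ofReal_cpow ht.le]
  split_ifs <;> simp [sub_eq_add_neg]

lemma Ps_real {a b t : ℝ} (ht : 0 < t) : Ps a b t = ((-(t ^ a) : ℝ) : ℂ) + ((-(b * efr a t) : ℝ):ℂ) * I := by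
  unfold Ps
  rw [Ef_real ht, ← ofReal_cpow ht.le]; push_cast; ring
lemma PsA_real {a b t : ℝ} (ht : 0 < t) : PsA a b t = ((-(t ^ a * Real.log t) : ℝ) : ℂ) + ((-(b * ear a t) : ℝ):ℂ) * I := by
  unfold PsA
  rw [Ea_real ht, ← ofReal_cpow ht.le, ← ofReal_log ht.le]; push_cast; ring
lemma PsB_real {a t : ℝ} (ht : 0 < t) : PsB a t = ((-efr a t : ℝ):ℂ) * I := by
  unfold PsB
  rw [Ef_real ht]; push_cast; ring

lemma exp_lip {r : ℝ} {z w : ℂ} (hz : z.re ≤ r) (hw : w.re ≤ r) : ‖exp z - exp w‖ ≤ Real.exp r * ‖z - w‖ := by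
  apply Convex.norm_image_sub_le_of_norm_deriv_le (s := {z : ℂ | z.re ≤ r}) (f := exp) (𝕜 := ℂ)
    (fun x _ => differentiable_exp x) _ (convex_halfSpace_re_le r) hw hz
  intro x hx
  rw [Complex.deriv_exp, norm_exp]
  exact Real.exp_le_exp.2 hx

lemma param_lip {a1 : ℝ} (h1 : 0 < a1) {K : ℝ} (hK : 0 ≤ K) : ∃ C, 0 ≤ C ∧ ∀ t : ℝ, 0 < t → ∀ (z w : ℂ) (e : ℝ),
    z.re ≤ 1 - t ^ a1 → w.re ≤ 1 - t ^ a1 → ‖z - w‖ ≤ K * (1 + t) ^ 3 * |e| →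
    ‖1 * exp z - 1 * exp w‖ ≤ C / (1 + t) ^ 6 * |e| := by
  obtain ⟨K', hK', hb⟩ := exp_poly_bd h1
  refine ⟨Real.exp 1 * K * K', by positivity, fun t ht z w e hz hw h => ?_⟩
  rw [one_mul, one_mul]
  refine (exp_lip hz hw).trans ?_
  have e1 : Real.exp (1 - t ^ a1) ≤ Real.exp 1 * (K' / (1 + t) ^ 9) := by
    rw [sub_eq_add_neg, Real.exp_add]
    gcongr
    rw [le_div_iff₀ (by positivity)]
    refine le_trans ?_ (hb t ht.le)
    gcongr
    have : 0 ≤ t ^ a1 := by positivity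
    linarith
  calc _ ≤ Real.exp 1 * (K' / (1 + t) ^ 9) * (K * (1 + t) ^ 3 * |e|) := by gcongr
    _ = _ := by field_simp

lemma rpow_ge_sub {t a a1 : ℝ} (ht : 0 < t) (h : a1 ≤ a) (h1 : 0 < a1) : -(t ^ a) ≤ 1 - t ^ a1 := by
  rcases le_total 1 t with h' | h'
  · linarith [Real.rpow_le_rpow_of_exponent_le h' h]
  · have := Real.rpow_le_one ht.le h' h1.le
    have : 0 < t ^ a := by positivity
    linarith

lemma exp_est (x : ℝ) (n : ℕ) : |Real.exp x - ∑ m ∈ Finset.range n, x ^ m / (m.factorial : ℝ)| ≤ |x| ^ n * Real.exp |x| := by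
  have := norm_exp_sub_sum_le_norm_mul_exp (x : ℂ) n
  rw [norm_real, Real.norm_eq_abs] at this
  convert this using 1
  rw [← Real.norm_eq_abs, ← norm_real]; push_cast; rfl

lemma exp_abs_log {t e δ : ℝ} (ht : 0 < t) (he : |e| ≤ δ) : Real.exp |e * Real.log t| ≤ t ^ δ + t ^ (-δ) := by
  have hδ : 0 ≤ δ := (abs_nonneg _).trans he
  have : Real.exp |e * Real.log t| ≤ Real.exp (δ * |Real.log t|) := by
    rw [abs_mul]; gcongr
  refine this.trans ?_
  rw [Real.rpow_def_of_pos ht, Real.rpow_def_of_pos ht]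
  rcases abs_cases (Real.log t) with ⟨h, _⟩ | ⟨h, _⟩ <;> rw [h]
  · rw [mul_comm]; linarith [Real.exp_pos (Real.log t * -δ)]
  · rw [show δ * -Real.log t = Real.log t * -δ by ring]; linarith [Real.exp_pos (Real.log t * δ)]

lemma pl_bd {a0 δ : ℝ} (hδ : 0 ≤ δ) (h0 : 0 < a0 - δ) (h2 : a0 + δ ≤ 2) : ∃ K, 0 ≤ K ∧ ∀ t : ℝ, 0 < t → ∀ e, |e| ≤ δ → ∀ m ≤ 2,
    t ^ a0 * (|Real.log t| ^ m * Real.exp |e * Real.log t|) ≤ K * (1 + t) ^ 3 := by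
  obtain ⟨K1, hK1, hb1⟩ := logbd' (p := a0 - δ) h0 (by linarith)
  obtain ⟨K2, hK2, hb2⟩ := logbd' (p := a0 + δ) (by linarith) h2
  refine ⟨K1 + K2, by positivity, fun t ht e he m hm => ?_⟩
  have e1 := exp_abs_log ht he
  have := hb1 t ht m hm
  have := hb2 t ht m hm
  have l : |Real.log t| ^ m ≤ (|Real.log t| + Real.pi) ^ m := by
    gcongr; linarith [Real.pi_pos]
  calc _ ≤ t ^ a0 * ((|Real.log t| + Real.pi) ^ m * (t ^ δ + t ^ (-δ))) := by gcongr
    _ = t ^ (a0 - δ) * (|Real.log t| + Real.pi) ^ m + t ^ (a0 + δ) * (|Real.log t| + Real.pi) ^ m := by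
      rw [sub_eq_add_neg, Real.rpow_add ht, Real.rpow_add ht]; ring
    _ ≤ _ := by linarith

lemma rpow_eq {a a0 t : ℝ} (ht : 0 < t) : t ^ a = t ^ a0 * Real.exp ((a - a0) * Real.log t) := by
  rw [mul_comm (a - a0), ← Real.rpow_def_of_pos ht, ← Real.rpow_add ht]; congr 1; ring

lemma rpow_lip {a0 δ : ℝ} (hδ : 0 ≤ δ) (h0 : 0 < a0 - δ) (h2 : a0 + δ ≤ 2) : ∃ K, 0 ≤ K ∧ ∀ t : ℝ, 0 < t → ∀ a, |a - a0| ≤ δ →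
    |t ^ a - t ^ a0| ≤ K * (1 + t) ^ 3 * |a - a0| := by
  obtain ⟨K, hK, hb⟩ := pl_bd hδ h0 h2
  refine ⟨K, hK, fun t ht a ha => ?_⟩
  have h1 := hb t ht _ ha 1 (by norm_num)
  have h2 := exp_est ((a - a0) * Real.log t) 1
  simp only [Finset.range_one, Finset.sum_singleton, pow_zero, Nat.factorial_zero, Nat.cast_one, div_one, pow_one] at h1 h2
  rw [rpow_eq (a := a) (a0 := a0) ht]
  have hp : 0 < t ^ a0 := by positivity
  calc _ = t ^ a0 * |Real.exp ((a - a0) * Real.log t) - 1| := by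
        rw [← abs_of_pos hp, ← abs_mul, abs_of_pos hp]; ring_nf
    _ ≤ t ^ a0 * (|(a - a0) * Real.log t| * Real.exp |(a - a0) * Real.log t|) := by gcongr
    _ = (t ^ a0 * (|Real.log t| * Real.exp |(a - a0) * Real.log t|)) * |a - a0| := by
        rw [abs_mul (a - a0)]; ring_nf
    _ ≤ _ := by gcongr

noncomputable def cc (a : ℝ) : ℝ := if a = 1 then 2 / Real.pi else -(a - 1) * Real.tan (Real.pi * a / 2)
noncomputable def qq (a t : ℝ) : ℝ := if a = 1 then t * Real.log t else (t ^ a - t) / (a - 1)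

lemma efr_eq (a t : ℝ) : efr a t = cc a * qq a t := by
  unfold efr cc qq
  split_ifs with h
  · rfl
  · have : a - 1 ≠ 0 := sub_ne_zero.2 h
    field_simp; ring

lemma sin_ge_abs {y : ℝ} (hy : |y| ≤ 1) : |y| / 4 ≤ |Real.sin y| := by
  have := sin_ge (abs_nonneg y) (by linarith)
  refine this.trans ?_
  rcases abs_cases y with ⟨h, _⟩ | ⟨h, _⟩ <;> rw [h]
  · exact le_abs_self _
  · rw [Real.sin_neg]; exact neg_le_abs _

lemma cc_bd {a : ℝ} (h : |a - 1| ≤ 1/2) : |cc a - 2 / Real.pi| ≤ 8 * |a - 1| ^ 2 := by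
  by_cases h1 : a = 1
  · simp [cc, h1]
  have hpi := Real.pi_pos
  set y := Real.pi * (a - 1) / 2 with hy
  have hy0 : y ≠ 0 := by have := sub_ne_zero.2 h1; positivity
  have hay : |y| = Real.pi / 2 * |a - 1| := by
    rw [hy, show Real.pi * (a - 1) / 2 = Real.pi / 2 * (a - 1) by ring, abs_mul, abs_of_pos (by positivity)]
  have hyl : |y| ≤ 1 := by rw [hay]; nlinarith [Real.pi_lt_four]
  have hs := sin_ge_abs hyl
  have hyp : 0 < |y| := abs_pos.2 hy0
  have hs0 : Real.sin y ≠ 0 := by intro h; rw [h, abs_zero] at hs; linarith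
  have e : cc a - 2 / Real.pi = 2 / Real.pi * ((y * Real.cos y - Real.sin y) / Real.sin y) := by
    rw [cc, if_neg h1, show Real.pi * a / 2 = y + Real.pi / 2 by rw [hy]; ring, Real.tan_eq_sin_div_cos,
      Real.sin_add_pi_div_two, Real.cos_add_pi_div_two, show a - 1 = 2 / Real.pi * y by rw [hy]; field_simp]
    field_simp
  have b1 := Real.sin_bound hyl
  have b2 : 1 - y ^ 2 / 2 ≤ Real.cos y := Real.one_sub_sq_div_two_le_cos
  have b3 := Real.cos_le_one y
  have num : |y * Real.cos y - Real.sin y| ≤ |y| ^ 3 := by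
    have b4 : |Real.cos y - 1| ≤ |y| ^ 2 / 2 := by rw [sq_abs, abs_le]; constructor <;> nlinarith [sq_nonneg y]
    have : y * Real.cos y - Real.sin y = y * (Real.cos y - 1) + y ^ 3 / 6 - (Real.sin y - (y - y ^ 3 / 6)) := by ring
    rw [this]
    have t1 := abs_sub (y * (Real.cos y - 1) + y ^ 3 / 6) (Real.sin y - (y - y ^ 3 / 6))
    have t2 := abs_add_le (y * (Real.cos y - 1)) (y ^ 3 / 6)
    have t3 : |y * (Real.cos y - 1)| ≤ |y| * (|y| ^ 2 / 2) := by rw [abs_mul]; gcongr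
    have t4 : |y ^ 3 / 6| = |y| ^ 3 / 6 := by rw [abs_div, abs_pow]; norm_num
    have t5 : |y| ^ 4 ≤ |y| ^ 3 := pow_le_pow_of_le_one (abs_nonneg _) hyl (by norm_num)
    have t6 : 0 ≤ |y| ^ 3 := by positivity
    nlinarith
  rw [e, abs_mul, abs_of_pos (by positivity : 0 < 2 / Real.pi), abs_div]
  calc _ ≤ 2 / Real.pi * (|y| ^ 3 / (|y| / 4)) := by gcongr
    _ = 2 * Real.pi * |a - 1| ^ 2 := by rw [hay]; have : |a - 1| ≠ 0 := by simpa using sub_ne_zero.2 h1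
                                        field_simp; ring
    _ ≤ _ := by nlinarith [Real.pi_lt_four, sq_nonneg (|a-1|)]

lemma qq_bd {a t : ℝ} (ht : 0 < t) : |qq a t - t * Real.log t| ≤
    t * (|Real.log t| ^ 2 * Real.exp |(a - 1) * Real.log t|) * |a - 1| := by
  by_cases h1 : a = 1
  · simp [qq, h1]
  have h2 := exp_est ((a - 1) * Real.log t) 2
  have hne := sub_ne_zero.2 h1
  simp only [Finset.sum_range_succ, Finset.range_zero, Finset.sum_empty] at h2
  norm_num at h2
  rw [qq, if_neg h1, rpow_eq (a := a) (a0 := 1) ht, Real.rpow_one]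
  have : (t * Real.exp ((a - 1) * Real.log t) - t) / (a - 1) - t * Real.log t =
    t * ((Real.exp ((a - 1) * Real.log t) - (1 + (a - 1) * Real.log t)) / (a - 1)) := by field_simp; ring
  rw [this, abs_mul, abs_of_pos ht, abs_div]
  calc _ ≤ t * ((((a - 1) * Real.log t) ^ 2 * Real.exp |(a - 1) * Real.log t|) / |a - 1|) := by
        gcongr; rw [← sq_abs ((a - 1) * Real.log t), abs_mul]; exact h2
    _ = _ := by
      have : |a - 1| ≠ 0 := by simpa using hne
      rw [mul_pow, ← sq_abs (a - 1), ← sq_abs (Real.log t)]; field_simp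

lemma qq_bd2 {a t : ℝ} (ht : 0 < t) : |qq a t - t * Real.log t - (a - 1) * (t * Real.log t ^ 2 / 2)| ≤
    t * (|Real.log t| ^ 3 * Real.exp |(a - 1) * Real.log t|) * |a - 1| ^ 2 := by
  by_cases h1 : a = 1
  · simp [qq, h1]
  have h2 := exp_est ((a - 1) * Real.log t) 3
  have hne := sub_ne_zero.2 h1
  simp only [Finset.sum_range_succ, Finset.range_zero, Finset.sum_empty] at h2
  norm_num [Nat.factorial] at h2
  rw [qq, if_neg h1, rpow_eq (a := a) (a0 := 1) ht, Real.rpow_one]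
  have : (t * Real.exp ((a - 1) * Real.log t) - t) / (a - 1) - t * Real.log t - (a - 1) * (t * Real.log t ^ 2 / 2) =
    t * ((Real.exp ((a - 1) * Real.log t) - (1 + (a - 1) * Real.log t + ((a - 1) * Real.log t) ^ 2 / 2)) / (a - 1)) := by field_simp; ring
  rw [this, abs_mul, abs_of_pos ht, abs_div]
  calc _ ≤ t * ((|(a - 1) * Real.log t| ^ 3 * Real.exp |(a - 1) * Real.log t|) / |a - 1|) := by
        rw [abs_mul (a - 1)]; gcongr
    _ = _ := by
      have : |a - 1| ≠ 0 := by simpa using hne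
      rw [abs_mul]; field_simp

end Stab

open MeasureTheory Filter

namespace Stab
open Complex Topology

lemma hasDeriv_of_sq {f : ℝ → ℝ} {x0 f' K δ : ℝ} (hδ : 0 < δ) (h : ∀ x, |x - x0| ≤ δ → |f x - f x0 - (x - x0) * f'| ≤ K * |x - x0| ^ 2) :
    HasDerivAt f f' x0 := by
  rw [hasDerivAt_iff_isLittleO]
  have : (fun x => f x - f x0 - (x - x0) • f') =O[𝓝 x0] fun x => |x - x0| ^ 2 := by
    apply Asymptotics.IsBigO.of_bound K
    filter_upwards [Metric.closedBall_mem_nhds x0 hδ] with x hx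
    rw [Metric.mem_closedBall, Real.dist_eq] at hx
    rw [Real.norm_eq_abs, Real.norm_eq_abs, abs_of_nonneg (sq_nonneg (|x - x0|))]
    exact h x hx
  refine this.trans_isLittleO ?_
  have h2 : (fun x : ℝ => |x - x0| ^ 2) = fun x => (x - x0) * (x - x0) := by
    ext x; rw [sq_abs, sq]
  rw [h2]
  have h3 : Tendsto (fun x : ℝ => x - x0) (𝓝 x0) (𝓝 0) := by
    have : Continuous (fun x : ℝ => x - x0) := by fun_prop
    simpa using this.tendsto x0
  have := (Asymptotics.isLittleO_one_iff ℝ).2 h3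
  simpa using this.mul_isBigO (Asymptotics.isBigO_refl (fun x : ℝ => x - x0) (𝓝 x0))

lemma cc_deriv : HasDerivAt cc 0 1 := by
  apply hasDeriv_of_sq (K := 8) (δ := 1/2) (by norm_num)
  intro x hx
  simpa [cc] using cc_bd hx

lemma qq_deriv {t : ℝ} (ht : 0 < t) : HasDerivAt (fun a => qq a t) (t * Real.log t ^ 2 / 2) 1 := by
  apply hasDeriv_of_sq (K := t * (|Real.log t| ^ 3 * Real.exp |Real.log t|)) (δ := 1) one_pos
  intro a ha
  have h1 : qq 1 t = t * Real.log t := by simp [qq]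
  rw [h1]
  refine (qq_bd2 ht).trans ?_
  have : |(a - 1) * Real.log t| ≤ |Real.log t| := by
    rw [abs_mul]; exact mul_le_of_le_one_left (abs_nonneg _) ha
  gcongr

lemma rpow_deriv_a {a t : ℝ} (ht : 0 < t) : HasDerivAt (fun a => t ^ a) (t ^ a * Real.log t) a := by
  simpa using Real.hasStrictDerivAt_const_rpow ht a |>.hasDerivAt

lemma tan_deriv {a : ℝ} (h0 : 0 < a) (h2 : a < 2) (h : a ≠ 1) :
    HasDerivAt (fun a => Real.tan (Real.pi * a / 2)) (Real.pi / 2 / Real.cos (Real.pi * a / 2) ^ 2) a := by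
  have h1 := Real.hasDerivAt_tan (cos_ne h0 h2 h)
  have h3 : HasDerivAt (fun a : ℝ => Real.pi * a / 2) (Real.pi / 2) a := by
    simpa using ((hasDerivAt_id a).const_mul Real.pi).div_const 2
  refine (h1.comp a h3).congr_deriv ?_
  ring

lemma efr_deriv {a t : ℝ} (h0 : 0 < a) (h2 : a < 2) (ht : 0 < t) : HasDerivAt (fun a => efr a t) (ear a t) a := by
  by_cases h : a = 1
  · subst h
    have e : (fun a => efr a t) = fun a => cc a * qq a t := by ext a; exact efr_eq a t
    rw [e]
    refine (cc_deriv.mul (qq_deriv ht)).congr_deriv ?_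
    simp [ear, cc]; ring
  · have e : (fun a => efr a t) =ᶠ[𝓝 a] fun a => Real.tan (Real.pi * a / 2) * (t - t ^ a) := by
      filter_upwards [isOpen_ne.mem_nhds h] with x hx
      simp [efr, show x ≠ 1 from hx]
    refine HasDerivAt.congr_of_eventuallyEq ?_ e
    refine ((tan_deriv h0 h2 h).mul ((rpow_deriv_a ht (a := a)).const_sub t)).congr_deriv ?_
    simp [ear, h]; ring

lemma t_sub_bd {a t : ℝ} (h0 : 0 < a) (h2 : a ≤ 2) (ht : 0 < t) : |t - t ^ a| ≤ 2 * (1 + t) ^ 3 := by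
  have h1 := rpow_le_cube ht h0 (by linarith)
  have h3 : t ≤ (1 + t) ^ 3 := by nlinarith [sq_nonneg t, mul_pos ht ht, mul_pos (mul_pos ht ht) ht]
  have : 0 < t ^ a := by positivity
  rw [abs_le]; constructor <;> nlinarith

lemma efr_lip {a0 : ℝ} (h0 : 0 < a0) (h2 : a0 < 2) : ∃ δ, 0 < δ ∧ 0 < a0 - δ ∧ a0 + δ < 2 ∧ ∃ K, 0 ≤ K ∧ ∀ t : ℝ, 0 < t → ∀ a, |a - a0| ≤ δ →
    |efr a t - efr a0 t| ≤ K * (1 + t) ^ 3 * |a - a0| := by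
  by_cases h : a0 = 1
  · subst h
    obtain ⟨K1, hK1, hb1⟩ := pl_bd (a0 := 1) (δ := 1/2) (by norm_num) (by norm_num) (by norm_num)
    refine ⟨1/2, by norm_num, by norm_num, by norm_num, (8 * (1/2)) * (2 * K1) + 2 / Real.pi * K1, by positivity, fun t ht a ha => ?_⟩
    have q1 := (qq_bd (a := a) ht)
    have p2 := hb1 t ht _ ha 2 le_rfl
    have p1 := hb1 t ht 0 (by norm_num) 1 (by norm_num)
    rw [Real.rpow_one] at p1 p2
    have q2 : |qq a t - t * Real.log t| ≤ K1 * (1 + t) ^ 3 * |a - 1| := q1.trans (by gcongr)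
    have q3 : |t * Real.log t| ≤ K1 * (1 + t) ^ 3 := by
      rw [abs_mul, abs_of_pos ht]; simpa using p1
    have q4 : |qq a t| ≤ 2 * K1 * (1 + t) ^ 3 := by
      have := abs_add_le (qq a t - t * Real.log t) (t * Real.log t)
      rw [sub_add_cancel] at this
      have : K1 * (1 + t) ^ 3 * |a - 1| ≤ K1 * (1 + t) ^ 3 * 1 := by gcongr; linarith
      linarith
    have c1 := cc_bd ha
    have e : efr a t - efr 1 t = (cc a - 2 / Real.pi) * qq a t + 2 / Real.pi * (qq a t - t * Real.log t) := by
      rw [efr_eq, efr]; simp; ring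
    rw [e]
    refine (abs_add_le _ _).trans ?_
    rw [abs_mul, abs_mul, abs_of_pos (by positivity : 0 < 2 / Real.pi)]
    have c2 : |cc a - 2 / Real.pi| ≤ 8 * (1/2) * |a - 1| := c1.trans (by nlinarith [abs_nonneg (a - 1)])
    calc _ ≤ 8 * (1/2) * |a - 1| * (2 * K1 * (1 + t) ^ 3) + 2 / Real.pi * (K1 * (1 + t) ^ 3 * |a - 1|) := by gcongr
      _ = _ := by ring
  · have d := (tan_deriv h0 h2 h).isBigO_sub
    obtain ⟨C, hC, hCb⟩ := d.exists_nonneg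
    rw [Asymptotics.isBigOWith_iff] at hCb
    have ev := hCb.and (isOpen_ne.mem_nhds h)
    obtain ⟨r, hr, hrb⟩ := Metric.eventually_nhds_iff.1 ev
    obtain ⟨δ, hδ, hd1, hd2, hd3⟩ : ∃ δ, 0 < δ ∧ 0 < a0 - δ ∧ a0 + δ < 2 ∧ δ < r :=
      ⟨min (a0 / 2) (min ((2 - a0) / 2) (r / 2)), by
        refine lt_min (by linarith) (lt_min (by linarith) (by linarith)), by
        linarith [min_le_left (a0 / 2) (min ((2 - a0) / 2) (r / 2))], by
        linarith [(min_le_right (a0 / 2) (min ((2 - a0) / 2) (r / 2))).trans (min_le_left _ _)], by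
        linarith [(min_le_right (a0 / 2) (min ((2 - a0) / 2) (r / 2))).trans (min_le_right _ _)]⟩
    obtain ⟨K, hK, hb⟩ := rpow_lip hδ.le hd1 hd2.le
    refine ⟨δ, hδ, hd1, hd2, C * 2 + |Real.tan (Real.pi * a0 / 2)| * K, by positivity, fun t ht a ha => ?_⟩
    obtain ⟨l1, l2⟩ := hrb (y := a) (by rw [Real.dist_eq]; linarith)
    rw [Real.norm_eq_abs, Real.norm_eq_abs] at l1
    have l2 : a ≠ 1 := l2
    have e : efr a t - efr a0 t = (Real.tan (Real.pi * a / 2) - Real.tan (Real.pi * a0 / 2)) * (t - t ^ a)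
        + Real.tan (Real.pi * a0 / 2) * (-(t ^ a - t ^ a0)) := by
      simp only [efr, h, l2, if_false]; ring
    rw [e]
    refine (abs_add_le _ _).trans ?_
    rw [abs_mul, abs_mul, abs_neg]
    have m1 := hb t ht a ha
    have m2 := t_sub_bd (a := a) (by linarith [abs_le.1 ha]) (by linarith [abs_le.1 ha]) ht
    calc _ ≤ C * |a - a0| * (2 * (1 + t) ^ 3) + |Real.tan (Real.pi * a0 / 2)| * (K * (1 + t) ^ 3 * |a - a0|) := by gcongr
      _ = _ := by ring

lemma norm_ri_le (x y : ℝ) : ‖(x:ℂ) + (y:ℂ) * I‖ ≤ |x| + |y| := by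
  refine (norm_add_le _ _).trans ?_
  simp

lemma Jk_derivA {a b : ℝ} (h0 : 0 < a) (h2 : a < 2) (hb : |b| ≤ 1) {k : ℕ} (hk : k ≤ 2) (y : ℝ) :
    HasDerivAt (fun s => Jk k (fun z => 1 * exp (Ps s b z)) y) (Jk k (fun z => PsA a b z * exp (Ps a b z)) y) a := by
  obtain ⟨δ, hδ, hd1, hd2, K1, hK1, hb1⟩ := efr_lip h0 h2
  obtain ⟨K2, hK2, hb2⟩ := rpow_lip hδ.le hd1 hd2.le
  obtain ⟨C, hC, hCb⟩ := param_lip hd1 (K := K1 + K2) (by positivity)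
  refine Jk_param (S := Metric.closedBall a δ) (Metric.closedBall_mem_nhds a hδ) hC ?_ (good_of h0 h2 hb (tame_PsA h0 h2)).rgood ?_ ?_ hk y
  · intro s hs
    rw [Metric.mem_closedBall, Real.dist_eq, abs_le] at hs
    exact (good_of (by linarith) (by linarith) hb tame_one).rgood
  · intro s hs t ht
    rw [Metric.mem_closedBall, Real.dist_eq] at hs
    apply hCb t ht
    · rw [Ps_real ht]; simpa using rpow_ge_sub ht (by linarith [abs_le.1 hs]) hd1
    · rw [Ps_real ht]; simpa using rpow_ge_sub ht (by linarith) hd1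
    · rw [Ps_real ht, Ps_real ht]
      have e : ((-(t ^ s) : ℝ) : ℂ) + ((-(b * efr s t) : ℝ):ℂ) * I - (((-(t ^ a) : ℝ) : ℂ) + ((-(b * efr a t) : ℝ):ℂ) * I) =
        ((-(t ^ s - t ^ a) : ℝ) : ℂ) + ((-(b * (efr s t - efr a t)) : ℝ):ℂ) * I := by push_cast; ring
      rw [e]
      refine (norm_ri_le _ _).trans ?_
      rw [abs_neg, abs_neg, abs_mul]
      have := hb1 t ht s hs
      have := hb2 t ht s hs
      have : |b| * |efr s t - efr a t| ≤ 1 * |efr s t - efr a t| := by gcongr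
      nlinarith
  · intro t ht
    have d1 := (rpow_deriv_a ht (a := a)).neg.ofReal_comp
    have d2 := ((efr_deriv h0 h2 ht).const_mul b).neg.ofReal_comp.mul_const I
    have d3 := ((d1.add d2).cexp).const_mul 1
    simp only [Ps_real ht]
    refine d3.congr_deriv ?_
    rw [PsA_real ht]; simp; ring

lemma Jk_derivB {a b : ℝ} (h0 : 0 < a) (h2 : a < 2) (hb : |b| < 1) {k : ℕ} (hk : k ≤ 2) (y : ℝ) :
    HasDerivAt (fun s => Jk k (fun z => 1 * exp (Ps a s z)) y) (Jk k (fun z => PsB a z * exp (Ps a b z)) y) b := by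
  obtain ⟨K1, hK1, hb1⟩ := (tame_Ef h0 h2).bd
  obtain ⟨C, hC, hCb⟩ := param_lip h0 (K := K1) (by positivity)
  have hS : {x : ℝ | |x| < 1} ∈ 𝓝 b := (isOpen_lt continuous_abs continuous_const).mem_nhds hb
  refine Jk_param (S := {x : ℝ | |x| < 1}) hS hC ?_ (good_of h0 h2 hb.le (tame_PsB h0 h2)).rgood ?_ ?_ hk y
  · intro s hs
    exact (good_of h0 h2 (le_of_lt hs) tame_one).rgood
  · intro s hs t ht
    apply hCb t ht
    · rw [Ps_real ht]; simp
    · rw [Ps_real ht]; simp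
    · rw [Ps_real ht, Ps_real ht]
      have e : ((-(t ^ a) : ℝ) : ℂ) + ((-(s * efr a t) : ℝ):ℂ) * I - (((-(t ^ a) : ℝ) : ℂ) + ((-(b * efr a t) : ℝ):ℂ) * I) =
        ((0 : ℝ) : ℂ) + ((-((s - b) * efr a t) : ℝ):ℂ) * I := by push_cast; ring
      rw [e]
      refine (norm_ri_le _ _).trans ?_
      have := hb1 t (by simpa using ht.le) (by simp) (by simp)
      rw [Ef_real ht, norm_real, Real.norm_eq_abs, ofReal_re] at this
      rw [abs_neg, abs_mul, abs_zero, zero_add, mul_comm]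
      gcongr
  · intro t ht
    have d2 := ((hasDerivAt_id b).mul_const (efr a t)).neg.ofReal_comp.mul_const I
    have d3 := (((d2.const_add ((-(t ^ a) : ℝ) : ℂ)).cexp).const_mul 1)
    simp only [Ps_real ht]
    refine d3.congr_deriv ?_
    rw [PsB_real ht]; simp; ring

end Stab

open MeasureTheory Filter

namespace Stab
open Complex Topology ComplexConjugate

noncomputable def G (k : ℕ) (a b y : ℝ) : ℝ := (Jk k (fun z => 1 * exp (Ps a b z)) y).re
noncomputable def GA (k : ℕ) (a b y : ℝ) : ℝ := (Jk k (fun z => PsA a b z * exp (Ps a b z)) y).re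
noncomputable def GB (k : ℕ) (a b y : ℝ) : ℝ := (Jk k (fun z => PsB a z * exp (Ps a b z)) y).re

lemma Jk_refl {h1 h2 : ℂ → ℂ} {c : ℝ} (h : ∀ t : ℝ, 0 < t → h2 t = c * conj (h1 t)) (k : ℕ) (y : ℝ) :
    (Jk k h2 (-y)).re = c * (-1) ^ k * (Jk k h1 y).re := by
  have : Jk k h2 (-y) = ((c * (-1) ^ k : ℝ) : ℂ) * conj (Jk k h1 y) := by
    unfold Jk
    rw [← integral_conj, ← integral_const_mul]
    apply setIntegral_congr_fun measurableSet_Ioi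
    intro t ht
    simp only [h t ht, map_mul, map_pow, ← exp_conj, map_neg, conj_I, conj_ofReal]
    rw [show (I * (t:ℂ)) ^ k = (-1) ^ k * (-I * t) ^ k by rw [← mul_pow]; ring]
    push_cast
    rw [show -I * (t:ℂ) * -(y:ℂ) = - -I * t * y by ring]
    ring
  rw [this, re_ofReal_mul, conj_re]

lemma conj_ri (x y : ℝ) : conj ((x:ℂ) + (y:ℂ) * I) = (x:ℂ) + ((-y:ℝ):ℂ) * I := by
  simp [map_add]

lemma conj_Ps {a b t : ℝ} (ht : 0 < t) : Ps a (-b) t = conj (Ps a b t) := by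
  rw [Ps_real ht, Ps_real ht, conj_ri]; push_cast; ring
lemma conj_PsA {a b t : ℝ} (ht : 0 < t) : PsA a (-b) t = conj (PsA a b t) := by
  rw [PsA_real ht, PsA_real ht, conj_ri]; push_cast; ring
lemma conj_PsB {a t : ℝ} (ht : 0 < t) : PsB a t = - conj (PsB a t) := by
  rw [PsB_real ht]; simp

lemma G_neg (k : ℕ) (a b y : ℝ) : G k a b (-y) = (-1) ^ k * G k a (-b) y := by
  unfold G
  rw [Jk_refl (h1 := fun z => 1 * exp (Ps a (-b) z)) (c := 1)]
  · ring
  · intro t ht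
    rw [map_mul, ← exp_conj, ← conj_Ps ht]; simp
lemma GA_neg (k : ℕ) (a b y : ℝ) : GA k a b (-y) = (-1) ^ k * GA k a (-b) y := by
  unfold GA
  rw [Jk_refl (h1 := fun z => PsA a (-b) z * exp (Ps a (-b) z)) (c := 1)]
  · ring
  · intro t ht
    rw [map_mul, ← exp_conj, ← conj_Ps ht, ← conj_PsA ht]; simp
lemma GB_neg (k : ℕ) (a b y : ℝ) : GB k a b (-y) = -(-1) ^ k * GB k a (-b) y := by
  unfold GB
  rw [Jk_refl (h1 := fun z => PsB a z * exp (Ps a (-b) z)) (c := -1)]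
  · ring
  · intro t ht
    rw [map_mul, ← exp_conj, ← conj_Ps ht, neg_neg]
    conv_lhs => rw [conj_PsB ht]
    push_cast; ring

lemma two_sided {F : ℕ → ℝ → ℝ → ℝ} (hF : ∀ k b y, |F k b (-y)| = |F k (-b) y|) {R : ℕ → ℝ → ℝ} {b : ℝ}
    (h : ∀ b', |b'| = |b| → ∃ C, 0 ≤ C ∧ ∀ k ≤ 2, ∀ y : ℝ, 2 ≤ y → |F k b' y| ≤ C * R k y)
    (hR : ∀ k, ∀ y, 2 ≤ y → 0 ≤ R k y) :
    ∃ C, 0 ≤ C ∧ ∀ k ≤ 2, ∀ y : ℝ, 2 ≤ |y| → |F k b y| ≤ C * R k |y| := by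
  obtain ⟨C1, hC1, h1⟩ := h b rfl
  obtain ⟨C2, hC2, h2⟩ := h (-b) (abs_neg b)
  refine ⟨C1 + C2, by positivity, fun k hk y hy => ?_⟩
  have := hR k _ hy
  rcases abs_cases y with ⟨e, _⟩ | ⟨e, _⟩
  · rw [e] at hy this ⊢
    have := h1 k hk y hy
    nlinarith
  · have e2 : |F k b y| = abs (F k (-b) (abs y)) := by rw [e, ← hF, neg_neg]
    rw [e2]
    have := h2 k hk _ hy
    nlinarith

lemma G_tail {a b : ℝ} (h0 : 0 < a) (h2 : a < 2) (hb : |b| ≤ 1) :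
    ∃ C, 0 ≤ C ∧ ∀ k ≤ 2, ∀ y : ℝ, 2 ≤ |y| → |G k a b y| ≤ C * |y| ^ (-(a + 1 + k)) := by
  refine two_sided (F := fun k b y => G k a b y) (R := fun k y => y ^ (-(a + 1 + k))) ?_ ?_ ?_
  · intro k b y; rw [G_neg, abs_mul, abs_pow]; simp
  · intro b' hb'
    refine tail_nolog h0 h2 (hb' ▸ hb) tame_one (B := 1) ?_
    intro u hu _; simp; positivity
  · intro k y hy; positivity

lemma GA_tail {a b : ℝ} (h0 : 0 < a) (h2 : a < 2) (hb : |b| ≤ 1) :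
    ∃ C, 0 ≤ C ∧ ∀ k ≤ 2, ∀ y : ℝ, 2 ≤ |y| → |GA k a b y| ≤ C * (Real.log |y| * |y| ^ (-(a + 1 + k))) := by
  refine two_sided (F := fun k b y => GA k a b y) (R := fun k y => Real.log y * y ^ (-(a + 1 + k))) ?_ ?_ ?_
  · intro k b y; rw [GA_neg, abs_mul, abs_pow]; simp
  · intro b' hb'
    have hb1 : |b'| ≤ 1 := hb' ▸ hb
    refine tail_log h0 h2 hb1 (tame_PsA h0 h2) (B := 4) ?_
    intro u hu _
    rw [im_PsA h0 h2 hu]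
    rw [abs_mul, abs_mul, abs_of_pos (by positivity : 0 < u ^ a)]
    have e1 : |1 + b'| ≤ 2 := by rw [abs_le] at *; constructor <;> linarith
    have e2 : |Real.sin (Real.pi * a / 2) * Real.log u + Real.cos (Real.pi * a / 2) * (Real.pi / 2)| ≤ 2 * (1 + |Real.log u|) := by
      refine (abs_add_le _ _).trans ?_
      rw [abs_mul, abs_mul]
      have s := Real.abs_sin_le_one (Real.pi * a / 2)
      have c := Real.abs_cos_le_one (Real.pi * a / 2)
      have p : |Real.pi / 2| ≤ 2 := by rw [abs_of_pos (by positivity)]; linarith [Real.pi_le_four]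
      have : |Real.sin (Real.pi * a / 2)| * |Real.log u| ≤ 1 * |Real.log u| := by gcongr
      have : |Real.cos (Real.pi * a / 2)| * |Real.pi / 2| ≤ 1 * 2 := by gcongr
      linarith [abs_nonneg (Real.log u)]
    calc _ ≤ 2 * u ^ a * (2 * (1 + |Real.log u|)) := by gcongr
      _ = _ := by ring
  · intro k y hy
    have := Real.log_nonneg (by linarith : (1:ℝ) ≤ y)
    positivity

lemma GB_tail {a b : ℝ} (h0 : 0 < a) (h2 : a < 2) (hb : |b| ≤ 1) :
    ∃ C, 0 ≤ C ∧ ∀ k ≤ 2, ∀ y : ℝ, 2 ≤ |y| → |GB k a b y| ≤ C * |y| ^ (-(a + 1 + k)) := by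
  refine two_sided (F := fun k b y => GB k a b y) (R := fun k y => y ^ (-(a + 1 + k))) ?_ ?_ ?_
  · intro k b y; rw [GB_neg, abs_mul, abs_neg, abs_pow]; simp
  · intro b' hb'
    refine tail_nolog h0 h2 (hb' ▸ hb) (tame_PsB h0 h2) (B := 1) ?_
    intro u hu _
    rw [im_PsB h0 h2 hu, abs_mul, abs_of_pos (by positivity : 0 < u ^ a), mul_comm]
    gcongr
    exact Real.abs_sin_le_one _
  · intro k y hy; positivity

lemma G_lower {a b : ℝ} (h0 : 0 < a) (h2 : a < 2) (hb : |b| < 1) :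
    ∃ c, 0 < c ∧ ∃ M, 2 ≤ M ∧ ∀ y : ℝ, M ≤ |y| → c * |y| ^ (-(a + 1)) ≤ G 0 a b y := by
  obtain ⟨c1, hc1, M1, hM1, h1⟩ := tail_lower h0 h2 hb
  obtain ⟨c2, hc2, M2, hM2, h2⟩ := tail_lower (b := -b) h0 h2 (by rwa [abs_neg])
  refine ⟨min c1 c2, lt_min hc1 hc2, max M1 M2, hM1.trans (le_max_left _ _), fun y hy => ?_⟩
  have hy1 := (le_max_left _ _).trans hy
  have hy2 := (le_max_right _ _).trans hy
  have hp : 0 ≤ |y| ^ (-(a + 1)) := by positivity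
  rcases abs_cases y with ⟨e, _⟩ | ⟨e, _⟩
  · rw [e] at hy1 hp ⊢
    exact (mul_le_mul_of_nonneg_right (min_le_left _ _) hp).trans (h1 y hy1)
  · have e2 : G 0 a b y = G 0 a (-b) |y| := by
      have := G_neg 0 a b (-y)
      rw [e]; simpa using this
    rw [e2]
    exact (mul_le_mul_of_nonneg_right (min_le_right _ _) hp).trans (h2 _ hy2)

lemma re_deriv {f : ℝ → ℂ} {f' : ℂ} {x : ℝ} (h : HasDerivAt f f' x) : HasDerivAt (fun s => (f s).re) f'.re x := by
  exact (reCLM.hasFDerivAt.comp_hasDerivAt x h)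

lemma G_dy {a b : ℝ} (h0 : 0 < a) (h2 : a < 2) (hb : |b| ≤ 1) {k : ℕ} (hk : k ≤ 1) (y : ℝ) :
    HasDerivAt (G k a b) (-G (k+1) a b y) y := by
  have := re_deriv (Jk_deriv (h := fun z => 1 * exp (Ps a b z)) (good_of h0 h2 hb tame_one).rgood hk y)
  rwa [neg_re] at this
lemma GA_dy {a b : ℝ} (h0 : 0 < a) (h2 : a < 2) (hb : |b| ≤ 1) {k : ℕ} (hk : k ≤ 1) (y : ℝ) :
    HasDerivAt (GA k a b) (-GA (k+1) a b y) y := by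
  have := re_deriv (Jk_deriv (h := fun z => PsA a b z * exp (Ps a b z)) (good_of h0 h2 hb (tame_PsA h0 h2)).rgood hk y)
  rwa [neg_re] at this
lemma GB_dy {a b : ℝ} (h0 : 0 < a) (h2 : a < 2) (hb : |b| ≤ 1) {k : ℕ} (hk : k ≤ 1) (y : ℝ) :
    HasDerivAt (GB k a b) (-GB (k+1) a b y) y := by
  have := re_deriv (Jk_deriv (h := fun z => PsB a z * exp (Ps a b z)) (good_of h0 h2 hb (tame_PsB h0 h2)).rgood hk y)
  rwa [neg_re] at this
lemma G_da {a b : ℝ} (h0 : 0 < a) (h2 : a < 2) (hb : |b| ≤ 1) {k : ℕ} (hk : k ≤ 2) (y : ℝ) :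
    HasDerivAt (fun s => G k s b y) (GA k a b y) a := re_deriv (Jk_derivA h0 h2 hb hk y)
lemma G_db {a b : ℝ} (h0 : 0 < a) (h2 : a < 2) (hb : |b| < 1) {k : ℕ} (hk : k ≤ 2) (y : ℝ) :
    HasDerivAt (fun s => G k a s y) (GB k a b y) b := re_deriv (Jk_derivB h0 h2 hb hk y)

end Stab

open MeasureTheory Filter

namespace Stab
open Complex Topology ComplexConjugate

noncomputable def rp (a t : ℝ) : ℝ := (max t 0) ^ a - (max (-t) 0) ^ a
noncomputable def oef (a t : ℝ) : ℝ :=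
  if a = 1 then 2 / Real.pi * (t * Real.log t) else Real.tan (Real.pi * a / 2) * (t - rp a t)
noncomputable def Psi (a b t : ℝ) : ℂ := ((-(|t| ^ a) : ℝ) : ℂ) + ((-(b * oef a t) : ℝ):ℂ) * I

lemma rp_pos {a t : ℝ} (h0 : 0 < a) (ht : 0 < t) : rp a t = t ^ a := by
  rw [rp, max_eq_left ht.le, max_eq_right (by linarith), Real.zero_rpow h0.ne', sub_zero]
lemma rp_neg (a t : ℝ) : rp a (-t) = - rp a t := by simp [rp]
lemma rp_zero (a : ℝ) : rp a 0 = 0 := by simp [rp]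
lemma rp_mul {a t l : ℝ} (hl : 0 < l) : rp a (l * t) = l ^ a * rp a t := by
  have e1 : max (l * t) 0 = l * max t 0 := by rw [mul_max_of_nonneg _ _ hl.le, mul_zero]
  have e2 : max (-(l * t)) 0 = l * max (-t) 0 := by rw [mul_max_of_nonneg _ _ hl.le, mul_zero, mul_neg]
  rw [rp, rp, e1, e2, Real.mul_rpow hl.le (le_max_right _ _), Real.mul_rpow hl.le (le_max_right _ _)]; ring
lemma abs_rp (h0 : 0 < a) (t : ℝ) : |rp a t| = |t| ^ a := by
  rcases lt_trichotomy t 0 with h | h | h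
  · have : rp a t = - rp a (-t) := by rw [rp_neg]; ring
    rw [this, abs_neg, rp_pos h0 (by linarith), abs_of_neg h, abs_of_nonneg (Real.rpow_nonneg (by linarith) _)]
  · subst h; rw [rp_zero, abs_zero, Real.zero_rpow h0.ne']
  · rw [rp_pos h0 h, abs_of_pos h, abs_of_nonneg (Real.rpow_nonneg (by linarith) _)]
lemma rp_cont {a : ℝ} (h0 : 0 < a) : Continuous (rp a) := by
  unfold rp
  refine Continuous.sub ?_ ?_
  · exact Continuous.rpow_const (by fun_prop) (fun _ => Or.inr h0.le)
  · exact Continuous.rpow_const (by fun_prop) (fun _ => Or.inr h0.le)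
lemma oef_cont {a : ℝ} (h0 : 0 < a) : Continuous (oef a) := by
  unfold oef
  have := rp_cont h0
  split_ifs
  · exact continuous_const.mul Real.continuous_mul_log
  · fun_prop
lemma Psi_cont {a : ℝ} (h0 : 0 < a) (b : ℝ) : Continuous (Psi a b) := by
  unfold Psi
  have := oef_cont h0
  have : Continuous (fun t : ℝ => |t| ^ a) := Continuous.rpow_const (by fun_prop) (fun _ => Or.inr h0.le)
  fun_prop
lemma oef_neg (a t : ℝ) : oef a (-t) = - oef a t := by
  unfold oef
  rw [rp_neg, Real.log_neg_eq_log]; split_ifs <;> ring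
lemma Psi_neg (a b t : ℝ) : Psi a b (-t) = conj (Psi a b t) := by
  rw [Psi, Psi, conj_ri, oef_neg, abs_neg]; push_cast; ring
lemma Psi_pos {a b t : ℝ} (h0 : 0 < a) (ht : 0 < t) : Psi a b t = Ps a b t := by
  rw [Psi, Ps_real ht, abs_of_pos ht, oef, efr, rp_pos h0 ht]
lemma Psi_zero {a : ℝ} (h0 : 0 < a) (b : ℝ) : Psi a b 0 = 0 := by
  simp [Psi, oef, rp_zero, Real.zero_rpow h0.ne']
lemma norm_exp_Psi (a b t : ℝ) : ‖exp (Psi a b t)‖ = Real.exp (-(|t| ^ a)) := by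
  rw [norm_exp]; simp [Psi]

lemma int_exp_rpow {a : ℝ} (h0 : 0 < a) : Integrable (fun t : ℝ => Real.exp (-(|t| ^ a))) := by
  obtain ⟨K, hK, hb⟩ := exp_poly_bd h0
  have hc : Continuous (fun t : ℝ => |t| ^ a) := Continuous.rpow_const (by fun_prop) (fun _ => Or.inr h0.le)
  refine Integrable.mono' (integrable_inv_one_add_sq.const_mul K) ((Real.continuous_exp.comp hc.neg).aestronglyMeasurable) (ae_of_all _ fun t => ?_)
  rw [Real.norm_eq_abs, Real.abs_exp, ← div_eq_mul_inv, le_div_iff₀ (by positivity)]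
  refine le_trans ?_ (hb |t| (abs_nonneg t))
  have h1 : 0 ≤ |t| ^ a := by positivity
  have h2 : 1 + t ^ 2 ≤ (1 + |t|) ^ 9 := by
    have : (1 + |t|) ^ 2 ≤ (1 + |t|) ^ 9 := pow_le_pow_right₀ (by linarith [abs_nonneg t]) (by norm_num)
    nlinarith [abs_nonneg t, sq_abs t]
  gcongr
  linarith

lemma norm_exp_I (x y : ℝ) : ‖exp (-I * (x:ℂ) * (y:ℂ))‖ = 1 := by
  rw [norm_exp]; simp

lemma int_FPsi {a : ℝ} (h0 : 0 < a) (b x : ℝ) : Integrable (fun t : ℝ => exp (-I * (t:ℂ) * (x:ℂ)) * exp (Psi a b t)) := by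
  have := Psi_cont h0 b
  refine Integrable.mono' (int_exp_rpow h0) (by fun_prop) (ae_of_all _ fun t => ?_)
  rw [norm_mul, norm_exp_I, one_mul, norm_exp_Psi]

lemma fold {F : ℝ → ℂ} (hF : Integrable F) (h : ∀ t, F (-t) = conj (F t)) : ∫ t, F t = (2 * (∫ t in Set.Ioi 0, F t).re : ℝ) := by
  rw [← intervalIntegral.integral_Iic_add_Ioi (b := 0) hF.integrableOn hF.integrableOn]
  have : ∫ t in Set.Iic 0, F t = conj (∫ t in Set.Ioi 0, F t) := by
    rw [← integral_conj]
    have := integral_comp_neg_Ioi (0:ℝ) F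
    rw [neg_zero] at this
    rw [← this]
    simp only [h]
  rw [this, add_comm, add_conj]

lemma G_eq {a : ℝ} (h0 : 0 < a) (b x : ℝ) : ∫ t : ℝ, exp (-I * (t:ℂ) * (x:ℂ)) * exp (Psi a b t) = (2 * G 0 a b x : ℝ) := by
  rw [fold (int_FPsi h0 b x)]
  · congr 3
    unfold Jk
    apply setIntegral_congr_fun measurableSet_Ioi
    intro t ht
    simp only [Psi_pos h0 ht]; simp
  · intro t
    rw [map_mul, ← exp_conj, ← exp_conj, Psi_neg]; simp

lemma G_cont {a b : ℝ} (h0 : 0 < a) (h2 : a < 2) (hb : |b| ≤ 1) {k : ℕ} (hk : k ≤ 1) : Continuous (G k a b) :=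
  continuous_iff_continuousAt.2 fun y => (G_dy h0 h2 hb hk y).continuousAt

lemma G_int {a b : ℝ} (h0 : 0 < a) (h2 : a < 2) (hb : |b| ≤ 1) : Integrable (G 0 a b) := by
  have hc := G_cont h0 h2 hb (k := 0) (by norm_num)
  obtain ⟨C, hC, ht⟩ := G_tail h0 h2 hb
  obtain ⟨B, hB⟩ := (isCompact_Icc (a := (-2:ℝ)) (b := 2)).exists_bound_of_continuousOn hc.continuousOn
  have hB0 : 0 ≤ B := (norm_nonneg _).trans (hB 0 (by norm_num))
  have hi : Integrable (fun y : ℝ => (1 + ‖y‖) ^ (-(a + 1))) := integrable_one_add_norm (by simp; linarith)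
  refine Integrable.mono' (hi.const_mul (C * 2 ^ (a + 1) + B * 3 ^ (a + 1))) hc.aestronglyMeasurable (ae_of_all _ fun y => ?_)
  have hp : 0 ≤ (1 + ‖y‖) ^ (-(a + 1)) := by positivity
  simp only [Real.norm_eq_abs] at *
  rcases le_total 2 |y| with h | h
  · have := ht 0 (by norm_num) y h
    refine this.trans ?_
    have e : |y| ^ (-(a + 1 + ((0:ℕ):ℝ))) ≤ 2 ^ (a + 1) * (1 + |y|) ^ (-(a + 1)) := by
      rw [Nat.cast_zero, add_zero, Real.rpow_neg (by positivity), Real.rpow_neg (by positivity), ← div_eq_mul_inv,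
        le_div_iff₀ (by positivity), inv_mul_le_iff₀ (by positivity), mul_comm, ← Real.mul_rpow (by positivity) (by positivity)]
      gcongr; linarith
    calc _ ≤ C * (2 ^ (a + 1) * (1 + |y|) ^ (-(a + 1))) := by gcongr
      _ ≤ _ := by
        have : 0 ≤ B * 3 ^ (a + 1) * (1 + |y|) ^ (-(a + 1)) := by positivity
        nlinarith
  · have := hB y (abs_le.1 h)
    refine this.trans ?_
    have e : 1 ≤ 3 ^ (a + 1) * (1 + |y|) ^ (-(a + 1)) := by
      rw [Real.rpow_neg (by positivity), ← div_eq_mul_inv, le_div_iff₀ (by positivity), one_mul]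
      gcongr; linarith
    have : 0 ≤ C * 2 ^ (a + 1) * (1 + |y|) ^ (-(a + 1)) := by positivity
    nlinarith [mul_le_mul_of_nonneg_left e hB0]

/-- density -/
noncomputable def ff (a b x : ℝ) : ℝ := G 0 a b x / Real.pi

open FourierTransform in
lemma ff_inv {a b : ℝ} (h0 : 0 < a) (h2 : a < 2) (hb : |b| ≤ 1) (t : ℝ) :
    ∫ x : ℝ, exp (I * (t:ℂ) * (x:ℂ)) * (ff a b x : ℂ) = exp (Psi a b t) := by
  have hpi := Real.pi_pos
  set P2 : ℝ → ℂ := fun v => exp (Psi a b (2 * Real.pi * v)) with hP2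
  have hPc := Psi_cont h0 b
  have hc : Continuous P2 := by fun_prop
  have hi0 : Integrable (fun t : ℝ => exp (Psi a b t)) := by
    simpa using int_FPsi h0 b 0
  have hi : Integrable P2 := hi0.comp_mul_left' (by positivity : (2 * Real.pi) ≠ 0)
  have hF : 𝓕 P2 = fun x => (ff a b x : ℂ) := by
    ext x
    rw [Real.fourier_real_eq_integral_exp_smul]
    have := MeasureTheory.Measure.integral_comp_mul_left (a := 2 * Real.pi) (g := fun t : ℝ => exp (-I * (t:ℂ) * (x:ℂ)) * exp (Psi a b t))
    rw [G_eq h0] at this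
    calc _ = ∫ v : ℝ, exp (-I * ((2 * Real.pi * v : ℝ):ℂ) * (x:ℂ)) * exp (Psi a b (2 * Real.pi * v)) := by
          congr 1; ext v; rw [smul_eq_mul]; congr 2; push_cast; ring
      _ = _ := by
        rw [this, abs_of_pos (by positivity), ff]
        rw [real_smul]; push_cast; field_simp
  have hFi : Integrable (𝓕 P2) := by
    rw [hF]; exact ((G_int h0 h2 hb).div_const _).ofReal
  have := congrFun (hc.fourierInv_fourier_eq hi hFi) (t / (2 * Real.pi))
  rw [hF, Real.fourierInv_eq'] at this
  rw [hP2] at this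
  simp only [mul_div_cancel₀ t (by positivity : (2 * Real.pi) ≠ 0)] at this
  rw [← this]
  congr 1; ext x
  rw [smul_eq_mul]; congr 2
  simp only [RCLike.inner_apply, conj_trivial]
  push_cast
  field_simp

end Stab

open MeasureTheory Filter

namespace Stab
open Complex Topology ComplexConjugate

lemma conv_pow (P : Measure ℝ) [IsProbabilityMeasure P] (n : ℕ) :
    ∃ Q : Measure ℝ, IsProbabilityMeasure Q ∧ ∀ t, charFun Q t = (charFun P t) ^ n := by
  induction n with
  | zero => exact ⟨Measure.dirac 0, inferInstance, fun t => by simp⟩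
  | succ n ih =>
    obtain ⟨Q, hQ, h⟩ := ih
    exact ⟨Measure.conv Q P, inferInstance, fun t => by rw [charFun_conv, h, pow_succ]⟩

lemma gauss_pos (Q : Measure ℝ) [IsProbabilityMeasure Q] (c x : ℝ) {d : ℝ} (hd : 0 < d) :
    0 ≤ (∫ t : ℝ, exp (-I * (t:ℂ) * (x:ℂ)) * ((Real.exp (-d * t ^ 2) : ℝ) : ℂ) * charFun Q (c * t)).re := by
  have h1 : ∀ t : ℝ, exp (-I * (t:ℂ) * (x:ℂ)) * ((Real.exp (-d * t ^ 2) : ℝ) : ℂ) * charFun Q (c * t)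
      = ∫ y, exp (-I * (t:ℂ) * (x:ℂ)) * ((Real.exp (-d * t ^ 2) : ℝ) : ℂ) * exp ((c * t : ℝ) * y * I) ∂Q := by
    intro t
    rw [charFun_apply_real, integral_const_mul]
  simp_rw [h1]
  have hgi := integrable_exp_neg_mul_sq hd
  rw [integral_integral_swap]
  · have h2 : ∀ y : ℝ, (∫ t : ℝ, exp (-I * (t:ℂ) * (x:ℂ)) * ((Real.exp (-d * t ^ 2) : ℝ) : ℂ) * exp ((c * t : ℝ) * y * I))
        = ((Real.sqrt (Real.pi / d) * Real.exp (-(c * y - x) ^ 2 / (4 * d)) : ℝ) : ℂ) := by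
      intro y
      have := fourierIntegral_gaussian (b := (d:ℂ)) (by simpa using hd) ((c * y - x : ℝ) : ℂ)
      calc _ = ∫ t : ℝ, exp (I * ((c * y - x : ℝ) : ℂ) * t) * exp (-d * t ^ 2) := by
            congr 1; ext t
            push_cast
            rw [mul_right_comm, ← exp_add]; congr 2; ring
        _ = _ := by
            rw [this]
            rw [ofReal_mul, Real.sqrt_eq_rpow, ofReal_cpow (by positivity)]
            push_cast; norm_num
    simp_rw [h2]
    rw [integral_complex_ofReal, ofReal_re]
    exact integral_nonneg fun y => by positivity
  · have hg : Integrable (fun p : ℝ × ℝ => Real.exp (-d * p.1 ^ 2)) (volume.prod Q) := by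
      have := hgi.mul_prod (integrable_const (1:ℝ) (μ := Q))
      simpa using this
    refine Integrable.mono' hg ?_ (ae_of_all _ fun p => ?_)
    · apply Continuous.aestronglyMeasurable
      unfold Function.uncurry
      fun_prop
    · simp only [Function.uncurry]
      rw [norm_mul, norm_mul, norm_exp_I, one_mul]
      have : ‖exp (((c * p.1 : ℝ):ℂ) * (p.2:ℂ) * I)‖ = 1 := by rw [norm_exp]; simp
      rw [this, mul_one, norm_real, Real.norm_eq_abs, Real.abs_exp]

lemma pos_lim (P : Measure ℝ) [IsProbabilityMeasure P] (H : ℝ → ℂ) (hHc : Continuous H)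
    (hHi : Integrable (fun t => exp (H t))) (c : ℕ → ℝ)
    (hl : ∀ t : ℝ, Tendsto (fun n : ℕ => (n:ℂ) * (charFun P (c n * t) - 1)) atTop (𝓝 (H t))) (x : ℝ) :
    0 ≤ (∫ t : ℝ, exp (-I * (t:ℂ) * (x:ℂ)) * exp (H t)).re := by
  have key : ∀ d : ℝ, 0 < d → 0 ≤ (∫ t : ℝ, exp (-I * (t:ℂ) * (x:ℂ)) * ((Real.exp (-d * t ^ 2) : ℝ) : ℂ) * exp (H t)).re := by
    intro d hd
    have T : Tendsto (fun n : ℕ => ∫ t : ℝ, exp (-I * (t:ℂ) * (x:ℂ)) * ((Real.exp (-d * t ^ 2) : ℝ) : ℂ) * (charFun P (c n * t)) ^ n)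
        atTop (𝓝 (∫ t : ℝ, exp (-I * (t:ℂ) * (x:ℂ)) * ((Real.exp (-d * t ^ 2) : ℝ) : ℂ) * exp (H t))) := by
      refine tendsto_integral_of_dominated_convergence (fun t => Real.exp (-d * t ^ 2)) (fun n => ?_) (integrable_exp_neg_mul_sq hd) (fun n => ae_of_all _ fun t => ?_) (ae_of_all _ fun t => ?_)
      · have : Measurable (charFun P) := measurable_charFun
        fun_prop
      · rw [norm_mul, norm_mul, norm_exp_I, one_mul, norm_real, Real.norm_eq_abs, Real.abs_exp, norm_pow]
        exact mul_le_of_le_one_right (Real.exp_pos _).le (pow_le_one₀ (norm_nonneg _) (norm_charFun_le_one _))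
      · refine Tendsto.mul tendsto_const_nhds ?_
        have := tendsto_one_add_pow_exp_of_tendsto (hl t)
        simpa using this
    have T2 := (continuous_re.tendsto _).comp T
    refine ge_of_tendsto' T2 fun n => ?_
    obtain ⟨Q, hQ, h⟩ := conv_pow P n
    have := gauss_pos Q (c n) x hd
    simpa only [h, Function.comp] using this
  have T : Tendsto (fun n : ℕ => ∫ t : ℝ, exp (-I * (t:ℂ) * (x:ℂ)) * ((Real.exp (-(1 / ((n:ℝ) + 1)) * t ^ 2) : ℝ) : ℂ) * exp (H t))
      atTop (𝓝 (∫ t : ℝ, exp (-I * (t:ℂ) * (x:ℂ)) * exp (H t))) := by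
    refine tendsto_integral_of_dominated_convergence (fun t => ‖exp (H t)‖) (fun n => ?_) hHi.norm (fun n => ae_of_all _ fun t => ?_) (ae_of_all _ fun t => ?_)
    · apply Continuous.aestronglyMeasurable; fun_prop
    · rw [norm_mul, norm_mul, norm_exp_I, one_mul, norm_real, Real.norm_eq_abs, Real.abs_exp]
      apply mul_le_of_le_one_left (norm_nonneg _)
      rw [Real.exp_le_one_iff]
      have : 0 ≤ 1 / ((n:ℝ) + 1) * t ^ 2 := by positivity
      linarith
    · refine Tendsto.mul ?_ tendsto_const_nhds
      have h1 : Tendsto (fun n : ℕ => Real.exp (-(1 / ((n:ℝ) + 1)) * t ^ 2)) atTop (𝓝 (Real.exp (-0 * t ^ 2))) :=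
        (Real.continuous_exp.tendsto _).comp ((tendsto_one_div_add_atTop_nhds_zero_nat.neg).mul_const _)
      have h2 := (continuous_ofReal.tendsto _).comp h1
      have := h2.const_mul (exp (-I * (t:ℂ) * (x:ℂ)))
      simpa using this
  have T2 := (continuous_re.tendsto _).comp T
  exact ge_of_tendsto' T2 fun n => key _ (by positivity)

end Stab

open MeasureTheory Filter

namespace Stab
open Complex Topology ComplexConjugate

lemma exp_I_taylor (u : ℝ) (h : |u| ≤ 1) : ‖exp (u * I) - 1 - u * I‖ ≤ u ^ 2 := by
  have := norm_exp_sub_one_sub_id_le (x := (u:ℂ) * I) (by simpa using h)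
  simpa using this

/-- measure with a given density, recentered -/
lemma mk_meas (p : ℝ → ℝ) (hp : ∀ x, 0 ≤ p x) (hc : Continuous p) (hi : Integrable p) (h1 : ∫ x, p x = 1) (B : ℝ) :
    ∃ P : Measure ℝ, IsProbabilityMeasure P ∧ ∀ s : ℝ, charFun P s = ∫ x : ℝ, exp ((s * (x - B) : ℝ) * I) * (p x : ℂ) := by
  set P0 : Measure ℝ := volume.withDensity (fun x => ENNReal.ofReal (p x)) with hP0
  have hpr : IsProbabilityMeasure P0 := by
    constructor
    rw [hP0, withDensity_apply _ MeasurableSet.univ, Measure.restrict_univ, ← ofReal_integral_eq_lintegral_ofReal hi (ae_of_all _ hp), h1, ENNReal.ofReal_one]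
  have hm : Measurable (fun x : ℝ => x - B) := by fun_prop
  refine ⟨P0.map (fun x => x - B), Measure.isProbabilityMeasure_map hm.aemeasurable, fun s => ?_⟩
  rw [charFun_apply_real, integral_map hm.aemeasurable (by apply Continuous.aestronglyMeasurable; fun_prop), hP0,
    integral_withDensity_eq_integral_toReal_smul (by fun_prop) (ae_of_all _ fun x => ENNReal.ofReal_lt_top)]
  congr 1; ext x
  rw [ENNReal.toReal_ofReal (hp x), real_smul, mul_comm]
  push_cast; rfl

/-- homogeneous exponent -/
noncomputable def Ph (a b t : ℝ) : ℂ := ((-(|t| ^ a) : ℝ) : ℂ) + ((b * Real.tan (Real.pi * a / 2) * rp a t : ℝ):ℂ) * I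

lemma Psi_Ph {a : ℝ} (h1 : a ≠ 1) (b t : ℝ) : Psi a b t = Ph a b t - ((b * Real.tan (Real.pi * a / 2) * t : ℝ) : ℂ) * I := by
  rw [Psi, Ph, oef, if_neg h1]; push_cast; ring

lemma Ph_mul {a l : ℝ} (hl : 0 < l) (b t : ℝ) : Ph a b (l * t) = ((l ^ a : ℝ):ℂ) * Ph a b t := by
  rw [Ph, Ph, rp_mul hl, abs_mul, abs_of_pos hl, Real.mul_rpow hl.le (abs_nonneg _)]; push_cast; ring

lemma Ph_norm {a b : ℝ} (h0 : 0 < a) (hb : |b| ≤ 1) (t : ℝ) : ‖Ph a b t‖ ≤ (1 + |Real.tan (Real.pi * a / 2)|) * |t| ^ a := by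
  have h := abs_rp h0 t
  have hh : 0 ≤ |t| ^ a := by positivity
  calc _ ≤ _ := norm_add_le _ _
    _ = |t| ^ a + |b| * |Real.tan (Real.pi * a / 2)| * |t| ^ a := by
      rw [norm_mul, norm_I, mul_one, norm_real, norm_real, Real.norm_eq_abs, Real.norm_eq_abs, abs_neg, abs_of_nonneg hh, abs_mul, abs_mul, h]
    _ ≤ |t| ^ a + 1 * |Real.tan (Real.pi * a / 2)| * |t| ^ a := by gcongr
    _ = _ := by ring

lemma exists_P {a b : ℝ} (h0 : 0 < a) (h2 : a < 2) (h1 : a ≠ 1) (hb : |b| < 1) :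
    ∃ P : Measure ℝ, IsProbabilityMeasure P ∧ ∃ κ > 0, ∃ K : ℝ, ∃ η > 0, ∀ s : ℝ, |s| ≤ η →
      ‖charFun P s - 1 - (κ:ℝ) * Ph a b s‖ ≤ K * (|s| ^ (2 * a) + |s| ^ (2:ℝ)) := by
  have hff : Continuous (ff a b) := (G_cont h0 h2 hb.le (by norm_num)).div_const _
  have hffi : Integrable (ff a b) := (G_int h0 h2 hb.le).div_const _
  obtain ⟨c, hc, M, hM, hlow⟩ := G_lower h0 h2 hb
  set fm : ℝ → ℝ := fun x => max (-(ff a b x)) 0 with hfm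
  have fm0 : ∀ x, 0 ≤ fm x := fun x => le_max_right _ _
  have fmc : Continuous fm := by fun_prop
  have fmz : ∀ x, M ≤ |x| → fm x = 0 := by
    intro x hx
    apply max_eq_right
    have : 0 ≤ ff a b x := div_nonneg (le_trans (by positivity) (hlow x hx)) Real.pi_pos.le
    linarith
  have fms : HasCompactSupport fm := by
    refine HasCompactSupport.of_support_subset_isCompact (isCompact_Icc (a := -M) (b := M)) ?_
    intro x hx
    have : |x| < M := by by_contra h; exact hx (fmz x (not_lt.1 h))
    exact ⟨(abs_lt.1 this).1.le, (abs_lt.1 this).2.le⟩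
  have fmi : Integrable fm := fmc.integrable_of_hasCompactSupport fms
  have xfmi : Integrable (fun x => x * fm x) := (continuous_id.mul fmc).integrable_of_hasCompactSupport fms.mul_left
  set ν := ∫ x, fm x with hν
  set m := ∫ x, x * fm x with hm
  have hν0 : 0 ≤ ν := integral_nonneg fm0
  set κ := 1 / (1 + ν) with hκ
  have hκ0 : 0 < κ := by positivity
  set τ := b * Real.tan (Real.pi * a / 2) with hτ
  set B := κ * (m - τ) with hB
  have hB1 : B * (1 + ν) = m - τ := by rw [hB, hκ]; field_simp
  have hκ1 : κ * (1 + ν) = 1 := by rw [hκ]; field_simp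
  have int1 : ∫ x, ff a b x = 1 := by
    have := ff_inv h0 h2 hb.le 0
    rw [Psi_zero h0] at this
    simp only [ofReal_zero, mul_zero, zero_mul, exp_zero, one_mul] at this
    rw [integral_complex_ofReal] at this
    exact_mod_cast this
  obtain ⟨P, hP, hchar⟩ := mk_meas (fun x => κ * (ff a b x + fm x))
    (fun x => by
      have : -(ff a b x) ≤ fm x := le_max_left _ _
      exact mul_nonneg hκ0.le (by linarith))
    (by fun_prop) ((hffi.add fmi).const_mul κ)
    (by rw [integral_const_mul, integral_add hffi fmi, int1, ← hν, hκ1]) B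
  have hexp : ∀ s x : ℝ, ‖exp ((s * (x - B) : ℝ) * I)‖ = 1 := fun s x => norm_exp_ofReal_mul_I _
  have hcf : ∀ s : ℝ, charFun P s = κ * (exp (Psi a b s - (s * B : ℝ) * I) + ∫ x : ℝ, exp ((s * (x - B) : ℝ) * I) * (fm x : ℂ)) := by
    intro s
    have e1 : ∫ x : ℝ, exp ((s * (x - B) : ℝ) * I) * (ff a b x : ℂ) = exp (Psi a b s - (s * B : ℝ) * I) := by
      rw [sub_eq_add_neg, exp_add, ← ff_inv h0 h2 hb.le s, ← integral_mul_const]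
      congr 1; ext x
      rw [mul_right_comm, ← exp_add]; congr 2; push_cast; ring
    have i1 : Integrable (fun x : ℝ => exp ((s * (x - B) : ℝ) * I) * (ff a b x : ℂ)) :=
      hffi.ofReal.bdd_mul (c := 1) (by apply Continuous.aestronglyMeasurable; fun_prop) (ae_of_all _ fun x => (hexp s x).le)
    have i2 : Integrable (fun x : ℝ => exp ((s * (x - B) : ℝ) * I) * (fm x : ℂ)) :=
      fmi.ofReal.bdd_mul (c := 1) (by apply Continuous.aestronglyMeasurable; fun_prop) (ae_of_all _ fun x => (hexp s x).le)
    rw [hchar, ← e1, ← integral_add i1 i2, ← integral_const_mul]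
    congr 1; ext x; push_cast; ring
  set T := 1 + |Real.tan (Real.pi * a / 2)| with hT
  have hT0 : 0 < T := by positivity
  -- smallness radius
  set L := M + |B| with hL
  have hL0 : 0 < L := by positivity
  have hwb : ∀ s, ‖Ph a b s - ((τ + B) * s : ℝ) * I‖ ≤ T * |s| ^ a + |τ + B| * |s| := by
    intro s
    refine (norm_sub_le _ _).trans ?_
    rw [norm_mul, norm_I, mul_one, norm_real, Real.norm_eq_abs, abs_mul]
    gcongr
    exact Ph_norm h0 hb.le s
  have hsm : ∃ η > 0, ∀ s : ℝ, |s| ≤ η → T * |s| ^ a + |τ + B| * |s| ≤ 1 ∧ |s| * L ≤ 1 := by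
    have hct : Continuous (fun s : ℝ => T * |s| ^ a + |τ + B| * |s|) := by
      have : Continuous (fun t : ℝ => |t| ^ a) := Continuous.rpow_const (by fun_prop) (fun _ => Or.inr h0.le)
      fun_prop
    have hct2 : Continuous (fun s : ℝ => |s| * L) := by fun_prop
    have e1 : ∀ᶠ s in 𝓝 (0:ℝ), T * |s| ^ a + |τ + B| * |s| < 1 :=
      hct.continuousAt.eventually_lt continuousAt_const (by simp [Real.zero_rpow h0.ne'])
    have e2 : ∀ᶠ s in 𝓝 (0:ℝ), |s| * L < 1 :=
      hct2.continuousAt.eventually_lt continuousAt_const (by simp)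
    obtain ⟨ε, hε, h⟩ := Metric.eventually_nhds_iff.1 (e1.and e2)
    refine ⟨ε / 2, by positivity, fun s hs => ?_⟩
    have := h (y := s) (by rw [Real.dist_eq, sub_zero]; linarith)
    exact ⟨this.1.le, this.2.le⟩
  obtain ⟨η, hη, hs1⟩ := hsm
  refine ⟨P, hP, κ, hκ0, κ * (2 * T ^ 2 + 2 * |τ + B| ^ 2 + L ^ 2 * ν), η, hη, fun s hs => ?_⟩
  obtain ⟨hs2, hs3⟩ := hs1 s hs
  set w := Ph a b s - ((τ + B) * s : ℝ) * I with hw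
  have ew : Psi a b s - (s * B : ℝ) * I = w := by
    rw [Psi_Ph h1, ← hτ, hw]; push_cast; ring
  -- the fm part
  have i2 : Integrable (fun x : ℝ => exp ((s * (x - B) : ℝ) * I) * (fm x : ℂ)) :=
    fmi.ofReal.bdd_mul (c := 1) (by apply Continuous.aestronglyMeasurable; fun_prop) (ae_of_all _ fun x => (hexp s x).le)
  have i3 : Integrable (fun x : ℝ => ((1 - s * B * I : ℂ) * fm x + s * I * ((x * fm x : ℝ):ℂ))) :=
    (fmi.ofReal.const_mul _).add (xfmi.ofReal.const_mul _)
  have e3 : ∫ x : ℝ, ((1 - s * B * I : ℂ) * fm x + s * I * ((x * fm x : ℝ):ℂ)) = (1 - s * B * I) * ν + s * I * m := by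
    rw [integral_add (fmi.ofReal.const_mul _) (xfmi.ofReal.const_mul _), integral_const_mul, integral_const_mul,
      integral_complex_ofReal, integral_complex_ofReal]
  have hE : ‖(∫ x : ℝ, exp ((s * (x - B) : ℝ) * I) * (fm x : ℂ)) - ((1 - s * B * I) * ν + s * I * m)‖ ≤ |s| ^ 2 * L ^ 2 * ν := by
    rw [← e3, ← integral_sub i2 i3, hν, ← integral_const_mul]
    refine norm_integral_le_of_norm_le (fmi.const_mul _) (ae_of_all _ fun x => ?_)
    have : exp ((s * (x - B) : ℝ) * I) * (fm x : ℂ) - ((1 - s * B * I : ℂ) * fm x + s * I * ((x * fm x : ℝ):ℂ))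
      = (exp ((s * (x - B) : ℝ) * I) - 1 - (s * (x - B) : ℝ) * I) * fm x := by push_cast; ring
    rw [this, norm_mul, norm_real, Real.norm_eq_abs, abs_of_nonneg (fm0 x)]
    by_cases hx : M ≤ |x|
    · rw [fmz x hx]; simp
    · push Not at hx
      have hxb : |x - B| ≤ L := (abs_sub _ _).trans (by rw [hL]; linarith)
      have hu : abs (s * (x - B)) ≤ |s| * L := by rw [abs_mul]; gcongr
      refine mul_le_mul_of_nonneg_right ((exp_I_taylor _ (hu.trans hs3)).trans ?_) (fm0 x)
      rw [← sq_abs, ← mul_pow]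
      gcongr
  have hW : ‖exp w - 1 - w‖ ≤ 2 * T ^ 2 * |s| ^ (2 * a) + 2 * |τ + B| ^ 2 * |s| ^ 2 := by
    refine (norm_exp_sub_one_sub_id_le ((hwb s).trans hs2)).trans ?_
    have e : |s| ^ (2 * a) = (|s| ^ a) ^ 2 := by rw [← Real.rpow_mul_natCast (abs_nonneg s)]; congr 1; push_cast; ring
    rw [e]
    have := hwb s
    calc _ ≤ (T * |s| ^ a + |τ + B| * |s|) ^ 2 := by gcongr
      _ ≤ _ := by nlinarith [sq_nonneg (T * |s| ^ a - |τ + B| * |s|)]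
  have hfin : charFun P s - 1 - (κ:ℝ) * Ph a b s = κ * ((exp w - 1 - w) +
      ((∫ x : ℝ, exp ((s * (x - B) : ℝ) * I) * (fm x : ℂ)) - ((1 - s * B * I) * ν + s * I * m))) := by
    rw [hcf, ew]
    have c1 : (κ:ℂ) * (1 + ν) = 1 := by exact_mod_cast hκ1
    have c2 : (B:ℂ) * (1 + ν) = m - τ := by exact_mod_cast hB1
    rw [hw]; push_cast
    linear_combination c1 - κ * s * I * c2
  rw [hfin, norm_mul, norm_real, Real.norm_eq_abs, abs_of_pos hκ0, mul_assoc κ]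
  refine mul_le_mul_of_nonneg_left ?_ hκ0.le
  refine (norm_add_le _ _).trans ((add_le_add hW hE).trans ?_)
  rw [Real.rpow_two]
  have q1 : 0 ≤ |s| ^ (2 * a) := by positivity
  have : 0 ≤ (2 * |τ + B| ^ 2 + L ^ 2 * ν) * |s| ^ (2 * a) + 2 * T ^ 2 * |s| ^ 2 := by positivity
  nlinarith

end Stab

open MeasureTheory Filter

namespace Stab
open Complex Topology ComplexConjugate

lemma G_nonneg' {a b : ℝ} (h0 : 0 < a) (h2 : a < 2) (h1 : a ≠ 1) (hb : |b| < 1) (y : ℝ) : 0 ≤ G 0 a b y := by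
  obtain ⟨P, hP, κ, hκ, K, η, hη, hs⟩ := exists_P h0 h2 h1 hb
  have hPc : Continuous (Ph a b) := by
    unfold Ph
    have := rp_cont h0
    have : Continuous (fun t : ℝ => |t| ^ a) := Continuous.rpow_const (by fun_prop) (fun _ => Or.inr h0.le)
    fun_prop
  have hPi : Integrable (fun t => exp (Ph a b t)) := by
    refine Integrable.mono' (int_exp_rpow h0) (by fun_prop) (ae_of_all _ fun t => ?_)
    rw [norm_exp, Ph, add_re, ofReal_re, re_ofReal_mul, I_re, mul_zero, add_zero]
  have hu : Tendsto (fun n : ℕ => (n:ℝ) * κ) atTop atTop := tendsto_natCast_atTop_atTop.atTop_mul_const hκ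
  set c : ℕ → ℝ := fun n => ((n:ℝ) * κ) ^ (-(1 / a)) with hc
  have hc0 : Tendsto c atTop (𝓝 0) := (tendsto_rpow_neg_atTop (by positivity : 0 < 1 / a)).comp hu
  have hl : ∀ t : ℝ, Tendsto (fun n : ℕ => (n:ℂ) * (charFun P (c n * t) - 1)) atTop (𝓝 (Ph a b t)) := by
    intro t
    rw [tendsto_iff_norm_sub_tendsto_zero]
    have hlim : Tendsto (fun n : ℕ => K / κ * (|t| ^ (2 * a) * ((n:ℝ) * κ) ^ (-(1:ℝ)) + |t| ^ (2:ℝ) * ((n:ℝ) * κ) ^ (-(2 / a - 1)))) atTop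
        (𝓝 (K / κ * (|t| ^ (2 * a) * 0 + |t| ^ (2:ℝ) * 0))) := by
      have a1 := (tendsto_rpow_neg_atTop (by norm_num : (0:ℝ) < 1)).comp hu
      have a2 := (tendsto_rpow_neg_atTop (by rw [sub_pos, lt_div_iff₀ h0]; linarith : 0 < 2 / a - 1)).comp hu
      exact ((a1.const_mul _).add (a2.const_mul _)).const_mul _
    rw [mul_zero, mul_zero, add_zero, mul_zero] at hlim
    refine tendsto_of_tendsto_of_tendsto_of_le_of_le' tendsto_const_nhds hlim (Eventually.of_forall fun n => norm_nonneg _) ?_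
    have ev : ∀ᶠ n in atTop, abs (c n * t) < η := by
      have := (hc0.mul_const t).abs
      rw [zero_mul, abs_zero] at this
      exact this.eventually (gt_mem_nhds hη)
    filter_upwards [ev, eventually_gt_atTop 0] with n hn hn0
    have hn1 : (0:ℝ) < n := by exact_mod_cast hn0
    have hnk : 0 < (n:ℝ) * κ := by positivity
    have hcn : 0 < c n := by simp only [hc]; positivity
    have hca : (c n) ^ a = ((n:ℝ) * κ)⁻¹ := by
      simp only [hc]
      rw [← Real.rpow_mul hnk.le, ← Real.rpow_neg_one]; congr 1; field_simp
    have e : (n:ℂ) * (charFun P (c n * t) - 1) - Ph a b t = n * (charFun P (c n * t) - 1 - (κ:ℝ) * Ph a b (c n * t)) := by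
      rw [Ph_mul hcn, hca]
      have : (n:ℂ) ≠ 0 := by exact_mod_cast hn0.ne'
      have : (κ:ℂ) ≠ 0 := by exact_mod_cast hκ.ne'
      push_cast; field_simp
    rw [e, norm_mul]
    have := hs _ hn.le
    have hnn : ‖(n:ℂ)‖ = n := by simp
    rw [hnn]
    calc _ ≤ (n:ℝ) * (K * (abs (c n * t) ^ (2 * a) + abs (c n * t) ^ (2:ℝ))) := by gcongr
      _ = _ := by
        have q1 : (c n) ^ (2 * a) = ((n:ℝ) * κ) ^ (-(1:ℝ)) * ((n:ℝ) * κ)⁻¹ := by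
          simp only [hc]
          rw [← Real.rpow_mul hnk.le, ← Real.rpow_neg_one, ← Real.rpow_add hnk]; congr 1; field_simp; ring
        have q2 : (c n) ^ (2:ℝ) = ((n:ℝ) * κ) ^ (-(2 / a - 1)) * ((n:ℝ) * κ)⁻¹ := by
          simp only [hc]
          rw [← Real.rpow_mul hnk.le, ← Real.rpow_neg_one, ← Real.rpow_add hnk]; congr 1; field_simp; ring
        rw [abs_mul, abs_of_pos hcn, Real.mul_rpow hcn.le (abs_nonneg _), Real.mul_rpow hcn.le (abs_nonneg _), q1, q2]
        field_simp
  have := pos_lim P (Ph a b) hPc hPi c hl (y + b * Real.tan (Real.pi * a / 2))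
  have e : ∫ t : ℝ, exp (-I * (t:ℂ) * ((y + b * Real.tan (Real.pi * a / 2) : ℝ):ℂ)) * exp (Ph a b t)
      = ∫ t : ℝ, exp (-I * (t:ℂ) * (y:ℂ)) * exp (Psi a b t) := by
    congr 1; ext t
    rw [← exp_add, ← exp_add, Psi_Ph h1]; congr 1; push_cast; ring
  rw [e, G_eq h0, ofReal_re] at this
  linarith

lemma G_nonneg {a b : ℝ} (h0 : 0 < a) (h2 : a < 2) (hb : |b| < 1) (y : ℝ) : 0 ≤ G 0 a b y := by
  by_cases h1 : a = 1
  · have hc : ContinuousAt (fun s => G 0 s b y) a := (G_da h0 h2 hb.le (by norm_num) y).continuousAt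
    have hT : Tendsto (fun s => G 0 s b y) (𝓝[≠] a) (𝓝 (G 0 a b y)) := hc.tendsto.mono_left nhdsWithin_le_nhds
    refine ge_of_tendsto hT ?_
    filter_upwards [self_mem_nhdsWithin, mem_nhdsWithin_of_mem_nhds (Ioo_mem_nhds h0 h2)] with s hs hs2
    exact G_nonneg' hs2.1 hs2.2 (by rw [h1] at hs; exact hs) hb y
  · exact G_nonneg' h0 h2 h1 hb y

lemma Psi_half {a : ℝ} (h0 : 0 < a) (b : ℝ) : ∃ l > 0, ∃ d : ℝ, ∀ t, Psi a b t = 2 * Psi a b (l * t) - (d * t : ℝ) * I := by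
  by_cases h1 : a = 1
  · refine ⟨1 / 2, by norm_num, 2 * b / Real.pi * Real.log 2, fun t => ?_⟩
    subst h1
    rcases eq_or_ne t 0 with rfl | ht
    · simp [Psi_zero]
    · have : Real.log (1 / 2 * t) = Real.log t - Real.log 2 := by
        rw [Real.log_mul (by norm_num) ht, one_div, Real.log_inv]; ring
      rw [Psi, Psi, oef, oef, if_pos rfl, if_pos rfl, this, Real.rpow_one, Real.rpow_one, abs_mul, abs_of_pos (by norm_num : (0:ℝ) < 1 / 2)]
      push_cast; ring
  · refine ⟨2 ^ (-(1 / a)), by positivity, b * Real.tan (Real.pi * a / 2) * (1 - 2 * 2 ^ (-(1 / a))), fun t => ?_⟩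
    have e : ((2:ℝ) ^ (-(1 / a))) ^ a = 1 / 2 := by
      rw [← Real.rpow_mul (by norm_num)]
      have : -(1 / a) * a = -1 := by field_simp
      rw [this, Real.rpow_neg_one]; norm_num
    rw [Psi_Ph h1, Psi_Ph h1, Ph_mul (by positivity), e]
    push_cast; ring

lemma G_pos {a b : ℝ} (h0 : 0 < a) (h2 : a < 2) (hb : |b| < 1) (x : ℝ) : 0 < G 0 a b x := by
  obtain ⟨l, hl, d, hd⟩ := Psi_half h0 b
  have hpi := Real.pi_pos
  have hGc := G_cont h0 h2 hb.le (k := 0) (by norm_num)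
  have hff : Continuous (ff a b) := hGc.div_const _
  have hffi : Integrable (ff a b) := (G_int h0 h2 hb.le).div_const _
  have hPc := Psi_cont h0 b
  set x' := (x + d) / l with hx'
  have hbd : ∀ z, |2 * G 0 a b z| ≤ ∫ t : ℝ, Real.exp (-(|t| ^ a)) := by
    intro z
    have := norm_integral_le_of_norm_le (f := fun t : ℝ => exp (-I * (t:ℂ) * (z:ℂ)) * exp (Psi a b t)) (int_exp_rpow h0)
      (ae_of_all _ fun t => by rw [norm_mul, norm_exp_I, one_mul, norm_exp_Psi])
    rwa [G_eq h0, norm_real, Real.norm_eq_abs] at this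
  have hconv : ((2 * G 0 a b x : ℝ) : ℂ) = |l⁻¹| • ∫ z : ℝ, ((ff a b z * (2 * G 0 a b (x' - z)) : ℝ) : ℂ) := by
    have s1 := Measure.integral_comp_mul_left (g := fun s : ℝ => exp (-I * (s:ℂ) * (x':ℂ)) * exp (Psi a b s) * exp (Psi a b s)) (a := l)
    have s2 : ∫ s : ℝ, exp (-I * (s:ℂ) * (x':ℂ)) * exp (Psi a b s) * exp (Psi a b s) = ∫ z : ℝ, ((ff a b z * (2 * G 0 a b (x' - z)) : ℝ) : ℂ) := by
      have t1 : ∀ s : ℝ, exp (-I * (s:ℂ) * (x':ℂ)) * exp (Psi a b s) * exp (Psi a b s) =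
          ∫ z : ℝ, exp (-I * (s:ℂ) * (x':ℂ)) * exp (Psi a b s) * (exp (I * (s:ℂ) * (z:ℂ)) * (ff a b z : ℂ)) := by
        intro s
        rw [integral_const_mul, ff_inv h0 h2 hb.le]
      simp_rw [t1]
      rw [integral_integral_swap]
      · congr 1; ext z
        rw [ofReal_mul, ← G_eq h0, ← integral_const_mul]
        congr 1; ext s
        have : exp (-I * (s:ℂ) * ((x' - z : ℝ):ℂ)) = exp (-I * (s:ℂ) * (x':ℂ)) * exp (I * (s:ℂ) * (z:ℂ)) := by
          rw [← exp_add]; congr 1; push_cast; ring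
        rw [this]; ring
      · have hg := (int_exp_rpow h0).mul_prod hffi.norm
        refine Integrable.mono' hg ?_ (ae_of_all _ fun p => ?_)
        · apply Continuous.aestronglyMeasurable
          unfold Function.uncurry
          fun_prop
        · simp only [Function.uncurry]
          have : ‖exp (I * (p.1:ℂ) * (p.2:ℂ))‖ = 1 := by rw [norm_exp]; simp
          rw [norm_mul, norm_mul, norm_mul, norm_exp_I, one_mul, norm_exp_Psi, this, one_mul, norm_real]
    rw [← s2, ← s1, ← G_eq h0]
    congr 1; ext t
    rw [← exp_add, ← exp_add, ← exp_add, hd t, hx']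
    congr 1
    have : (l:ℂ) ≠ 0 := by exact_mod_cast hl.ne'
    push_cast; field_simp; ring
  rw [integral_complex_ofReal, real_smul] at hconv
  have hconv2 : 2 * G 0 a b x = |l⁻¹| * ∫ z : ℝ, (ff a b z * (2 * G 0 a b (x' - z))) := by exact_mod_cast hconv
  have hnn : ∀ z, 0 ≤ ff a b z * (2 * G 0 a b (x' - z)) := fun z =>
    mul_nonneg (div_nonneg (G_nonneg h0 h2 hb _) hpi.le) (mul_nonneg (by norm_num) (G_nonneg h0 h2 hb _))
  have hcc : Continuous (fun z => ff a b z * (2 * G 0 a b (x' - z))) := by fun_prop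
  have hint : Integrable (fun z => ff a b z * (2 * G 0 a b (x' - z))) :=
    hffi.mul_bdd (c := ∫ t : ℝ, Real.exp (-(|t| ^ a))) (by apply Continuous.aestronglyMeasurable; fun_prop) (ae_of_all _ fun z => hbd _)
  rcases (G_nonneg h0 h2 hb x).lt_or_eq with h | h
  · exact h
  exfalso
  rw [← h, mul_zero] at hconv2
  have hz : ∫ z : ℝ, (ff a b z * (2 * G 0 a b (x' - z))) = 0 := by
    rcases mul_eq_zero.1 hconv2.symm with h | h
    · have : 0 < |l⁻¹| := by positivity
      linarith
    · exact h
  rw [integral_eq_zero_iff_of_nonneg hnn hint] at hz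
  have hz2 := (hcc.ae_eq_iff_eq volume continuous_zero).1 hz
  obtain ⟨c, hc, M, hM, hlow⟩ := G_lower h0 h2 hb
  have g1 : ∀ y, M ≤ |y| → 0 < G 0 a b y := fun y hy => by
    have : 0 < |y| := by linarith
    exact lt_of_lt_of_le (by positivity) (hlow y hy)
  have k1 : 0 < G 0 a b (M + |x'|) := g1 _ (by rw [abs_of_nonneg (by positivity)]; linarith [abs_nonneg x'])
  have k2 : 0 < G 0 a b (x' - (M + |x'|)) := g1 _ (by rw [abs_of_nonpos (by linarith [le_abs_self x'])]; linarith [le_abs_self x'])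
  have := congrFun hz2 (M + |x'|)
  simp only [ff, Pi.zero_apply] at this
  have : 0 < G 0 a b (M + |x'|) / Real.pi * (2 * G 0 a b (x' - (M + |x'|))) := by positivity
  linarith

end Stab

open MeasureTheory Filter

namespace Stab
open Complex Topology ComplexConjugate

lemma oef_sign {a : ℝ} (h0 : 0 < a) (h1 : a ≠ 1) {s : ℝ} (hs : 0 < s) (t : ℝ) :
    oef a (s * t) = |s * t| ^ a * (Real.sign t * Real.tan (Real.pi * a / 2) * (|s * t| ^ (1 - a) - 1)) := by
  have key : ∀ u : ℝ, 0 < u → u ^ a * u ^ (1 - a) = u := fun u hu => by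
    rw [← Real.rpow_add hu]; simp
  rw [oef, if_neg h1]
  rcases lt_trichotomy t 0 with h | h | h
  · have hu : 0 < -(s * t) := by nlinarith
    have e : rp a (s * t) = - (-(s * t)) ^ a := by
      have := rp_pos h0 hu
      rw [rp_neg] at this; linarith
    rw [e, Real.sign_of_neg h, abs_of_neg (by linarith)]
    linear_combination (-Real.tan (Real.pi * a / 2)) * -(key _ hu)
  · subst h; simp [rp_zero]
  · have hu : 0 < s * t := by positivity
    rw [rp_pos h0 hu, Real.sign_of_pos h, abs_of_pos hu]
    linear_combination (Real.tan (Real.pi * a / 2)) * -(key _ hu)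

lemma psiM_eq {θ : Fin 4 → ℝ} (hθ : θ ∈ ThetaInt) (t : ℝ) :
    psiM θ t = Psi (θ 2) (θ 3) (θ 1 * t) + I * ((θ 0 * t : ℝ) : ℂ) := by
  obtain ⟨hs, ⟨h0, h2⟩, hb⟩ := hθ
  unfold psiM
  split_ifs with h
  · rw [Psi, oef, if_pos h, h, Real.rpow_one, Real.log_abs]; push_cast; ring
  · rw [Psi, oef_sign h0 h hs]; push_cast; ring

lemma fM_eq {θ : Fin 4 → ℝ} (hθ : θ ∈ ThetaInt) (x : ℝ) :
    fM θ x = G 0 (θ 2) (θ 3) ((x - θ 0) / θ 1) / (Real.pi * θ 1) := by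
  have hh := hθ
  obtain ⟨hs, ⟨h0, h2⟩, hb⟩ := hθ
  unfold fM phiM
  have s1 := Measure.integral_comp_mul_left (g := fun s : ℝ => exp (-I * (s:ℂ) * (((x - θ 0) / θ 1 : ℝ):ℂ)) * exp (Psi (θ 2) (θ 3) s)) (a := θ 1)
  have e : ∫ t : ℝ, exp (-I * (t:ℂ) * (x:ℂ)) * exp (psiM θ t) = ∫ t : ℝ, exp (-I * ((θ 1 * t : ℝ):ℂ) * (((x - θ 0) / θ 1 : ℝ):ℂ)) * exp (Psi (θ 2) (θ 3) (θ 1 * t)) := by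
    congr 1; ext t
    rw [psiM_eq hh, ← exp_add, ← exp_add]; congr 1
    have : (θ 1:ℂ) ≠ 0 := by exact_mod_cast hs.ne'
    push_cast; field_simp; ring
  rw [e, s1, G_eq h0, real_smul, ← ofReal_mul, ofReal_re, abs_of_pos (by positivity)]
  have := Real.pi_pos
  field_simp

lemma theta_b {θ : Fin 4 → ℝ} (hθ : θ ∈ ThetaInt) : |θ 3| < 1 := abs_lt.2 hθ.2.2

lemma upd_mem {θ : Fin 4 → ℝ} (hθ : θ ∈ ThetaInt) (j : Fin 4) : ∀ᶠ s in 𝓝 (θ j), Function.update θ j s ∈ ThetaInt := by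
  have ho : IsOpen ThetaInt := by
    have : ThetaInt = {θ : Fin 4 → ℝ | 0 < θ 1} ∩ ((fun θ : Fin 4 → ℝ => θ 2) ⁻¹' Set.Ioo 0 2 ∩ (fun θ : Fin 4 → ℝ => θ 3) ⁻¹' Set.Ioo (-1) 1) := by
      ext θ; simp [ThetaInt]
    rw [this]
    exact (isOpen_lt continuous_const (continuous_apply 1)).inter ((isOpen_Ioo.preimage (continuous_apply 2)).inter (isOpen_Ioo.preimage (continuous_apply 3)))
  have hc : Continuous (fun s => Function.update θ j s) := continuous_const.update j continuous_id
  have := hc.continuousAt (x := θ j)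
  refine this.preimage_mem_nhds ?_
  rw [Function.update_eq_self]
  exact ho.mem_nhds hθ

/-- composition with the affine change of variable, in `x` -/
lemma hx {F : ℝ → ℝ} {F' m s x : ℝ} (h : HasDerivAt F F' ((x - m) / s)) : HasDerivAt (fun z => F ((z - m) / s)) (F' / s) x := by
  have h1 : HasDerivAt (fun z : ℝ => (z - m) / s) (1 / s) x := ((hasDerivAt_id x).sub_const m).div_const s
  refine (h.comp x h1).congr_deriv ?_
  ring
lemma hm {F : ℝ → ℝ} {F' m s x : ℝ} (h : HasDerivAt F F' ((x - m) / s)) : HasDerivAt (fun z => F ((x - z) / s)) (-F' / s) m := by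
  have h1 : HasDerivAt (fun z : ℝ => (x - z) / s) (-1 / s) m := ((hasDerivAt_id m).const_sub x).div_const s
  refine (h.comp m h1).congr_deriv ?_
  ring
lemma hsg {F : ℝ → ℝ} {F' m s x : ℝ} (hs : s ≠ 0) (h : HasDerivAt F F' ((x - m) / s)) : HasDerivAt (fun z => F ((x - m) / z)) (-F' * ((x - m) / s) / s) s := by
  have h1 : HasDerivAt (fun z : ℝ => (x - m) / z) ((x - m) * (-(s ^ 2)⁻¹)) s := by
    simpa only [div_eq_mul_inv] using (hasDerivAt_inv hs).const_mul (x - m)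
  refine (h.comp s h1).congr_deriv ?_
  field_simp

lemma fP0 {θ : Fin 4 → ℝ} (hθ : θ ∈ ThetaInt) (x : ℝ) : fP 0 θ x = G 1 (θ 2) (θ 3) ((x - θ 0) / θ 1) / (Real.pi * θ 1 ^ 2) := by
  have hpi := Real.pi_pos
  have hs := hθ.1
  have e : (fun s => fM (Function.update θ 0 s) x) =ᶠ[𝓝 (θ 0)] fun s => G 0 (θ 2) (θ 3) ((x - s) / θ 1) / (Real.pi * θ 1) := by
    filter_upwards [upd_mem hθ 0] with s h
    rw [fM_eq h]; simp
  rw [fP, e.deriv_eq, ((hm (G_dy hθ.2.1.1 hθ.2.1.2 (theta_b hθ).le (by norm_num : 0 ≤ 1) _)).div_const _).deriv]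
  field_simp
lemma fP1 {θ : Fin 4 → ℝ} (hθ : θ ∈ ThetaInt) (x : ℝ) : fP 1 θ x = (-G 0 (θ 2) (θ 3) ((x - θ 0) / θ 1) + (x - θ 0) / θ 1 * G 1 (θ 2) (θ 3) ((x - θ 0) / θ 1)) / (Real.pi * θ 1 ^ 2) := by
  have hpi := Real.pi_pos
  have hs := hθ.1
  have e : (fun s => fM (Function.update θ 1 s) x) =ᶠ[𝓝 (θ 1)] fun s => G 0 (θ 2) (θ 3) ((x - θ 0) / s) / (Real.pi * s) := by
    filter_upwards [upd_mem hθ 1] with s h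
    rw [fM_eq h]; simp
  have hd := (hsg hs.ne' (G_dy hθ.2.1.1 hθ.2.1.2 (theta_b hθ).le (by norm_num : 0 ≤ 1) ((x - θ 0) / θ 1))).fun_div
    ((hasDerivAt_id (θ 1)).const_mul Real.pi) (by simp only [id]; positivity)
  simp only [id] at hd
  rw [fP, e.deriv_eq, hd.deriv]
  field_simp
  ring
lemma fP2 {θ : Fin 4 → ℝ} (hθ : θ ∈ ThetaInt) (x : ℝ) : fP 2 θ x = GA 0 (θ 2) (θ 3) ((x - θ 0) / θ 1) / (Real.pi * θ 1) := by
  have e : (fun s => fM (Function.update θ 2 s) x) =ᶠ[𝓝 (θ 2)] fun s => G 0 s (θ 3) ((x - θ 0) / θ 1) / (Real.pi * θ 1) := by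
    filter_upwards [upd_mem hθ 2] with s h
    rw [fM_eq h]; simp
  rw [fP, e.deriv_eq, ((G_da hθ.2.1.1 hθ.2.1.2 (theta_b hθ).le (by norm_num : 0 ≤ 2) _).div_const _).deriv]
lemma fP3 {θ : Fin 4 → ℝ} (hθ : θ ∈ ThetaInt) (x : ℝ) : fP 3 θ x = GB 0 (θ 2) (θ 3) ((x - θ 0) / θ 1) / (Real.pi * θ 1) := by
  have e : (fun s => fM (Function.update θ 3 s) x) =ᶠ[𝓝 (θ 3)] fun s => G 0 (θ 2) s ((x - θ 0) / θ 1) / (Real.pi * θ 1) := by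
    filter_upwards [upd_mem hθ 3] with s h
    rw [fM_eq h]; simp
  rw [fP, e.deriv_eq, ((G_db hθ.2.1.1 hθ.2.1.2 (theta_b hθ) (by norm_num : 0 ≤ 2) _).div_const _).deriv]

end Stab

open MeasureTheory Filter

namespace Stab
open Complex Topology ComplexConjugate

lemma Gp {θ : Fin 4 → ℝ} (hθ : θ ∈ ThetaInt) (y : ℝ) : 0 < G 0 (θ 2) (θ 3) y := G_pos hθ.2.1.1 hθ.2.1.2 (theta_b hθ) y

lemma ell0 {θ : Fin 4 → ℝ} (hθ : θ ∈ ThetaInt) (x : ℝ) : ellP 0 θ x = G 1 (θ 2) (θ 3) ((x - θ 0) / θ 1) / (θ 1 * G 0 (θ 2) (θ 3) ((x - θ 0) / θ 1)) := by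
  have hpi := Real.pi_pos
  have hs := hθ.1
  have hg := Gp hθ ((x - θ 0) / θ 1)
  rw [ellP, fP0 hθ, fM_eq hθ]; field_simp
lemma ell1 {θ : Fin 4 → ℝ} (hθ : θ ∈ ThetaInt) (x : ℝ) : ellP 1 θ x =
    (-1 + (x - θ 0) / θ 1 * (G 1 (θ 2) (θ 3) ((x - θ 0) / θ 1) / G 0 (θ 2) (θ 3) ((x - θ 0) / θ 1))) / θ 1 := by
  have hpi := Real.pi_pos
  have hs := hθ.1
  have hg := Gp hθ ((x - θ 0) / θ 1)
  rw [ellP, fP1 hθ, fM_eq hθ]; field_simp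
lemma ell2 {θ : Fin 4 → ℝ} (hθ : θ ∈ ThetaInt) (x : ℝ) : ellP 2 θ x = GA 0 (θ 2) (θ 3) ((x - θ 0) / θ 1) / G 0 (θ 2) (θ 3) ((x - θ 0) / θ 1) := by
  have hpi := Real.pi_pos
  have hs := hθ.1
  have hg := Gp hθ ((x - θ 0) / θ 1)
  rw [ellP, fP2 hθ, fM_eq hθ]; field_simp
lemma ell3 {θ : Fin 4 → ℝ} (hθ : θ ∈ ThetaInt) (x : ℝ) : ellP 3 θ x = GB 0 (θ 2) (θ 3) ((x - θ 0) / θ 1) / G 0 (θ 2) (θ 3) ((x - θ 0) / θ 1) := by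
  have hpi := Real.pi_pos
  have hs := hθ.1
  have hg := Gp hθ ((x - θ 0) / θ 1)
  rw [ellP, fP3 hθ, fM_eq hθ]; field_simp

lemma pp0 {θ : Fin 4 → ℝ} (hθ : θ ∈ ThetaInt) (x y : ℝ) (hy : y = (x - θ 0) / θ 1) : ellPP 0 0 θ x =
    (G 2 (θ 2) (θ 3) y / G 0 (θ 2) (θ 3) y - (G 1 (θ 2) (θ 3) y / G 0 (θ 2) (θ 3) y) ^ 2) / θ 1 ^ 2 := by
  have hs := hθ.1
  have hg := Gp hθ y
  have d0 := G_dy hθ.2.1.1 hθ.2.1.2 (theta_b hθ).le (by norm_num : 0 ≤ 1) ((x - θ 0) / θ 1)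
  have d1 := G_dy hθ.2.1.1 hθ.2.1.2 (theta_b hθ).le (by norm_num : 1 ≤ 1) ((x - θ 0) / θ 1)
  have e : (fun s => ellP 0 (Function.update θ 0 s) x) =ᶠ[𝓝 (θ 0)] fun s => G 1 (θ 2) (θ 3) ((x - s) / θ 1) / (θ 1 * G 0 (θ 2) (θ 3) ((x - s) / θ 1)) := by
    filter_upwards [upd_mem hθ 0] with s h
    rw [ell0 h]; simp
  rw [ellPP, e.deriv_eq, ((hm d1).fun_div ((hm d0).const_mul (θ 1)) (mul_pos hs (Gp hθ _)).ne').deriv, ← hy]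
  norm_num
  field_simp
lemma px0 {θ : Fin 4 → ℝ} (hθ : θ ∈ ThetaInt) (x y : ℝ) (hy : y = (x - θ 0) / θ 1) : ellPX 0 θ x =
    -((G 2 (θ 2) (θ 3) y / G 0 (θ 2) (θ 3) y - (G 1 (θ 2) (θ 3) y / G 0 (θ 2) (θ 3) y) ^ 2) / θ 1 ^ 2) := by
  have hs := hθ.1
  have hg := Gp hθ y
  have d0 := G_dy hθ.2.1.1 hθ.2.1.2 (theta_b hθ).le (by norm_num : 0 ≤ 1) ((x - θ 0) / θ 1)
  have d1 := G_dy hθ.2.1.1 hθ.2.1.2 (theta_b hθ).le (by norm_num : 1 ≤ 1) ((x - θ 0) / θ 1)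
  have e : (fun x => ellP 0 θ x) = fun x => G 1 (θ 2) (θ 3) ((x - θ 0) / θ 1) / (θ 1 * G 0 (θ 2) (θ 3) ((x - θ 0) / θ 1)) := funext fun x => ell0 hθ x
  rw [ellPX, e, ((hx d1).fun_div ((hx d0).const_mul (θ 1)) (mul_pos hs (Gp hθ _)).ne').deriv, ← hy]
  norm_num
  field_simp
  ring

lemma pp1 {θ : Fin 4 → ℝ} (hθ : θ ∈ ThetaInt) (x y : ℝ) (hy : y = (x - θ 0) / θ 1) : ellPP 0 1 θ x =
    (y * (G 2 (θ 2) (θ 3) y / G 0 (θ 2) (θ 3) y) - G 1 (θ 2) (θ 3) y / G 0 (θ 2) (θ 3) y - y * (G 1 (θ 2) (θ 3) y / G 0 (θ 2) (θ 3) y) ^ 2) / θ 1 ^ 2 := by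
  have hs := hθ.1
  have hg := Gp hθ y
  have d0 := G_dy hθ.2.1.1 hθ.2.1.2 (theta_b hθ).le (by norm_num : 0 ≤ 1) ((x - θ 0) / θ 1)
  have d1 := G_dy hθ.2.1.1 hθ.2.1.2 (theta_b hθ).le (by norm_num : 1 ≤ 1) ((x - θ 0) / θ 1)
  have e : (fun s => ellP 0 (Function.update θ 1 s) x) =ᶠ[𝓝 (θ 1)] fun s => G 1 (θ 2) (θ 3) ((x - θ 0) / s) / (s * G 0 (θ 2) (θ 3) ((x - θ 0) / s)) := by
    filter_upwards [upd_mem hθ 1] with s h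
    rw [ell0 h]; simp
  have hd := (hsg hs.ne' d1).fun_div ((hasDerivAt_id (θ 1)).fun_mul (hsg hs.ne' d0)) (mul_pos hs (Gp hθ _)).ne'
  simp only [id] at hd
  rw [ellPP, e.deriv_eq, hd.deriv, ← hy]
  norm_num
  field_simp
  ring
lemma px1 {θ : Fin 4 → ℝ} (hθ : θ ∈ ThetaInt) (x y : ℝ) (hy : y = (x - θ 0) / θ 1) : ellPX 1 θ x =
    -((y * (G 2 (θ 2) (θ 3) y / G 0 (θ 2) (θ 3) y) - G 1 (θ 2) (θ 3) y / G 0 (θ 2) (θ 3) y - y * (G 1 (θ 2) (θ 3) y / G 0 (θ 2) (θ 3) y) ^ 2) / θ 1 ^ 2) := by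
  have hs := hθ.1
  have hg := Gp hθ y
  have d0 := G_dy hθ.2.1.1 hθ.2.1.2 (theta_b hθ).le (by norm_num : 0 ≤ 1) ((x - θ 0) / θ 1)
  have d1 := G_dy hθ.2.1.1 hθ.2.1.2 (theta_b hθ).le (by norm_num : 1 ≤ 1) ((x - θ 0) / θ 1)
  have hF := (((hasDerivAt_id ((x - θ 0) / θ 1)).fun_mul (d1.fun_div d0 (Gp hθ _).ne')).const_add (-1)).div_const (θ 1)
  have e : (fun x => ellP 1 θ x) = fun x => (fun y => (-1 + id y * (G 1 (θ 2) (θ 3) y / G 0 (θ 2) (θ 3) y)) / θ 1) ((x - θ 0) / θ 1) := funext fun x => ell1 hθ x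
  rw [ellPX, e, (hx hF).deriv, ← hy]
  simp only [id]
  norm_num
  field_simp
  ring

lemma pp2 {θ : Fin 4 → ℝ} (hθ : θ ∈ ThetaInt) (x y : ℝ) (hy : y = (x - θ 0) / θ 1) : ellPP 0 2 θ x =
    (GA 1 (θ 2) (θ 3) y / G 0 (θ 2) (θ 3) y - (G 1 (θ 2) (θ 3) y / G 0 (θ 2) (θ 3) y) * (GA 0 (θ 2) (θ 3) y / G 0 (θ 2) (θ 3) y)) / θ 1 := by
  have hs := hθ.1
  have hg := Gp hθ y
  have d0 := G_da hθ.2.1.1 hθ.2.1.2 (theta_b hθ).le (by norm_num : 0 ≤ 2) y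
  have d1 := G_da hθ.2.1.1 hθ.2.1.2 (theta_b hθ).le (by norm_num : 1 ≤ 2) y
  have e : (fun s => ellP 0 (Function.update θ 2 s) x) =ᶠ[𝓝 (θ 2)] fun s => G 1 s (θ 3) y / (θ 1 * G 0 s (θ 3) y) := by
    filter_upwards [upd_mem hθ 2] with s h
    rw [ell0 h, hy]; simp
  rw [ellPP, e.deriv_eq, (d1.fun_div (d0.const_mul (θ 1)) (mul_pos hs (Gp hθ _)).ne').deriv]
  field_simp
lemma px2 {θ : Fin 4 → ℝ} (hθ : θ ∈ ThetaInt) (x y : ℝ) (hy : y = (x - θ 0) / θ 1) : ellPX 2 θ x =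
    -((GA 1 (θ 2) (θ 3) y / G 0 (θ 2) (θ 3) y - (G 1 (θ 2) (θ 3) y / G 0 (θ 2) (θ 3) y) * (GA 0 (θ 2) (θ 3) y / G 0 (θ 2) (θ 3) y)) / θ 1) := by
  have hs := hθ.1
  have hg := Gp hθ y
  have d0 := G_dy hθ.2.1.1 hθ.2.1.2 (theta_b hθ).le (by norm_num : 0 ≤ 1) ((x - θ 0) / θ 1)
  have d1 := GA_dy hθ.2.1.1 hθ.2.1.2 (theta_b hθ).le (by norm_num : 0 ≤ 1) ((x - θ 0) / θ 1)
  have e : (fun x => ellP 2 θ x) = fun x => GA 0 (θ 2) (θ 3) ((x - θ 0) / θ 1) / G 0 (θ 2) (θ 3) ((x - θ 0) / θ 1) := funext fun x => ell2 hθ x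
  rw [ellPX, e, ((hx d1).fun_div (hx d0) (Gp hθ _).ne').deriv, ← hy]
  norm_num
  field_simp
  ring

lemma pp3 {θ : Fin 4 → ℝ} (hθ : θ ∈ ThetaInt) (x y : ℝ) (hy : y = (x - θ 0) / θ 1) : ellPP 0 3 θ x =
    (GB 1 (θ 2) (θ 3) y / G 0 (θ 2) (θ 3) y - (G 1 (θ 2) (θ 3) y / G 0 (θ 2) (θ 3) y) * (GB 0 (θ 2) (θ 3) y / G 0 (θ 2) (θ 3) y)) / θ 1 := by
  have hs := hθ.1
  have hg := Gp hθ y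
  have d0 := G_db hθ.2.1.1 hθ.2.1.2 (theta_b hθ) (by norm_num : 0 ≤ 2) y
  have d1 := G_db hθ.2.1.1 hθ.2.1.2 (theta_b hθ) (by norm_num : 1 ≤ 2) y
  have e : (fun s => ellP 0 (Function.update θ 3 s) x) =ᶠ[𝓝 (θ 3)] fun s => G 1 (θ 2) s y / (θ 1 * G 0 (θ 2) s y) := by
    filter_upwards [upd_mem hθ 3] with s h
    rw [ell0 h, hy]; simp
  rw [ellPP, e.deriv_eq, (d1.fun_div (d0.const_mul (θ 1)) (mul_pos hs (Gp hθ _)).ne').deriv]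
  field_simp
lemma px3 {θ : Fin 4 → ℝ} (hθ : θ ∈ ThetaInt) (x y : ℝ) (hy : y = (x - θ 0) / θ 1) : ellPX 3 θ x =
    -((GB 1 (θ 2) (θ 3) y / G 0 (θ 2) (θ 3) y - (G 1 (θ 2) (θ 3) y / G 0 (θ 2) (θ 3) y) * (GB 0 (θ 2) (θ 3) y / G 0 (θ 2) (θ 3) y)) / θ 1) := by
  have hs := hθ.1
  have hg := Gp hθ y
  have d0 := G_dy hθ.2.1.1 hθ.2.1.2 (theta_b hθ).le (by norm_num : 0 ≤ 1) ((x - θ 0) / θ 1)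
  have d1 := GB_dy hθ.2.1.1 hθ.2.1.2 (theta_b hθ).le (by norm_num : 0 ≤ 1) ((x - θ 0) / θ 1)
  have e : (fun x => ellP 3 θ x) = fun x => GB 0 (θ 2) (θ 3) ((x - θ 0) / θ 1) / G 0 (θ 2) (θ 3) ((x - θ 0) / θ 1) := funext fun x => ell3 hθ x
  rw [ellPX, e, ((hx d1).fun_div (hx d0) (Gp hθ _).ne').deriv, ← hy]
  norm_num
  field_simp
  ring

end Stab

open MeasureTheory Filter

namespace Stab
open Complex Topology ComplexConjugate

lemma ratio_bd {a c C E r N g : ℝ} (k : ℕ) (hc : 0 < c) (hr : 0 < r) (hE : 0 ≤ E) (hC : 0 ≤ C)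
    (hg : c * r ^ (-(a + 1)) ≤ g) (hN : |N| ≤ C * (E * r ^ (-(a + 1 + k)))) : |N / g| ≤ C / c * (E * r⁻¹ ^ k) := by
  have h1 : 0 < r ^ (-(a + 1)) := by positivity
  have hg0 : 0 < g := lt_of_lt_of_le (by positivity) hg
  have e : r ^ (-(a + 1 + k)) = r ^ (-(a + 1)) * r⁻¹ ^ k := by
    rw [neg_add, Real.rpow_add hr, Real.rpow_neg hr.le (k:ℝ), Real.rpow_natCast, inv_pow]
  rw [abs_div, abs_of_pos hg0, div_le_iff₀ hg0]
  refine hN.trans ?_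
  rw [e]
  calc _ = C / c * (E * r⁻¹ ^ k) * (c * r ^ (-(a + 1))) := by field_simp
    _ ≤ _ := by gcongr

lemma ratios {a b : ℝ} (h0 : 0 < a) (h2 : a < 2) (hb : |b| < 1) : ∃ K > 0, ∃ M ≥ 2, ∀ y : ℝ, M ≤ |y| →
    |G 1 a b y / G 0 a b y| ≤ K * |y|⁻¹ ∧ |G 2 a b y / G 0 a b y| ≤ K * |y|⁻¹ ^ 2 ∧
    |GA 0 a b y / G 0 a b y| ≤ K * Real.log |y| ∧ |GA 1 a b y / G 0 a b y| ≤ K * (Real.log |y| * |y|⁻¹) ∧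
    |GB 0 a b y / G 0 a b y| ≤ K ∧ |GB 1 a b y / G 0 a b y| ≤ K * |y|⁻¹ := by
  obtain ⟨c, hc, M, hM, hlow⟩ := G_lower h0 h2 hb
  obtain ⟨C, hC, ht⟩ := G_tail h0 h2 hb.le
  obtain ⟨CA, hCA, htA⟩ := GA_tail h0 h2 hb.le
  obtain ⟨CB, hCB, htB⟩ := GB_tail h0 h2 hb.le
  set K := C / c + CA / c + CB / c + 1 with hK
  have k1 : 0 ≤ C / c := by positivity
  have k2 : 0 ≤ CA / c := by positivity
  have k3 : 0 ≤ CB / c := by positivity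
  refine ⟨K, by positivity, M, hM, fun y hy => ?_⟩
  have hr : 0 < |y| := by linarith
  have hl : 0 ≤ Real.log |y| := Real.log_nonneg (by linarith)
  have hg := hlow y hy
  have hy2 : 2 ≤ |y| := by linarith
  have t1 := ratio_bd (E := 1) 1 hc hr zero_le_one hC hg (by simpa using ht 1 (by norm_num) y hy2)
  have t2 := ratio_bd (E := 1) 2 hc hr zero_le_one hC hg (by simpa using ht 2 (by norm_num) y hy2)
  have t3 := ratio_bd 0 hc hr hl hCA hg (htA 0 (by norm_num) y hy2)
  have t4 := ratio_bd 1 hc hr hl hCA hg (htA 1 (by norm_num) y hy2)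
  have t5 := ratio_bd (E := 1) 0 hc hr zero_le_one hCB hg (by simpa using htB 0 (by norm_num) y hy2)
  have t6 := ratio_bd (E := 1) 1 hc hr zero_le_one hCB hg (by simpa using htB 1 (by norm_num) y hy2)
  simp only [pow_one, one_mul, pow_zero, mul_one] at t1 t2 t3 t4 t5 t6
  refine ⟨t1.trans ?_, t2.trans ?_, t3.trans ?_, t4.trans ?_, t5.trans ?_, t6.trans ?_⟩
  · gcongr; linarith
  · gcongr; linarith
  · gcongr; linarith
  · gcongr; linarith
  · linarith
  · gcongr; linarith

lemma compar {m s : ℝ} (hs : 0 < s) (M : ℝ) (hM : 2 ≤ M) : ∃ M' > 0, ∀ x : ℝ, M' ≤ |x| →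
    M ≤ abs ((x - m) / s) ∧ (abs ((x - m) / s))⁻¹ ≤ 2 * s * |x|⁻¹ ∧ Real.log (abs ((x - m) / s)) ≤ 2 * Real.log |x| ∧ 0 ≤ Real.log (abs ((x - m) / s)) ∧ 0 < |x| := by
  refine ⟨2 * |m| + 2 * s * M + 2 / s + 2, by positivity, fun x hx => ?_⟩
  have p1 : 0 ≤ |m| := abs_nonneg m
  have p2 : 0 < s * M := by positivity
  have p3 : 0 < 2 / s := by positivity
  have hx0 : 0 < |x| := by linarith
  have l1 : |x| / 2 ≤ |x - m| := by
    have := abs_sub_abs_le_abs_sub x m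
    linarith
  have l2 : |x - m| ≤ 2 * |x| := by
    have := abs_sub x m
    linarith
  rw [abs_div, abs_of_pos hs]
  have hMy : M ≤ |x - m| / s := by rw [le_div_iff₀ hs]; linarith
  have hy0 : 0 < |x - m| / s := by linarith
  refine ⟨hMy, ?_, ?_, Real.log_nonneg (by linarith), hx0⟩
  · rw [← div_eq_mul_inv, le_div_iff₀ hx0, inv_mul_le_iff₀ hy0]
    field_simp
    linarith
  · rw [show 2 * Real.log |x| = Real.log (|x| ^ 2) by rw [Real.log_pow]; norm_num]
    refine Real.log_le_log hy0 ?_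
    rw [div_le_iff₀ hs]
    have : 2 ≤ |x| * s := by
      rw [← div_le_iff₀ hs]; linarith
    nlinarith

end Stab

/-- Tail behavior of the score functions and their first-order derivatives
(with `θ = (μ,σ,α,β)`, indices `0,1,2,3`): `ℓ_μ = O(|x|⁻¹)`, `ℓ_σ = O(1)`,
`ℓ_α = O(log|x|)`, `ℓ_β = O(1)`, and `ℓ_{μμ} = -ℓ_μ' = O(|x|⁻²)`,
`ℓ_{μσ} = -ℓ_σ' = O(|x|⁻¹)`, `ℓ_{μα} = -ℓ_α' = O(|x|⁻¹ log|x|)`,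
`ℓ_{μβ} = -ℓ_β' = O(|x|⁻¹)`. -/
theorem score_tail_bounds (θ : Fin 4 → ℝ) (hθ : θ ∈ ThetaInt) :
    IsBigOAtInfty (ellP 0 θ) (fun x => |x| ^ (-1 : ℝ)) ∧
    IsBigOAtInfty (ellP 1 θ) (fun _ => 1) ∧
    IsBigOAtInfty (ellP 2 θ) (fun x => Real.log |x|) ∧
    IsBigOAtInfty (ellP 3 θ) (fun _ => 1) ∧
    ((∀ x : ℝ, ellPP 0 0 θ x = -ellPX 0 θ x) ∧
      IsBigOAtInfty (ellPP 0 0 θ) (fun x => |x| ^ (-2 : ℝ))) ∧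
    ((∀ x : ℝ, ellPP 0 1 θ x = -ellPX 1 θ x) ∧
      IsBigOAtInfty (ellPP 0 1 θ) (fun x => |x| ^ (-1 : ℝ))) ∧
    ((∀ x : ℝ, ellPP 0 2 θ x = -ellPX 2 θ x) ∧
      IsBigOAtInfty (ellPP 0 2 θ) (fun x => |x| ^ (-1 : ℝ) * Real.log |x|)) ∧
    ((∀ x : ℝ, ellPP 0 3 θ x = -ellPX 3 θ x) ∧
      IsBigOAtInfty (ellPP 0 3 θ) (fun x => |x| ^ (-1 : ℝ))) := by

  obtain ⟨K, hK, M, hM, hR⟩ := Stab.ratios hθ.2.1.1 hθ.2.1.2 (Stab.theta_b hθ)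
  obtain ⟨M', hM', hcmp⟩ := Stab.compar (m := θ 0) hθ.1 M hM
  have hs := hθ.1
  have main : ∀ x : ℝ, M' ≤ |x| → |ellP 0 θ x| ≤ (2 * K) * |x| ^ (-1 : ℝ) ∧ |ellP 1 θ x| ≤ ((1 + K) / θ 1) * 1 ∧
      |ellP 2 θ x| ≤ (2 * K) * Real.log |x| ∧ |ellP 3 θ x| ≤ K * 1 ∧
      |ellPP 0 0 θ x| ≤ (4 * (K + K ^ 2)) * |x| ^ (-2 : ℝ) ∧
      |ellPP 0 1 θ x| ≤ (2 * (2 * K + K ^ 2) / θ 1) * |x| ^ (-1 : ℝ) ∧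
      |ellPP 0 2 θ x| ≤ (4 * (K + K ^ 2)) * (|x| ^ (-1 : ℝ) * Real.log |x|) ∧
      |ellPP 0 3 θ x| ≤ (2 * (K + K ^ 2)) * |x| ^ (-1 : ℝ) := by
    intro x hx
    obtain ⟨c1, c2, c3, c4, c5⟩ := hcmp x hx
    set y := (x - θ 0) / θ 1 with hy
    obtain ⟨r1, r2, r3, r4, r5, r6⟩ := hR y c1
    rw [Stab.ell0 hθ, Stab.ell1 hθ, Stab.ell2 hθ, Stab.ell3 hθ, Stab.pp0 hθ x y hy, Stab.pp1 hθ x y hy, Stab.pp2 hθ x y hy, Stab.pp3 hθ x y hy, ← hy]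
    have e0 : Stab.G 1 (θ 2) (θ 3) y / (θ 1 * Stab.G 0 (θ 2) (θ 3) y) = (Stab.G 1 (θ 2) (θ 3) y / Stab.G 0 (θ 2) (θ 3) y) / θ 1 := by
      rw [div_div, mul_comm (θ 1)]
    rw [e0]
    generalize Stab.G 1 (θ 2) (θ 3) y / Stab.G 0 (θ 2) (θ 3) y = q1 at *
    generalize Stab.G 2 (θ 2) (θ 3) y / Stab.G 0 (θ 2) (θ 3) y = q2 at *
    generalize Stab.GA 0 (θ 2) (θ 3) y / Stab.G 0 (θ 2) (θ 3) y = a0 at *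
    generalize Stab.GA 1 (θ 2) (θ 3) y / Stab.G 0 (θ 2) (θ 3) y = a1 at *
    generalize Stab.GB 0 (θ 2) (θ 3) y / Stab.G 0 (θ 2) (θ 3) y = b0 at *
    generalize Stab.GB 1 (θ 2) (θ 3) y / Stab.G 0 (θ 2) (θ 3) y = b1 at *
    have hyp : 0 < |y| := by linarith
    have e1 : |x| ^ (-1:ℝ) = |x|⁻¹ := Real.rpow_neg_one _
    have e2 : |x| ^ (-2:ℝ) = |x|⁻¹ ^ 2 := by
      rw [Real.rpow_neg (abs_nonneg x), Real.rpow_two, inv_pow]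
    rw [e1, e2]
    have hu : |y| * |y|⁻¹ = 1 := mul_inv_cancel₀ hyp.ne'
    have hu0 : 0 < |y|⁻¹ := by positivity
    have hX0 : 0 < |x|⁻¹ := by positivity
    generalize |y|⁻¹ = u at *
    generalize |x|⁻¹ = X at *
    generalize Real.log |y| = L at *
    generalize Real.log |x| = LX at *
    have y1 : |y * q1| ≤ K := by
      rw [abs_mul]
      calc _ ≤ |y| * (K * u) := by gcongr
        _ = K * (|y| * u) := by ring
        _ = K := by rw [hu, mul_one]
    have y2 : |y * q2| ≤ K * u := by
      rw [abs_mul]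
      calc _ ≤ |y| * (K * u ^ 2) := by gcongr
        _ = K * u * (|y| * u) := by ring
        _ = K * u := by rw [hu, mul_one]
    have y3 : |y * q1 ^ 2| ≤ K ^ 2 * u := by
      rw [pow_two, ← mul_assoc, abs_mul]
      calc _ ≤ K * (K * u) := by gcongr
        _ = _ := by ring
    have sq1 : |q1 ^ 2| ≤ K ^ 2 * u ^ 2 := by
      rw [abs_pow, ← mul_pow]; gcongr
    refine ⟨?_, ?_, ?_, ?_, ?_, ?_, ?_, ?_⟩
    · rw [abs_div, abs_of_pos hs, div_le_iff₀ hs]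
      calc _ ≤ K * u := r1
        _ ≤ K * (2 * θ 1 * X) := by gcongr
        _ = _ := by ring
    · rw [abs_div, abs_of_pos hs, mul_one]
      gcongr
      refine (abs_add_le _ _).trans ?_
      rw [abs_neg, abs_one]; linarith
    · calc _ ≤ K * L := r3
        _ ≤ K * (2 * LX) := by gcongr
        _ = _ := by ring
    · linarith
    · rw [abs_div, abs_of_pos (by positivity : 0 < θ 1 ^ 2), div_le_iff₀ (by positivity)]
      calc _ ≤ |q2| + |q1 ^ 2| := abs_sub _ _
        _ ≤ K * u ^ 2 + K ^ 2 * u ^ 2 := add_le_add r2 sq1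
        _ = (K + K ^ 2) * u ^ 2 := by ring
        _ ≤ (K + K ^ 2) * (2 * θ 1 * X) ^ 2 := by gcongr
        _ = _ := by ring
    · rw [abs_div, abs_of_pos (by positivity : 0 < θ 1 ^ 2), div_le_iff₀ (by positivity)]
      calc _ ≤ |y * q2| + |q1| + |y * q1 ^ 2| := (abs_sub _ _).trans (add_le_add_left (abs_sub _ _) _)
        _ ≤ K * u + K * u + K ^ 2 * u := add_le_add (add_le_add y2 r1) y3
        _ = (2 * K + K ^ 2) * u := by ring
        _ ≤ (2 * K + K ^ 2) * (2 * θ 1 * X) := by gcongr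
        _ = _ := by field_simp
    · rw [abs_div, abs_of_pos hs, div_le_iff₀ hs]
      calc _ ≤ |a1| + |q1| * |a0| := by rw [← abs_mul]; exact abs_sub _ _
        _ ≤ K * (L * u) + (K * u) * (K * L) := by gcongr
        _ = (K + K ^ 2) * (u * L) := by ring
        _ ≤ (K + K ^ 2) * ((2 * θ 1 * X) * (2 * LX)) := by gcongr
        _ = _ := by ring
    · rw [abs_div, abs_of_pos hs, div_le_iff₀ hs]
      calc _ ≤ |b1| + |q1| * |b0| := by rw [← abs_mul]; exact abs_sub _ _
        _ ≤ K * u + (K * u) * K := by gcongr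
        _ = (K + K ^ 2) * u := by ring
        _ ≤ (K + K ^ 2) * (2 * θ 1 * X) := by gcongr
        _ = _ := by ring
  refine ⟨⟨_, by positivity, M', hM', fun x hx => (main x hx).1⟩, ⟨_, by positivity, M', hM', fun x hx => (main x hx).2.1⟩,
    ⟨_, by positivity, M', hM', fun x hx => (main x hx).2.2.1⟩, ⟨_, by positivity, M', hM', fun x hx => (main x hx).2.2.2.1⟩,
    ⟨fun x => by rw [Stab.pp0 hθ x _ rfl, Stab.px0 hθ x _ rfl, neg_neg], ⟨_, by positivity, M', hM', fun x hx => (main x hx).2.2.2.2.1⟩⟩,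
    ⟨fun x => by rw [Stab.pp1 hθ x _ rfl, Stab.px1 hθ x _ rfl, neg_neg], ⟨_, by positivity, M', hM', fun x hx => (main x hx).2.2.2.2.2.1⟩⟩,
    ⟨fun x => by rw [Stab.pp2 hθ x _ rfl, Stab.px2 hθ x _ rfl, neg_neg], ⟨_, by positivity, M', hM', fun x hx => (main x hx).2.2.2.2.2.2.1⟩⟩,
    ⟨fun x => by rw [Stab.pp3 hθ x _ rfl, Stab.px3 hθ x _ rfl, neg_neg], ⟨_, by positivity, M', hM', fun x hx => (main x hx).2.2.2.2.2.2.2⟩⟩⟩
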